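/- Let $0<p\le 1$ and $-1<\alpha,\beta<\infty$. The Toeplitz operator $T_{\mu,\beta}:L^p_a(\omega_\alpha)\to L^1_a(\omega_\beta)$ is bounded if and only if $\mu$ is a $(1/p)$-Carleson measure for $L^1_a(\omega_\alpha)$ and the function $T_{\mu,(2+\alpha)/p-2}(1)$ belongs to the logarithmic Bloch-type space $\mathcal{LB}^1$. -/

import Mathlib

/-!
Write `s = (2 + a) / p`; the hypotheses `p ≤ 1` and `a > -1` give `s > 1`.

**Sufficiency.** For a Carleson measure, integrals of powers of `|1 - z w̄|` against `μ` obey the same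
Forelli–Rudin estimates as for the measure `(1 - |w|²)^{s-2} dA(w)` (`carl_int`). Inserting the
reproducing formula for `P` (`reproducing`) into `T_{μ,b} P` expresses it as an area integral of `P`
against the kernel `∫ (1 - w ū)^{-(s+1)} (1 - z w̄)^{-(2+b)} dμ(w)` (`toep_repr`). In that kernel
`(1 - z w̄)^{-(2+b)}` is replaced by `(1 - z ū)^{-(2+b)}`. The error is handled by Hölder continuity
(`bker_diff`, `diff_int`). The main term is `(1 - z ū)^{-(2+b)} ∫ (1 - w ū)^{-(s+1)} dμ(w)`: the
weighted `L¹` norm in `z` of the first factor is of order `log (2 / (1 - |u|²))` (`FR_log`), and the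
second factor is, up to harmless terms, the derivative of the symbol, which by hypothesis gains
exactly this logarithm (`log_control`). Hence the kernel has `L¹` norm `O((1 - |u|²)^{-1})`
(`psi_int`), so `T_{μ,b}` maps `L¹((1 - |u|²)^{s-2})` into `L¹((1 - |z|²)^b)`, and for `p ≤ 1` the
former space contains `L^p_a(ω_a)` (`embedding`).

**Necessity.** The identity `duality` turns `∫ P ḡ dμ` into a weighted area pairing of `T_{μ,b} P` with
`z g' + (2 + b) g`. A bounded `T_{μ,b}` therefore satisfies
`|∫ f ḡ dμ| ≲ ‖f‖_p · sup (1 - |z|²) |z g' + (2 + b) g|` for all `f`, `g` analytic on a larger disk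
(`dual_analytic`). Taking `f = g = (1 - z̄ w)^{-N}` yields the Carleson condition. Taking
`f = (1 - |z|²) w (1 - z̄ w)^{-(s+1)}` and `g = log (2 / (1 - z̄ w))`, whose Bloch norm is bounded
uniformly in `z`, yields the logarithmic condition: replacing the constant `log (2 / (1 - |z|²))` by
`ḡ` costs only a small power of `|1 - z̄ w| / (1 - |z|²)` (`log_kernel_close`), which the Carleson
condition already controls.
-/

open MeasureTheory Metric Filter Complex Set
open scoped ENNReal NNReal Topology

/-- The normalized area measure on `ℂ`. -/
noncomputable def dA : Measure ℂ := (ENNReal.ofReal Real.pi)⁻¹ • volume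

/-- The standard weight `ω_a(z) = (1+a)(1-|z|²)^a`. -/
noncomputable def stdW (a : ℝ) (z : ℂ) : ℝ := (1 + a) * (1 - ‖z‖ ^ 2) ^ a

/-- The weighted `L^p` (quasi-)norm over the unit disk. -/
noncomputable def wnorm (p a : ℝ) (f : ℂ → ℂ) : ℝ≥0∞ :=
  (∫⁻ z in ball (0 : ℂ) 1, ENNReal.ofReal (‖f z‖ ^ p * stdW a z) ∂dA) ^ (1 / p)

/-- The pseudohyperbolic disk `D(z,r)`. -/
def pD (z : ℂ) (r : ℝ) : Set ℂ :=
  {w | w ∈ ball (0 : ℂ) 1 ∧ ‖(z - w) / (1 - (starRingEnd ℂ) z * w)‖ < r}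

/-- The Toeplitz operator `T_{μ,b}`. -/
noncomputable def Toep (μ : Measure ℂ) (b : ℝ) (f : ℂ → ℂ) (z : ℂ) : ℂ :=
  ∫ w in ball (0 : ℂ) 1, f w / (1 - z * (starRingEnd ℂ) w) ^ (((2 + b : ℝ)) : ℂ) ∂μ

/-- The Bloch norm. -/
noncomputable def blochNorm (g : ℂ → ℂ) : ℝ :=
  ‖g 0‖ + sSup ((fun z => (1 - ‖z‖ ^ 2) * ‖deriv g z‖) '' ball (0 : ℂ) 1)

/-- Membership in the Bloch space. -/
def MemBloch (g : ℂ → ℂ) : Prop :=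
  DifferentiableOn ℂ g (ball (0 : ℂ) 1) ∧
    BddAbove ((fun z => (1 - ‖z‖ ^ 2) * ‖deriv g z‖) '' ball (0 : ℂ) 1)

/-- Complex conjugation. -/
local notation "cj" => starRingEnd ℂ

/-! ### Elementary geometry of the disk -/

lemma one_sub_sq_pos {z : ℂ} (hz : z ∈ ball (0 : ℂ) 1) : 0 < 1 - ‖z‖ ^ 2 := by
  rw [mem_ball_zero_iff] at hz
  nlinarith [norm_nonneg z]

lemma one_sub_sq_le_one (z : ℂ) : 1 - ‖z‖ ^ 2 ≤ 1 := by
  nlinarith [sq_nonneg ‖z‖]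

lemma kn_symm (z w : ℂ) : ‖1 - z * cj w‖ = ‖1 - w * cj z‖ := by
  rw [← RCLike.norm_conj (1 - w * cj z)]
  simp [mul_comm]

lemma kn_re_pos {z w : ℂ} (hz : z ∈ ball (0 : ℂ) 1) (hw : w ∈ ball (0 : ℂ) 1) :
    0 < (1 - z * cj w).re := by
  rw [mem_ball_zero_iff] at hz hw
  have h1 : (z * cj w).re ≤ ‖z * cj w‖ := re_le_norm _
  rw [norm_mul, RCLike.norm_conj] at h1
  rw [sub_re, one_re]
  nlinarith [norm_nonneg z, norm_nonneg w]

lemma kn_ne_zero {z w : ℂ} (hz : z ∈ ball (0 : ℂ) 1) (hw : w ∈ ball (0 : ℂ) 1) :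
    1 - z * cj w ≠ 0 := by
  intro h
  have := kn_re_pos hz hw
  simp [h] at this

lemma kn_pos {z w : ℂ} (hz : z ∈ ball (0 : ℂ) 1) (hw : w ∈ ball (0 : ℂ) 1) :
    0 < ‖1 - z * cj w‖ := norm_pos_iff.2 (kn_ne_zero hz hw)

lemma kn_lower {z w : ℂ} (hw : w ∈ ball (0 : ℂ) 1) :
    1 - ‖z‖ ≤ ‖1 - z * cj w‖ := by
  rw [mem_ball_zero_iff] at hw
  have h1 := norm_sub_norm_le (1 : ℂ) (z * cj w)
  rw [norm_mul, RCLike.norm_conj, norm_one] at h1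
  nlinarith [norm_nonneg z, norm_nonneg w]

lemma sq_le_kn {z w : ℂ} (hz : z ∈ ball (0 : ℂ) 1) (hw : w ∈ ball (0 : ℂ) 1) :
    1 - ‖z‖ ^ 2 ≤ 2 * ‖1 - z * cj w‖ := by
  have h1 := kn_lower (z := z) hw
  rw [mem_ball_zero_iff] at hz
  nlinarith [norm_nonneg z]

lemma sq_le_kn' {z w : ℂ} (hz : z ∈ ball (0 : ℂ) 1) (hw : w ∈ ball (0 : ℂ) 1) :
    1 - ‖w‖ ^ 2 ≤ 2 * ‖1 - z * cj w‖ := by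
  rw [kn_symm]
  exact sq_le_kn hw hz

lemma kn_le_two {z w : ℂ} (hz : z ∈ ball (0 : ℂ) 1) (hw : w ∈ ball (0 : ℂ) 1) :
    ‖1 - z * cj w‖ ≤ 2 := by
  rw [mem_ball_zero_iff] at hz hw
  have h1 := norm_sub_le (1 : ℂ) (z * cj w)
  rw [norm_mul, RCLike.norm_conj, norm_one] at h1
  nlinarith [norm_nonneg z, norm_nonneg w]

lemma kn_sq (z w : ℂ) :
    ‖1 - z * cj w‖ ^ 2 - ‖z - w‖ ^ 2 = (1 - ‖z‖ ^ 2) * (1 - ‖w‖ ^ 2) := by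
  simp only [← normSq_eq_norm_sq, normSq_apply, sub_re, sub_im, mul_re, mul_im, conj_re, conj_im,
    one_re, one_im]
  ring

lemma dist_le_kn {z w : ℂ} (hz : z ∈ ball (0 : ℂ) 1) (hw : w ∈ ball (0 : ℂ) 1) :
    ‖z - w‖ ≤ ‖1 - z * cj w‖ := by
  have h1 := kn_sq z w
  have h2 := mul_pos (one_sub_sq_pos hz) (one_sub_sq_pos hw)
  exact le_of_sq_le_sq (by linarith) (norm_nonneg _)

lemma norm_cpow_re_pos {x : ℂ} (hx : x ≠ 0) (t : ℝ) : ‖x ^ (t : ℂ)‖ = ‖x‖ ^ t := by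
  rw [norm_cpow_of_ne_zero hx]
  simp

/-- A negative power of the kernel can be weakened at the price of a constant,
since `‖1 - z w̄‖ ≤ 2`. -/
lemma kn_rpow_le {z w : ℂ} (hz : z ∈ ball (0 : ℂ) 1) (hw : w ∈ ball (0 : ℂ) 1) {q q' : ℝ}
    (h : q ≤ q') : ‖1 - z * cj w‖ ^ (-q) ≤ 2 ^ (q' - q) * ‖1 - z * cj w‖ ^ (-q') := by
  have h0 := kn_pos hz hw
  have h1 : ‖1 - z * cj w‖ ^ (-q) = ‖1 - z * cj w‖ ^ (q' - q) * ‖1 - z * cj w‖ ^ (-q') := by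
    rw [← Real.rpow_add h0]; ring_nf
  rw [h1]
  gcongr
  exact kn_le_two hz hw

/-! ### Forelli–Rudin type estimates -/

/-- `|1 - y e^{iθ}|` is bounded below by a multiple of `(1 - y) + |θ|`. -/
lemma norm_one_sub_polar {y θ : ℝ} (hy0 : 0 ≤ y) (hy1 : y < 1) (hθ : |θ| ≤ Real.pi) :
    (1 - y + |θ|) / (2 * Real.pi) ≤ ‖1 - (y : ℂ) * exp (θ * I)‖ := by
  have hpi := Real.pi_gt_three
  have h1 : 1 - y ≤ ‖1 - (y : ℂ) * exp (θ * I)‖ := by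
    have := norm_sub_norm_le (1 : ℂ) (y * exp (θ * I))
    rw [norm_mul, norm_exp_ofReal_mul_I, norm_one, norm_real, Real.norm_of_nonneg hy0] at this
    linarith
  have h2 : ‖1 - exp (θ * I)‖ ≤ 2 * ‖1 - (y : ℂ) * exp (θ * I)‖ := by
    have h3 : 1 - exp (θ * I) = (1 - (y : ℂ) * exp (θ * I)) - ((1 - y : ℝ) : ℂ) * exp (θ * I) := by
      push_cast; ring
    have h4 := norm_sub_le (1 - (y : ℂ) * exp (θ * I)) (((1 - y : ℝ) : ℂ) * exp (θ * I))
    rw [← h3, norm_mul, norm_exp_ofReal_mul_I, norm_real, Real.norm_of_nonneg (by linarith)] at h4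
    linarith
  have h5 : ‖1 - exp (θ * I)‖ = 2 * |Real.sin (θ / 2)| := by
    rw [norm_sub_rev, mul_comm, Complex.norm_exp_I_mul_ofReal_sub_one, norm_mul]
    simp
  have h6 : 2 / Real.pi * |θ / 2| ≤ |Real.sin (θ / 2)| := by
    apply Real.mul_abs_le_abs_sin
    rw [abs_div, abs_two]; linarith
  have h7 : |θ| ≤ Real.pi * ‖1 - (y : ℂ) * exp (θ * I)‖ := by
    rw [abs_div, abs_two, div_mul_div_comm, div_le_iff₀ (by positivity)] at h6
    nlinarith
  rw [div_le_iff₀ (by positivity)]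
  nlinarith

/-- By `norm_one_sub_polar` and the scaling `θ = (1 - y) x`, the integral is at most a multiple of
`(1 - y)^{1 - q} ∫ (1 + |x|)^{-q} dx`. -/
lemma angular (q : ℝ) (hq : 1 < q) : ∃ C : ℝ, 0 ≤ C ∧ ∀ y : ℝ, 0 ≤ y → y < 1 →
    ∫⁻ θ in Ioo (-Real.pi) Real.pi, ENNReal.ofReal (‖1 - (y : ℂ) * exp (θ * I)‖ ^ (-q)) ≤
      ENNReal.ofReal (C * (1 - y) ^ (1 - q)) := by
  have hpi := Real.pi_pos
  have hint : Integrable (fun x : ℝ => (1 + ‖x‖) ^ (-q)) := by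
    apply integrable_one_add_norm
    simpa using hq
  refine ⟨(2 * Real.pi) ^ q * ∫ x : ℝ, (1 + ‖x‖) ^ (-q), by positivity, fun y hy0 hy1 => ?_⟩
  have hh : 0 < 1 - y := by linarith
  have key : ∀ θ ∈ Ioo (-Real.pi) Real.pi,
      ENNReal.ofReal (‖1 - (y : ℂ) * exp (θ * I)‖ ^ (-q)) ≤
      ENNReal.ofReal ((2 * Real.pi) ^ q * (1 - y) ^ (-q) * (1 + ‖θ / (1 - y)‖) ^ (-q)) := by
    intro θ hθ
    apply ENNReal.ofReal_le_ofReal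
    have h1 := norm_one_sub_polar hy0 hy1 (abs_le.2 ⟨hθ.1.le, hθ.2.le⟩)
    have h2 : (1 - y + |θ|) = (1 - y) * (1 + ‖θ / (1 - y)‖) := by
      rw [Real.norm_eq_abs, abs_div, abs_of_pos hh]; field_simp
    calc _ ≤ ((1 - y + |θ|) / (2 * Real.pi)) ^ (-q) :=
          Real.rpow_le_rpow_of_nonpos (by positivity) h1 (by linarith)
      _ = _ := by
          rw [Real.div_rpow (by positivity) (by positivity), h2,
            Real.mul_rpow hh.le (by positivity), Real.rpow_neg (x := 2 * Real.pi) (by positivity)]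
          field_simp
  calc _ ≤ ∫⁻ θ in Ioo (-Real.pi) Real.pi, ENNReal.ofReal
        ((2 * Real.pi) ^ q * (1 - y) ^ (-q) * (1 + ‖θ / (1 - y)‖) ^ (-q)) :=
        setLIntegral_mono' measurableSet_Ioo key
    _ ≤ ∫⁻ θ : ℝ, ENNReal.ofReal
        ((2 * Real.pi) ^ q * (1 - y) ^ (-q) * (1 + ‖θ / (1 - y)‖) ^ (-q)) :=
        setLIntegral_le_lintegral _ _
    _ = ENNReal.ofReal (∫ θ : ℝ,
        (2 * Real.pi) ^ q * (1 - y) ^ (-q) * (1 + ‖θ / (1 - y)‖) ^ (-q)) := by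
        rw [ofReal_integral_eq_lintegral_ofReal]
        · exact (hint.comp_div hh.ne').const_mul _
        · exact Filter.Eventually.of_forall fun θ => by positivity
    _ = _ := by
        rw [integral_const_mul, Measure.integral_comp_div (fun x : ℝ => (1 + ‖x‖) ^ (-q)),
          abs_of_pos hh, smul_eq_mul, sub_eq_add_neg 1 q, Real.rpow_add hh, Real.rpow_one]
        ring_nf

lemma exists_rotation (w : ℂ) : ∃ u : Circle, cj w * u = ‖w‖ := by
  refine ⟨Circle.exp (arg w), ?_⟩
  conv_lhs => rw [← norm_mul_exp_arg_mul_I w]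
  rw [Circle.coe_exp, map_mul, conj_ofReal, ← exp_conj, map_mul, conj_ofReal, conj_I, mul_assoc,
    ← Complex.exp_add]
  simp

lemma lintegral_ball_rotate (u : Circle) (F : ℂ → ℝ≥0∞) :
    ∫⁻ z in ball (0 : ℂ) 1, F (z * u) = ∫⁻ z in ball (0 : ℂ) 1, F z := by
  have h := (rotation u).measurePreserving
  have h2 := h.setLIntegral_comp_preimage_emb
    (rotation u).toHomeomorph.measurableEmbedding F (ball (0 : ℂ) 1)
  rw [← h2]
  have h3 : (rotation u) ⁻¹' ball (0 : ℂ) 1 = ball (0 : ℂ) 1 := by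
    ext z; rw [mem_preimage, mem_ball_zero_iff, LinearIsometryEquiv.norm_map, mem_ball_zero_iff]
  rw [h3]
  simp [mul_comm]

lemma integral_ball_rotate (u : Circle) (F : ℂ → ℂ) :
    ∫ z in ball (0 : ℂ) 1, F (z * u) = ∫ z in ball (0 : ℂ) 1, F z := by
  have h := (rotation u).measurePreserving
  have h2 := h.setIntegral_preimage_emb
    (rotation u).toHomeomorph.measurableEmbedding F (ball (0 : ℂ) 1)
  rw [← h2]
  have h3 : (rotation u) ⁻¹' ball (0 : ℂ) 1 = ball (0 : ℂ) 1 := by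
    ext z; rw [mem_preimage, mem_ball_zero_iff, LinearIsometryEquiv.norm_map, mem_ball_zero_iff]
  rw [h3]
  simp [mul_comm]

/-- Integrating out the angular variable. -/
lemma radial_bound (q : ℝ) (hq : 1 < q) : ∃ C : ℝ, 0 ≤ C ∧ ∀ φ : ℝ → ℝ≥0∞, Measurable φ →
    ∀ w ∈ ball (0 : ℂ) 1,
    ∫⁻ z in ball (0 : ℂ) 1, φ ‖z‖ * ENNReal.ofReal (‖1 - z * cj w‖ ^ (-q)) ≤
      ENNReal.ofReal C * ∫⁻ ρ in Ioo (0 : ℝ) 1, φ ρ *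
        ENNReal.ofReal ((1 - ‖w‖ * ρ) ^ (1 - q)) := by
  obtain ⟨C, hC, hang⟩ := angular q hq
  refine ⟨C, hC, fun φ hφ w hw => ?_⟩
  obtain ⟨u, hu⟩ := exists_rotation w
  have hw1 : ‖w‖ < 1 := by simpa using hw
  rw [← lintegral_ball_rotate u]
  have e1 : ∀ z : ℂ, φ ‖z * u‖ * ENNReal.ofReal (‖1 - z * u * cj w‖ ^ (-q)) =
      φ ‖z‖ * ENNReal.ofReal (‖1 - z * (‖w‖ : ℂ)‖ ^ (-q)) := by
    intro z
    rw [norm_mul, Circle.norm_coe, mul_one, mul_assoc z, mul_comm (u : ℂ), hu]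
  simp_rw [e1]
  set G : ℂ → ℝ≥0∞ := fun z => φ ‖z‖ * ENNReal.ofReal (‖1 - z * (‖w‖ : ℂ)‖ ^ (-q)) with hG
  have hGm : Measurable G := by
    apply Measurable.mul (hφ.comp measurable_norm)
    fun_prop
  rw [← lintegral_indicator measurableSet_ball, ← Complex.lintegral_comp_polarCoord_symm,
    polarCoord_target, Measure.volume_eq_prod, ← Measure.prod_restrict,
    lintegral_prod _ (by
      apply Measurable.aemeasurable
      apply Measurable.mul (by fun_prop)
      apply (hGm.indicator measurableSet_ball).comp
      exact Complex.measurableEquivRealProd.symm.measurable.comp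
        continuous_polarCoord_symm.measurable)]
  have e2 : ∀ ρ ∈ Ioi (0 : ℝ), ∫⁻ θ in Ioo (-Real.pi) Real.pi,
      ENNReal.ofReal ρ • (ball (0 : ℂ) 1).indicator G (Complex.polarCoord.symm (ρ, θ)) ≤
      (Ioo (0 : ℝ) 1).indicator (fun ρ => ENNReal.ofReal C * (φ ρ *
        ENNReal.ofReal ((1 - ‖w‖ * ρ) ^ (1 - q)))) ρ := by
    intro ρ hρ
    have hρ0 : 0 < ρ := hρ
    by_cases h1 : ρ < 1
    · rw [indicator_of_mem (show ρ ∈ Ioo (0 : ℝ) 1 from ⟨hρ, h1⟩)]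
      have hy1 : ‖w‖ * ρ < 1 := by nlinarith [norm_nonneg w]
      have hb := hang (‖w‖ * ρ) (by positivity) hy1
      calc _ ≤ ∫⁻ θ in Ioo (-Real.pi) Real.pi, φ ρ *
            ENNReal.ofReal (‖1 - ((‖w‖ * ρ : ℝ) : ℂ) * exp (θ * I)‖ ^ (-q)) := by
            refine setLIntegral_mono' measurableSet_Ioo fun θ hθ => ?_
            have hn : ‖Complex.polarCoord.symm (ρ, θ)‖ = ρ := by
              rw [Complex.norm_polarCoord_symm, abs_of_pos hρ]
            rw [indicator_of_mem (by rw [mem_ball_zero_iff, hn]; exact h1), hG]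
            simp only [hn]
            rw [smul_eq_mul]
            have hin : 1 - Complex.polarCoord.symm (ρ, θ) * (‖w‖ : ℂ) =
                1 - ((‖w‖ * ρ : ℝ) : ℂ) * exp (θ * I) := by
              rw [Complex.polarCoord_symm_apply, exp_mul_I]
              push_cast
              ring
            rw [hin]
            exact mul_le_of_le_one_left' (ENNReal.ofReal_le_one.2 h1.le)
        _ = φ ρ * ∫⁻ θ in Ioo (-Real.pi) Real.pi, 
            ENNReal.ofReal (‖1 - ((‖w‖ * ρ : ℝ) : ℂ) * exp (θ * I)‖ ^ (-q)) := by
            rw [lintegral_const_mul]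
            fun_prop
        _ ≤ φ ρ * ENNReal.ofReal (C * (1 - ‖w‖ * ρ) ^ (1 - q)) := by gcongr
        _ = _ := by
            rw [ENNReal.ofReal_mul hC]; ring
    · rw [indicator_of_notMem (fun h => h1 h.2)]
      refine le_of_eq ?_
      rw [setLIntegral_congr_fun (g := fun _ => 0) measurableSet_Ioo]
      · simp
      · intro θ hθ
        simp only
        rw [indicator_of_notMem, smul_zero]
        rw [mem_ball_zero_iff, Complex.norm_polarCoord_symm, abs_of_pos hρ]
        exact h1
  refine (setLIntegral_mono' measurableSet_Ioi e2).trans ?_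
  refine (setLIntegral_le_lintegral _ _).trans ?_
  rw [lintegral_indicator measurableSet_Ioo, lintegral_const_mul]
  apply Measurable.mul hφ
  fun_prop

/-- The radial integral is split at `1 - ρ = 1 - x`. The explicit dependence of the constant on `ε`
is what makes the logarithmic case `FR_log` accessible. -/
lemma radial_one (c : ℝ) (hc : -1 < c) (ε : ℝ) (hε : 0 < ε) (x : ℝ) (hx0 : 0 ≤ x) (hx1 : x < 1) :
    ∫⁻ ρ in Ioo (0 : ℝ) 1, ENNReal.ofReal ((1 - ρ) ^ c * (1 - x * ρ) ^ (-(1 + c + ε))) ≤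
      ENNReal.ofReal ((1 / (c + 1) + 1 / ε) * (1 - x) ^ (-ε)) := by
  set h := 1 - x with hh
  have hpos : 0 < h := by linarith
  have hsub : ∫⁻ ρ in Ioo (0 : ℝ) 1,
      ENNReal.ofReal ((1 - ρ) ^ c * (1 - x * ρ) ^ (-(1 + c + ε))) =
      ∫⁻ v in Ioo (0 : ℝ) 1, ENNReal.ofReal (v ^ c * (1 - x * (1 - v)) ^ (-(1 + c + ε))) := by
    have h2 := (Measure.measurePreserving_sub_left volume (1 : ℝ)).setLIntegral_comp_preimage_emb
      (Homeomorph.subLeft (1 : ℝ)).measurableEmbedding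
      (fun v => ENNReal.ofReal (v ^ c * (1 - x * (1 - v)) ^ (-(1 + c + ε)))) (Ioo (0 : ℝ) 1)
    rw [← h2]
    simp
  rw [hsub]
  have hcov : Ioo (0 : ℝ) 1 ⊆ Ioc 0 h ∪ Ioi h := by
    rw [Ioc_union_Ioi_eq_Ioi hpos.le]
    exact Ioo_subset_Ioi_self
  have hc1 : 0 < c + 1 := by linarith
  have I1 : ∫⁻ v in Ioc 0 h ∩ Ioo 0 1, ENNReal.ofReal (v ^ c * (1 - x * (1 - v)) ^ (-(1 + c + ε))) ≤
      ENNReal.ofReal (1 / (c + 1) * h ^ (-ε)) := by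
    calc _ ≤ ∫⁻ v in Ioc 0 h ∩ Ioo 0 1, ENNReal.ofReal (v ^ c * h ^ (-(1 + c + ε))) := by
          refine setLIntegral_mono' (measurableSet_Ioc.inter measurableSet_Ioo) fun v hv => ?_
          have hv0 := hv.1.1
          apply ENNReal.ofReal_le_ofReal
          gcongr ?_ * ?_
          apply Real.rpow_le_rpow_of_nonpos hpos
          · nlinarith
          · linarith
      _ ≤ ∫⁻ v in Ioc 0 h, ENNReal.ofReal (v ^ c * h ^ (-(1 + c + ε))) :=
          lintegral_mono_set inter_subset_left
      _ = ENNReal.ofReal (∫ v in Ioc 0 h, v ^ c * h ^ (-(1 + c + ε))) := by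
          rw [ofReal_integral_eq_lintegral_ofReal]
          · exact ((intervalIntegral.intervalIntegrable_rpow' hc).1).mul_const _
          · filter_upwards [ae_restrict_mem measurableSet_Ioc] with v hv
            have := hv.1
            positivity
      _ = _ := by
          rw [integral_mul_const, ← intervalIntegral.integral_of_le hpos.le,
            integral_rpow (Or.inl hc), Real.zero_rpow hc1.ne', sub_zero, div_mul_eq_mul_div,
            ← Real.rpow_add hpos]
          congr 1
          ring_nf
  have I2 : ∫⁻ v in Ioi h ∩ Ioo 0 1, ENNReal.ofReal (v ^ c * (1 - x * (1 - v)) ^ (-(1 + c + ε))) ≤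
      ENNReal.ofReal (1 / ε * h ^ (-ε)) := by
    calc _ ≤ ∫⁻ v in Ioi h ∩ Ioo 0 1, ENNReal.ofReal (v ^ (-1 - ε)) := by
          refine setLIntegral_mono' (measurableSet_Ioi.inter measurableSet_Ioo) fun v hv => ?_
          have hv0 := hv.2.1
          apply ENNReal.ofReal_le_ofReal
          have : v ^ (-1 - ε) = v ^ c * v ^ (-(1 + c + ε)) := by
            rw [← Real.rpow_add hv0]; ring_nf
          rw [this]
          gcongr ?_ * ?_
          apply Real.rpow_le_rpow_of_nonpos hv0
          · nlinarith [hv.2.2]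
          · linarith
      _ ≤ ∫⁻ v in Ioi h, ENNReal.ofReal (v ^ (-1 - ε)) :=
          lintegral_mono_set inter_subset_left
      _ = ENNReal.ofReal (∫ v in Ioi h, v ^ (-1 - ε)) := by
          rw [ofReal_integral_eq_lintegral_ofReal]
          · exact integrableOn_Ioi_rpow_of_lt (by linarith) hpos
          · filter_upwards [ae_restrict_mem measurableSet_Ioi] with v hv
            have := hpos.trans hv
            positivity
      _ = _ := by
          rw [integral_Ioi_rpow_of_lt (by linarith) hpos]
          congr 1
          rw [show -1 - ε + 1 = -ε by ring]
          field_simp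
  calc _ ≤ ∫⁻ v in (Ioc 0 h ∩ Ioo 0 1) ∪ (Ioi h ∩ Ioo 0 1),
        ENNReal.ofReal (v ^ c * (1 - x * (1 - v)) ^ (-(1 + c + ε))) := by
        apply lintegral_mono_set
        rw [← union_inter_distrib_right]
        exact subset_inter hcov subset_rfl
    _ ≤ _ := lintegral_union_le _ _ _
    _ ≤ _ := add_le_add I1 I2
    _ = _ := by
        rw [← ENNReal.ofReal_add (by positivity) (by positivity)]
        ring_nf

lemma weight_le {c ρ : ℝ} (h0 : 0 < ρ) (h1 : ρ < 1) :
    (1 - ρ ^ 2) ^ c ≤ 2 ^ |c| * (1 - ρ) ^ c := by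
  have e : (1 - ρ ^ 2) = (1 + ρ) * (1 - ρ) := by ring
  rw [e, Real.mul_rpow (by linarith) (by linarith)]
  have : 0 ≤ (1 - ρ) ^ c := Real.rpow_nonneg (by linarith) _
  gcongr
  calc (1 + ρ) ^ c ≤ (1 + ρ) ^ |c| := Real.rpow_le_rpow_of_exponent_le (by linarith) (le_abs_self c)
    _ ≤ _ := by gcongr; linarith

lemma meas_weight (c : ℝ) : Measurable (fun ρ : ℝ => ENNReal.ofReal ((1 - ρ ^ 2) ^ c)) := by
  fun_prop

/-- Common first step of the three Forelli–Rudin estimates: the planar integral is dominated by a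
one-dimensional radial one. -/
lemma FR_aux (c q : ℝ) (hq : 1 < q) : ∃ C : ℝ, 0 ≤ C ∧ ∀ w ∈ ball (0 : ℂ) 1,
    ∫⁻ z in ball (0 : ℂ) 1, ENNReal.ofReal ((1 - ‖z‖ ^ 2) ^ c * ‖1 - z * cj w‖ ^ (-q)) ≤
      ENNReal.ofReal C * ∫⁻ ρ in Ioo (0 : ℝ) 1,
        ENNReal.ofReal ((1 - ρ) ^ c * (1 - ‖w‖ * ρ) ^ (1 - q)) := by
  obtain ⟨C, hC, h⟩ := radial_bound q hq
  refine ⟨C * 2 ^ |c|, by positivity, fun w hw => ?_⟩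
  have e1 : ∀ z ∈ ball (0 : ℂ) 1, ENNReal.ofReal ((1 - ‖z‖ ^ 2) ^ c * ‖1 - z * cj w‖ ^ (-q)) =
      ENNReal.ofReal ((1 - ‖z‖ ^ 2) ^ c) * ENNReal.ofReal (‖1 - z * cj w‖ ^ (-q)) := fun z hz =>
    ENNReal.ofReal_mul (Real.rpow_nonneg (one_sub_sq_pos hz).le _)
  rw [setLIntegral_congr_fun measurableSet_ball e1]
  refine (h _ (meas_weight c) w hw).trans ?_
  rw [ENNReal.ofReal_mul hC, mul_assoc]
  gcongr
  rw [← lintegral_const_mul _ (by fun_prop)]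
  refine setLIntegral_mono' measurableSet_Ioo fun ρ hρ => ?_
  rw [mem_ball_zero_iff] at hw
  have h3 : 0 ≤ (1 - ρ ^ 2) ^ c := Real.rpow_nonneg (by nlinarith [hρ.1, hρ.2]) _
  rw [← ENNReal.ofReal_mul h3, ← ENNReal.ofReal_mul (by positivity), ← mul_assoc]
  apply ENNReal.ofReal_le_ofReal
  have h2 : 0 ≤ (1 - ‖w‖ * ρ) ^ (1 - q) :=
    Real.rpow_nonneg (by nlinarith [hρ.1, hρ.2, norm_nonneg w]) _
  gcongr
  exact weight_le hρ.1 hρ.2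

/-- The Forelli–Rudin estimate in the case of power growth. -/
lemma FR_pos (c ε : ℝ) (hc : -1 < c) (hε : 0 < ε) : ∃ C : ℝ, 0 ≤ C ∧ ∀ w ∈ ball (0 : ℂ) 1,
    ∫⁻ z in ball (0 : ℂ) 1, ENNReal.ofReal ((1 - ‖z‖ ^ 2) ^ c * ‖1 - z * cj w‖ ^ (-(2 + c + ε))) ≤
      ENNReal.ofReal (C * (1 - ‖w‖ ^ 2) ^ (-ε)) := by
  obtain ⟨C, hC, h⟩ := FR_aux c (2 + c + ε) (by linarith)
  have hc1 : 0 < c + 1 := by linarith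
  refine ⟨C * ((1 / (c + 1) + 1 / ε) * 2 ^ ε), by positivity, fun w hw => ?_⟩
  have hp := one_sub_sq_pos hw
  refine (h w hw).trans ?_
  have hw1 : ‖w‖ < 1 := by simpa using hw
  rw [show 1 - (2 + c + ε) = -(1 + c + ε) by ring]
  calc _ ≤ ENNReal.ofReal C * ENNReal.ofReal ((1 / (c + 1) + 1 / ε) * (1 - ‖w‖) ^ (-ε)) := by
        gcongr
        exact radial_one c hc ε hε _ (norm_nonneg w) hw1
    _ ≤ _ := by
        rw [← ENNReal.ofReal_mul hC]
        apply ENNReal.ofReal_le_ofReal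
        rw [mul_assoc, mul_assoc (1 / (c + 1) + 1 / ε)]
        gcongr
        calc (1 - ‖w‖) ^ (-ε) ≤ ((1 - ‖w‖ ^ 2) / 2) ^ (-ε) := by
              apply Real.rpow_le_rpow_of_nonpos (by positivity) _ (by linarith)
              nlinarith [norm_nonneg w]
          _ = _ := by
              rw [Real.div_rpow hp.le (by norm_num), Real.rpow_neg (x := 2) (by norm_num)]
              field_simp

lemma log_lower {w : ℂ} (hw : w ∈ ball (0 : ℂ) 1) :
    Real.log 2 ≤ Real.log (2 / (1 - ‖w‖ ^ 2)) := by
  have hp := one_sub_sq_pos hw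
  apply Real.log_le_log (by norm_num)
  rw [le_div_iff₀ hp]
  linarith [one_sub_sq_le_one w]

/-- The logarithmic case. It follows from the power case with the exponent
`ε = 1 / log (2 / (1 - |w|²))`, because the radial estimate has constant `O(1 / ε)`. -/
lemma FR_log (c : ℝ) (hc : -1 < c) : ∃ C : ℝ, 0 ≤ C ∧ ∀ w ∈ ball (0 : ℂ) 1,
    ∫⁻ z in ball (0 : ℂ) 1, ENNReal.ofReal ((1 - ‖z‖ ^ 2) ^ c * ‖1 - z * cj w‖ ^ (-(2 + c))) ≤
      ENNReal.ofReal (C * Real.log (2 / (1 - ‖w‖ ^ 2))) := by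
  obtain ⟨C, hC, h⟩ := FR_aux c (2 + c) (by linarith)
  have hc1 : 0 < c + 1 := by linarith
  have hl2 : 0 < Real.log 2 := Real.log_pos (by norm_num)
  refine ⟨C * ((1 / ((c + 1) * Real.log 2) + 1) * Real.exp 1), by positivity, fun w hw => ?_⟩
  have hp := one_sub_sq_pos hw
  refine (h w hw).trans ?_
  have hw1 : ‖w‖ < 1 := by simpa using hw
  have hll := log_lower hw
  set L := Real.log (2 / (1 - ‖w‖ ^ 2)) with hL
  have hLpos : 0 < L := by linarith
  rw [show 1 - (2 + c) = -(1 + c) by ring]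
  calc _ ≤ ENNReal.ofReal C * ∫⁻ ρ in Ioo (0 : ℝ) 1,
          ENNReal.ofReal ((1 - ρ) ^ c * (1 - ‖w‖ * ρ) ^ (-(1 + c + 1 / L))) := by
        refine mul_le_mul_right ?_ _
        refine setLIntegral_mono' measurableSet_Ioo fun ρ hρ => ?_
        apply ENNReal.ofReal_le_ofReal
        have h3 : 0 ≤ (1 - ρ) ^ c := Real.rpow_nonneg (by linarith [hρ.2]) _
        gcongr ?_ * ?_
        apply Real.rpow_le_rpow_of_exponent_ge
        · nlinarith [hρ.1, hρ.2, norm_nonneg w]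
        · nlinarith [hρ.1, hρ.2, norm_nonneg w]
        · have : 0 < 1 / L := by positivity
          linarith
    _ ≤ ENNReal.ofReal C *
          ENNReal.ofReal ((1 / (c + 1) + 1 / (1 / L)) * (1 - ‖w‖) ^ (-(1 / L))) := by
        gcongr
        exact radial_one c hc (1 / L) (by positivity) _ (norm_nonneg w) hw1
    _ ≤ _ := by
        rw [← ENNReal.ofReal_mul hC]
        apply ENNReal.ofReal_le_ofReal
        have e1 : (1 - ‖w‖) ^ (-(1 / L)) ≤ Real.exp 1 := by
          calc (1 - ‖w‖) ^ (-(1 / L)) ≤ ((1 - ‖w‖ ^ 2) / 2) ^ (-(1 / L)) := by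
                apply Real.rpow_le_rpow_of_nonpos (by positivity)
                · nlinarith [norm_nonneg w]
                · have : 0 < 1 / L := by positivity
                  linarith
            _ = Real.exp 1 := by
                rw [Real.rpow_def_of_pos (by positivity)]
                congr 1
                have : Real.log ((1 - ‖w‖ ^ 2) / 2) = -L := by
                  rw [hL, ← Real.log_inv, inv_div]
                rw [this]
                field_simp
        have e2 : 1 / (c + 1) + 1 / (1 / L) ≤ (1 / ((c + 1) * Real.log 2) + 1) * L := by
          rw [one_div_one_div, add_mul, one_mul]
          gcongr
          rw [div_mul_eq_mul_div, one_mul, div_le_div_iff₀ hc1 (by positivity)]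
          nlinarith
        have e3 : 0 ≤ (1 - ‖w‖) ^ (-(1 / L)) := Real.rpow_nonneg (by linarith) _
        calc _ ≤ C * (((1 / ((c + 1) * Real.log 2) + 1) * L) * Real.exp 1) := by gcongr
          _ = _ := by ring

/-- The Forelli–Rudin estimate in the bounded case. -/
lemma FR_neg (t : ℝ) (ht : 1 < t) : ∃ C : ℝ, 0 ≤ C ∧ ∀ w ∈ ball (0 : ℂ) 1,
    ∫⁻ z in ball (0 : ℂ) 1, ENNReal.ofReal ((1 - ‖z‖ ^ 2) ^ (t - 1) * ‖1 - z * cj w‖ ^ (-t)) ≤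
      ENNReal.ofReal C := by
  obtain ⟨C, hC, h⟩ := FR_aux (t - 1) t ht
  refine ⟨C, hC, fun w hw => (h w hw).trans ?_⟩
  have hw1 : ‖w‖ < 1 := by simpa using hw
  calc _ ≤ ENNReal.ofReal C * ∫⁻ ρ in Ioo (0 : ℝ) 1, 1 := by
        refine mul_le_mul_right ?_ _
        refine setLIntegral_mono' measurableSet_Ioo fun ρ hρ => ?_
        rw [ENNReal.ofReal_le_one]
        have hr : 0 < 1 - ρ := by linarith [hρ.2]
        calc _ ≤ (1 - ρ) ^ (t - 1) * (1 - ρ) ^ (1 - t) := by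
              gcongr ?_ * ?_
              apply Real.rpow_le_rpow_of_nonpos hr
              · nlinarith [hρ.1]
              · linarith
          _ = 1 := by rw [← Real.rpow_add hr]; simp
    _ = _ := by simp

lemma weight_integral_lt_top (c : ℝ) (hc : -1 < c) :
    ∫⁻ z in ball (0 : ℂ) 1, ENNReal.ofReal ((1 - ‖z‖ ^ 2) ^ c) < ⊤ := by
  obtain ⟨C, hC, h⟩ := FR_pos c 1 hc one_pos
  have := h 0 (by simp)
  simp only [map_zero, mul_zero, sub_zero, norm_one, Real.one_rpow, mul_one] at this
  exact this.trans_lt ENNReal.ofReal_lt_top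

lemma weight_integrable (c : ℝ) (hc : -1 < c) :
    IntegrableOn (fun z : ℂ => (1 - ‖z‖ ^ 2) ^ c) (ball (0 : ℂ) 1) := by
  refine ⟨Measurable.aestronglyMeasurable (by fun_prop), ?_⟩
  rw [hasFiniteIntegral_iff_ofReal]
  · exact weight_integral_lt_top c hc
  · filter_upwards [ae_restrict_mem measurableSet_ball] with z hz
    exact Real.rpow_nonneg (one_sub_sq_pos hz).le _

/-! ### Moments and the reproducing formula -/

/-- The moment `∫_𝔻 |z|^{2k} (1 - |z|²)^c` with respect to (unnormalized) area measure. -/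
noncomputable def mom (k : ℕ) (c : ℝ) : ℝ :=
  ∫ z in ball (0 : ℂ) 1, (‖z‖ ^ 2) ^ k * (1 - ‖z‖ ^ 2) ^ c

lemma mom_integrable (k : ℕ) (c : ℝ) (hc : -1 < c) :
    IntegrableOn (fun z : ℂ => (‖z‖ ^ 2) ^ k * (1 - ‖z‖ ^ 2) ^ c) (ball (0 : ℂ) 1) := by
  refine Integrable.mono (weight_integrable c hc) (Measurable.aestronglyMeasurable (by fun_prop)) ?_
  filter_upwards [ae_restrict_mem measurableSet_ball] with z hz
  rw [norm_mul, norm_pow, norm_pow, norm_norm]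
  rw [mem_ball_zero_iff] at hz
  refine mul_le_of_le_one_left (norm_nonneg _) ?_
  exact pow_le_one₀ (by positivity) (pow_le_one₀ (norm_nonneg z) hz.le)

lemma mom_indicator (k : ℕ) (c : ℝ) (z : ℂ) :
    (ball (0 : ℂ) 1).indicator (fun z : ℂ => (‖z‖ ^ 2) ^ k * (1 - ‖z‖ ^ 2) ^ c) z =
    (Iio (1 : ℝ)).indicator (fun y : ℝ => (y ^ 2) ^ k * (1 - y ^ 2) ^ c) ‖z‖ := by
  by_cases h : ‖z‖ < 1
  · rw [indicator_of_mem (mem_ball_zero_iff.2 h), indicator_of_mem (show ‖z‖ ∈ Iio (1 : ℝ) from h)]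
  · rw [indicator_of_notMem (fun h' => h (mem_ball_zero_iff.1 h')),
      indicator_of_notMem (show ‖z‖ ∉ Iio (1 : ℝ) from h)]

lemma mom_radial_integrable (k : ℕ) (c : ℝ) (hc : -1 < c) :
    IntegrableOn (fun y : ℝ => y * ((y ^ 2) ^ k * (1 - y ^ 2) ^ c)) (Ioo 0 1) := by
  have h := mom_integrable k c hc
  rw [← integrable_indicator_iff measurableSet_ball] at h
  rw [show ((ball (0 : ℂ) 1).indicator fun z : ℂ => (‖z‖ ^ 2) ^ k * (1 - ‖z‖ ^ 2) ^ c) = fun z =>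
    (Iio (1 : ℝ)).indicator (fun y : ℝ => (y ^ 2) ^ k * (1 - y ^ 2) ^ c) ‖z‖ from
    funext (mom_indicator k c), integrable_fun_norm_addHaar volume, finrank_real_complex] at h
  refine IntegrableOn.congr_fun (h.mono_set Ioo_subset_Ioi_self) (fun y hy => ?_) measurableSet_Ioo
  simp only [smul_eq_mul]
  rw [indicator_of_mem (show y ∈ Iio (1 : ℝ) from hy.2)]
  simp

lemma mom_radial (k : ℕ) (c : ℝ) : mom k c = 2 * volume.real (ball (0 : ℂ) 1) *
    ∫ y in Ioo (0 : ℝ) 1, y * ((y ^ 2) ^ k * (1 - y ^ 2) ^ c) := by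
  rw [mom, ← integral_indicator measurableSet_ball]
  simp_rw [mom_indicator]
  rw [integral_fun_norm_addHaar volume, finrank_real_complex]
  simp only [smul_eq_mul, nsmul_eq_mul]
  rw [mul_assoc]
  congr 2
  rw [← integral_indicator measurableSet_Ioi, ← integral_indicator measurableSet_Ioo]
  congr 1
  ext y
  simp only [indicator_apply, mem_Ioi, mem_Iio, mem_Ioo]
  split_ifs <;> simp_all

/-- Integration by parts in the radial variable. -/
lemma mom_parts (k : ℕ) (c : ℝ) (hc : -1 < c) :
    (k + 1) * mom k (c + 1) = (c + 1) * mom (k + 1) c := by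
  have hc1 : 0 < c + 1 := by linarith
  have i1 := mom_radial_integrable k (c + 1) (by linarith)
  have i2 := mom_radial_integrable (k + 1) c hc
  have hint : IntegrableOn (fun y : ℝ => (2 * (k + 1)) * (y * ((y ^ 2) ^ k * (1 - y ^ 2) ^ (c + 1)))
      - (2 * (c + 1)) * (y * ((y ^ 2) ^ (k + 1) * (1 - y ^ 2) ^ c))) (Ioo 0 1) :=
    (i1.const_mul _).sub (i2.const_mul _)
  have h := intervalIntegral.integral_eq_sub_of_hasDerivAt_of_le (a := 0) (b := 1)
    (f := fun y : ℝ => (y ^ 2) ^ (k + 1) * (1 - y ^ 2) ^ (c + 1))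
    (f' := fun y : ℝ => (2 * (k + 1)) * (y * ((y ^ 2) ^ k * (1 - y ^ 2) ^ (c + 1)))
      - (2 * (c + 1)) * (y * ((y ^ 2) ^ (k + 1) * (1 - y ^ 2) ^ c))) zero_le_one
    (by
      apply ContinuousOn.mul (by fun_prop)
      apply ContinuousOn.rpow_const (by fun_prop)
      intro x _; right; exact hc1.le)
    (by
      intro x hx
      have hx1 : (1 : ℝ) - x ^ 2 ≠ 0 := by nlinarith [hx.1, hx.2]
      have d1 : HasDerivAt (fun y : ℝ => (y ^ 2) ^ (k + 1)) ((k + 1) * (x ^ 2) ^ k * (2 * x)) x := by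
        refine (((hasDerivAt_id' x).fun_pow 2).fun_pow (k + 1)).congr_deriv ?_
        simp
      have d2 : HasDerivAt (fun y : ℝ => (1 - y ^ 2) ^ (c + 1))
          (-(2 * x) * (c + 1) * (1 - x ^ 2) ^ c) x := by
        refine ((((hasDerivAt_id' x).fun_pow 2).const_sub 1).rpow_const (p := c + 1)
          (Or.inl hx1)).congr_deriv ?_
        simp
      refine (d1.fun_mul d2).congr_deriv ?_
      ring)
    (by
      rw [intervalIntegrable_iff_integrableOn_Ioo_of_le zero_le_one]
      exact hint)
  rw [intervalIntegral.integral_of_le zero_le_one, integral_Ioc_eq_integral_Ioo,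
    integral_sub (i1.const_mul _) (i2.const_mul _), integral_const_mul, integral_const_mul] at h
  have h0 : ((1 : ℝ) ^ 2) ^ (k + 1) * (1 - 1 ^ 2) ^ (c + 1)
      - (0 ^ 2) ^ (k + 1) * (1 - 0 ^ 2) ^ (c + 1) = 0 := by
    norm_num [Real.zero_rpow hc1.ne']
  rw [h0] at h
  rw [mom_radial, mom_radial]
  linear_combination (volume.real (ball (0 : ℂ) 1)) * h

lemma mom_sub (k : ℕ) (c : ℝ) (hc : -1 < c) : mom k (c + 1) = mom k c - mom (k + 1) c := by
  rw [mom, mom, mom, ← integral_sub (mom_integrable k c hc) (mom_integrable (k + 1) c hc)]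
  refine setIntegral_congr_fun measurableSet_ball fun z hz => ?_
  have := one_sub_sq_pos hz
  rw [Real.rpow_add_one this.ne']
  ring

lemma mom_succ_right (k : ℕ) (c : ℝ) (hc : -1 < c) :
    (k + c + 2) * mom k (c + 1) = (c + 1) * mom k c := by
  have h1 := mom_parts k c hc
  have h2 := mom_sub k c hc
  have hc1 : c + 1 ≠ 0 := by linarith
  linear_combination h1 + (c + 1) * h2

lemma mom_succ_left (k : ℕ) (c : ℝ) (hc : -1 < c) :
    (k + c + 2) * mom (k + 1) c = (k + 1) * mom k c := by
  have h1 := mom_parts k c hc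
  have h2 := mom_sub k c hc
  linear_combination (-1) * h1 + (k + 1) * h2

lemma mom_zero_pos (c : ℝ) (hc : -1 < c) : 0 < mom 0 c := by
  rw [mom, setIntegral_pos_iff_support_of_nonneg_ae _ (mom_integrable 0 c hc)]
  · refine lt_of_lt_of_le (measure_ball_pos volume (0 : ℂ) one_pos) (measure_mono fun z hz => ?_)
    refine ⟨?_, hz⟩
    have := one_sub_sq_pos hz
    rw [Function.mem_support]
    positivity
  · filter_upwards [ae_restrict_mem measurableSet_ball] with z hz
    have := one_sub_sq_pos hz
    simp only [Pi.zero_apply]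
    positivity

/-- The Taylor coefficients of `(1 - x)^{-t}`. -/
noncomputable def bc (t : ℝ) (k : ℕ) : ℂ := Ring.choose ((t : ℂ) + k - 1) k

lemma bc_zero (t : ℝ) : bc t 0 = 1 := by simp [bc]

lemma bc_succ (t : ℝ) (k : ℕ) : ((k : ℂ) + 1) * bc t (k + 1) = (t + k) * bc t k := by
  have key : ∀ k : ℕ, (k.factorial : ℂ) * bc t k = (ascPochhammer ℂ k).eval (t : ℂ) := by
    intro k
    rw [← Polynomial.ascPochhammer_smeval_eq_eval,
      ← Ring.factorial_nsmul_multichoose_eq_ascPochhammer, nsmul_eq_mul, bc, Ring.choose]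
    congr 2
    ring
  have h1 := key k
  have h2 := key (k + 1)
  rw [ascPochhammer_succ_eval, ← h1, Nat.factorial_succ] at h2
  have h3 : (k.factorial : ℂ) ≠ 0 := by exact_mod_cast k.factorial_ne_zero
  apply mul_left_cancel₀ h3
  push_cast at h2
  linear_combination h2

/-- The radial moments are, up to a constant factor, reciprocal to the Taylor coefficients of the
kernel; this is why the kernel reproduces. -/
lemma bc_mul_mom (t : ℝ) (ht : 1 < t) (k : ℕ) :
    bc t k * (mom k (t - 2) : ℂ) = (mom 0 (t - 2) : ℂ) := by
  induction k with
  | zero => simp [bc_zero]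
  | succ k ih =>
    have h1 := bc_succ t k
    have h2 := mom_succ_left k (t - 2) (by linarith)
    have h3 : ((k : ℂ) + (t - 2) + 2) * (mom (k + 1) (t - 2) : ℂ)
        = (k + 1) * (mom k (t - 2) : ℂ) := by exact_mod_cast h2
    have h4 : (k : ℂ) + 1 ≠ 0 := by exact_mod_cast k.succ_ne_zero
    have h5 : (t : ℂ) + k ≠ 0 := by
      have : t + k ≠ 0 := by positivity
      exact_mod_cast this
    apply mul_left_cancel₀ h4
    linear_combination (mom (k + 1) (t - 2) : ℂ) * h1 + bc t k * h3 + (k + 1) * ih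

lemma bc_mul_mom' (t : ℝ) (ht : 1 < t) (k : ℕ) :
    (k + t) * (bc t k * (mom k (t - 1) : ℂ)) = (t - 1) * (mom 0 (t - 2) : ℂ) := by
  have h1 := bc_mul_mom t ht k
  have h2 := mom_succ_right k (t - 2) (by linarith)
  have h3 : ((k : ℂ) + (t - 2) + 2) * (mom k (t - 2 + 1) : ℂ)
        = (t - 2 + 1) * (mom k (t - 2) : ℂ) := by exact_mod_cast h2
  rw [show t - 2 + 1 = t - 1 by ring] at h3
  linear_combination (t - 1 : ℂ) * h1 + bc t k * h3

/-- Orthogonality of distinct monomials with respect to a radial weight. -/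
lemma orth (k j : ℕ) (c : ℝ) (hkj : j ≠ k) :
    ∫ z in ball (0 : ℂ) 1, cj z ^ k * z ^ j * (((1 - ‖z‖ ^ 2) ^ c : ℝ) : ℂ) = 0 := by
  -- the rotation by `π / (j - k)` changes the sign of the integrand
  set d : ℝ := (j : ℝ) - k
  have hd : d ≠ 0 := sub_ne_zero.2 (by exact_mod_cast hkj)
  set u : Circle := Circle.exp (Real.pi / d) with hu
  have h := integral_ball_rotate u
    (fun z => cj z ^ k * z ^ j * (((1 - ‖z‖ ^ 2) ^ c : ℝ) : ℂ))
  have hu2 : cj (u : ℂ) ^ k * (u : ℂ) ^ j = -1 := by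
    rw [hu, Circle.coe_exp, ← exp_conj, ← Complex.exp_nat_mul, ← Complex.exp_nat_mul,
      ← Complex.exp_add, map_mul, conj_ofReal, conj_I, ← exp_pi_mul_I]
    congr 1
    have hd' : (d : ℂ) ≠ 0 := by exact_mod_cast hd
    have hdd : (d : ℂ) = j - k := by simp [d]
    push_cast
    field_simp
    rw [hdd]; ring
  have e : ∀ z : ℂ, cj (z * u) ^ k * (z * u) ^ j * (((1 - ‖z * u‖ ^ 2) ^ c : ℝ) : ℂ) =
      -(cj z ^ k * z ^ j * (((1 - ‖z‖ ^ 2) ^ c : ℝ) : ℂ)) := by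
    intro z
    rw [norm_mul, Circle.norm_coe, mul_one, map_mul, mul_pow, mul_pow]
    linear_combination (cj z ^ k * z ^ j * (((1 - ‖z‖ ^ 2) ^ c : ℝ) : ℂ)) * hu2
  simp_rw [e] at h
  rw [integral_neg] at h
  exact self_eq_neg.1 h.symm

lemma diag (k : ℕ) (c : ℝ) :
    ∫ z in ball (0 : ℂ) 1, cj z ^ k * z ^ k * (((1 - ‖z‖ ^ 2) ^ c : ℝ) : ℂ) = mom k c := by
  rw [mom, ← integral_complex_ofReal]
  congr 1
  ext z
  rw [← mul_pow, conj_mul']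
  push_cast
  ring

/-- The kernel applied to an antiholomorphic monomial: only the matching Taylor coefficient of
the kernel survives. -/
lemma kernel_monomial (t c : ℝ) (hc : -1 < c) (k : ℕ) (v : ℂ) (hv : ‖v‖ < 1) :
    ∫ z in ball (0 : ℂ) 1, cj z ^ k * (1 / (1 - z * v) ^ (t : ℂ)) *
      (((1 - ‖z‖ ^ 2) ^ c : ℝ) : ℂ) = bc t k * v ^ k * mom k c := by
  have hps := one_div_one_sub_cpow_hasFPowerSeriesOnBall_zero (t : ℂ)
  have hmem : ∀ x : ℂ, ‖x‖ < 1 → x ∈ Metric.eball (0 : ℂ) 1 := by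
    intro x hx
    rw [← ENNReal.ofReal_one, Metric.eball_ofReal]
    simpa using hx
  have hsum : ∀ x : ℂ, ‖x‖ < 1 → HasSum (fun j => bc t j * x ^ j) (1 / (1 - x) ^ (t : ℂ)) := by
    intro x hx
    have := hps.hasSum (hmem x hx)
    simpa [bc, FormalMultilinearSeries.ofScalars_apply_eq, mul_comm] using this
  have hsummable : Summable (fun j => ‖bc t j * v ^ j‖) := by
    have := FormalMultilinearSeries.summable_norm_apply _
      (Metric.eball_subset_eball hps.r_le (hmem v hv))
    simpa [bc, FormalMultilinearSeries.ofScalars_apply_eq, mul_comm] using this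
  set F : ℕ → ℂ → ℂ := fun j z =>
    (bc t j * v ^ j) * (cj z ^ k * z ^ j * (((1 - ‖z‖ ^ 2) ^ c : ℝ) : ℂ)) with hF
  have hFb : ∀ j, ∀ z ∈ ball (0 : ℂ) 1, ‖F j z‖ ≤ ‖bc t j * v ^ j‖ * (1 - ‖z‖ ^ 2) ^ c := by
    intro j z hz
    have hp := Real.rpow_nonneg (one_sub_sq_pos hz).le c
    rw [mem_ball_zero_iff] at hz
    rw [hF]
    simp only
    rw [norm_mul (bc t j * v ^ j), norm_mul (cj z ^ k * z ^ j), norm_real, Real.norm_of_nonneg hp]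
    gcongr
    refine mul_le_of_le_one_left hp ?_
    rw [norm_mul, norm_pow, norm_pow, RCLike.norm_conj]
    exact mul_le_one₀ (pow_le_one₀ (norm_nonneg z) hz.le) (by positivity)
      (pow_le_one₀ (norm_nonneg z) hz.le)
  have hFm : ∀ j, Measurable (F j) := by
    intro j
    have : Measurable (fun z : ℂ => cj z) := continuous_conj.measurable
    simp only [hF]
    fun_prop
  have hFi : ∀ j, IntegrableOn (F j) (ball (0 : ℂ) 1) := by
    intro j
    refine Integrable.mono' ((weight_integrable c hc).const_mul ‖bc t j * v ^ j‖)
      (hFm j).aestronglyMeasurable ?_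
    filter_upwards [ae_restrict_mem measurableSet_ball] with z hz using hFb j z hz
  have hFs : Summable (fun j => ∫ z in ball (0 : ℂ) 1, ‖F j z‖) := by
    refine Summable.of_nonneg_of_le (fun j => integral_nonneg fun _ => norm_nonneg _) (fun j => ?_)
      (hsummable.mul_right (∫ z in ball (0 : ℂ) 1, (1 - ‖z‖ ^ 2) ^ c))
    rw [← integral_const_mul]
    exact setIntegral_mono_on (hFi j).norm ((weight_integrable c hc).const_mul _)
      measurableSet_ball (hFb j)
  have h1 := hasSum_integral_of_summable_integral_norm hFi hFs
  have h2 : ∫ z in ball (0 : ℂ) 1, ∑' j, F j z = ∫ z in ball (0 : ℂ) 1,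
      cj z ^ k * (1 / (1 - z * v) ^ (t : ℂ)) * (((1 - ‖z‖ ^ 2) ^ c : ℝ) : ℂ) := by
    refine setIntegral_congr_fun measurableSet_ball fun z hz => ?_
    rw [mem_ball_zero_iff] at hz
    have hzv : ‖z * v‖ < 1 := by
      rw [norm_mul]; nlinarith [norm_nonneg z, norm_nonneg v]
    have h3 := (hsum _ hzv).mul_left (cj z ^ k * (((1 - ‖z‖ ^ 2) ^ c : ℝ) : ℂ))
    have h4 : HasSum (fun j => F j z)
        (cj z ^ k * (1 / (1 - z * v) ^ (t : ℂ)) * (((1 - ‖z‖ ^ 2) ^ c : ℝ) : ℂ)) := by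
      rw [show (fun j => F j z) = fun j => cj z ^ k * (((1 - ‖z‖ ^ 2) ^ c : ℝ) : ℂ) *
        (bc t j * (z * v) ^ j) by ext j; simp only [hF, mul_pow]; ring, mul_right_comm]
      exact h3
    exact h4.tsum_eq
  rw [h2] at h1
  have h5 : HasSum (fun j => ∫ z in ball (0 : ℂ) 1, F j z) (bc t k * v ^ k * mom k c) := by
    have h6 : ∀ j, ∫ z in ball (0 : ℂ) 1, F j z =
        if j = k then bc t k * v ^ k * mom k c else 0 := by
      intro j
      simp only [hF]
      rw [integral_const_mul]
      split_ifs with hj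
      · rw [hj, diag]
      · rw [orth k j c hj, mul_zero]
    simp_rw [h6]
    exact hasSum_ite_eq k _
  exact h1.unique h5

/-! ### The kernel -/

/-- The kernel `(1 - z \bar w)^{-t}`. -/
noncomputable def bker (t : ℝ) (z w : ℂ) : ℂ := (1 - z * cj w) ^ (((-t : ℝ)) : ℂ)

lemma norm_bker {z w : ℂ} (hz : z ∈ ball (0 : ℂ) 1) (hw : w ∈ ball (0 : ℂ) 1) (t : ℝ) :
    ‖bker t z w‖ = ‖1 - z * cj w‖ ^ (-t) :=
  norm_cpow_re_pos (kn_ne_zero hz hw) _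

lemma one_div_kn (t : ℝ) (z w : ℂ) : 1 / (1 - z * cj w) ^ (t : ℂ) = bker t z w := by
  rw [bker, ofReal_neg, cpow_neg, one_div]

lemma conj_bker {z w : ℂ} (hz : z ∈ ball (0 : ℂ) 1) (hw : w ∈ ball (0 : ℂ) 1) (t : ℝ) :
    cj (bker t z w) = bker t w z := by
  have h : (1 - z * cj w).arg ≠ Real.pi := by
    intro h
    have := Complex.arg_eq_pi_iff.1 h
    linarith [kn_re_pos hz hw]
  rw [bker, bker, ← conj_ofReal, ← Complex.conj_cpow _ _ h, conj_ofReal]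
  congr 1
  simp [mul_comm]

lemma measurable_bker (t : ℝ) : Measurable (fun x : ℂ × ℂ => bker t x.1 x.2) := by
  have : Measurable (fun z : ℂ => cj z) := continuous_conj.measurable
  unfold bker
  fun_prop

lemma measurable_bker_left (t : ℝ) (w : ℂ) : Measurable (fun z => bker t z w) :=
  (measurable_bker t).comp (measurable_id.prodMk measurable_const)

lemma measurable_bker_right (t : ℝ) (z : ℂ) : Measurable (fun w => bker t z w) :=
  (measurable_bker t).comp (measurable_const.prodMk measurable_id)

lemma kn_rpow_le_fixed {z w : ℂ} (hz : z ∈ ball (0 : ℂ) 1) (hw : w ∈ ball (0 : ℂ) 1) {t : ℝ}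
    (ht : 0 ≤ t) : ‖1 - z * cj w‖ ^ (-t) ≤ (1 - ‖z‖) ^ (-t) :=
  Real.rpow_le_rpow_of_nonpos (by rw [mem_ball_zero_iff] at hz; linarith) (kn_lower hw)
    (by linarith)

lemma kn_rpow_le_sq {z w : ℂ} (hz : z ∈ ball (0 : ℂ) 1) (hw : w ∈ ball (0 : ℂ) 1) {t : ℝ}
    (ht : 0 ≤ t) : ‖1 - z * cj w‖ ^ (-t) ≤ 2 ^ t * (1 - ‖z‖ ^ 2) ^ (-t) := by
  have h1 := one_sub_sq_pos hz
  have h2 := sq_le_kn hz hw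
  have h3 : (1 - ‖z‖ ^ 2) / 2 ≤ ‖1 - z * cj w‖ := by linarith
  refine (Real.rpow_le_rpow_of_nonpos (by positivity) h3 (by linarith)).trans ?_
  rw [Real.div_rpow h1.le two_pos.le, Real.rpow_neg two_pos.le, div_inv_eq_mul, mul_comm]

/-- Hölder continuity of `x ↦ x^{-t}` on the right half plane, with the natural loss near `0`. -/
lemma cpow_diff (t δ : ℝ) (ht : 0 < t) (hδ : 0 < δ) (hδ1 : δ ≤ 1) {x y : ℂ} (hx : 0 < x.re)
    (hy : 0 < y.re) : ‖x ^ (((-t : ℝ)) : ℂ) - y ^ (((-t : ℝ)) : ℂ)‖ ≤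
      (3 + t * 2 ^ (t + 1)) * (‖x - y‖ ^ δ * (‖x‖ ^ (-(t + δ)) + ‖y‖ ^ (-(t + δ)))) := by
  have hx0 : x ≠ 0 := by rintro rfl; simp at hx
  have hy0 : y ≠ 0 := by rintro rfl; simp at hy
  have hxn : 0 < ‖x‖ := norm_pos_iff.2 hx0
  have hyn : 0 < ‖y‖ := norm_pos_iff.2 hy0
  set d := ‖x - y‖ with hd
  have hd0 : 0 ≤ d := norm_nonneg _
  have h2t : (0 : ℝ) < 2 ^ (t + 1) := by positivity
  have hX : 0 ≤ ‖x‖ ^ (-(t + δ)) := by positivity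
  have hY : 0 ≤ ‖y‖ ^ (-(t + δ)) := by positivity
  have hD : 0 ≤ d ^ δ := by positivity
  -- If `x` and `y` are far apart, each term is estimated separately; otherwise the mean value
  -- inequality applies on a disk about `y` on which `‖ξ‖ ≥ ‖y‖ / 2`.
  by_cases hc : ‖y‖ ≤ 2 * d
  · have key : ∀ v : ℂ, v ≠ 0 → ‖v‖ ≤ 3 * d →
        ‖v ^ (((-t : ℝ)) : ℂ)‖ ≤ 3 * (d ^ δ * ‖v‖ ^ (-(t + δ))) := by
      intro v hv hvd
      have hvn : 0 < ‖v‖ := norm_pos_iff.2 hv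
      rw [norm_cpow_re_pos hv, show -t = δ + -(t + δ) by ring, Real.rpow_add hvn, ← mul_assoc]
      gcongr
      calc ‖v‖ ^ δ ≤ (3 * d) ^ δ := by gcongr
        _ = 3 ^ δ * d ^ δ := Real.mul_rpow (by norm_num) hd0
        _ ≤ 3 ^ (1 : ℝ) * d ^ δ := by gcongr; norm_num
        _ = 3 * d ^ δ := by rw [Real.rpow_one]
    have hxd : ‖x‖ ≤ 3 * d := by
      have := norm_add_le (x - y) y
      rw [sub_add_cancel] at this
      linarith
    have h1 := key x hx0 hxd
    have h2 := key y hy0 (by linarith)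
    have h3 := norm_sub_le (x ^ (((-t : ℝ)) : ℂ)) (y ^ (((-t : ℝ)) : ℂ))
    have h4 : 0 ≤ t * 2 ^ (t + 1) * (d ^ δ * (‖x‖ ^ (-(t + δ)) + ‖y‖ ^ (-(t + δ)))) := by
      positivity
    linarith
  · push Not at hc
    set S : Set ℂ := {v : ℂ | 0 < v.re} ∩ closedBall y d with hS
    have hconv : Convex ℝ S := (convex_halfSpace_re_gt 0).inter (convex_closedBall y d)
    have hmv := hconv.norm_image_sub_le_of_norm_hasDerivWithin_le
      (f := fun v : ℂ => v ^ (((-t : ℝ)) : ℂ))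
      (f' := fun v : ℂ => (((-t : ℝ)) : ℂ) * v ^ ((((-t : ℝ)) : ℂ) - 1))
      (C := t * (‖y‖ / 2) ^ (-(t + 1))) (x := y) (y := x) (s := S) ?_ ?_ ?_ ?_
    · calc _ ≤ t * (‖y‖ / 2) ^ (-(t + 1)) * d := hmv
        _ = t * 2 ^ (t + 1) * (d * ‖y‖ ^ (-(t + 1))) := by
          rw [Real.div_rpow hyn.le two_pos.le, Real.rpow_neg two_pos.le, div_inv_eq_mul]; ring
        _ ≤ t * 2 ^ (t + 1) * (d ^ δ * ‖y‖ ^ (-(t + δ))) := by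
          have e1 : d ≤ d ^ δ * ‖y‖ ^ (1 - δ) := by
            rcases hd0.eq_or_lt with h0 | h0
            · rw [← h0]; positivity
            · calc d = d ^ (δ + (1 - δ)) := by simp
                _ = d ^ δ * d ^ (1 - δ) := Real.rpow_add h0 _ _
                _ ≤ d ^ δ * ‖y‖ ^ (1 - δ) := by
                  gcongr
                  linarith
          have e2 : ‖y‖ ^ (-(t + δ)) = ‖y‖ ^ (1 - δ) * ‖y‖ ^ (-(t + 1)) := by
            rw [← Real.rpow_add hyn]; congr 1; ring
          rw [e2, ← mul_assoc (d ^ δ)]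
          gcongr
        _ ≤ _ := by
          have h4 : 0 ≤ 3 * (d ^ δ * (‖x‖ ^ (-(t + δ)) + ‖y‖ ^ (-(t + δ)))) := by positivity
          have h5 : 0 ≤ t * 2 ^ (t + 1) * (d ^ δ * ‖x‖ ^ (-(t + δ))) := by positivity
          linarith
    · intro v hv
      exact ((hasStrictDerivAt_id v).cpow_const (c := (((-t : ℝ)) : ℂ))
        (Or.inl hv.1)).hasDerivAt.hasDerivWithinAt.congr_deriv (by simp)
    · intro v hv
      have hv0 : v ≠ 0 := by rintro rfl; simp [hS] at hv
      have hvy : ‖y‖ / 2 ≤ ‖v‖ := by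
        have h1 : ‖v - y‖ ≤ d := by simpa [dist_eq_norm] using hv.2
        have h2 := norm_sub_norm_le y v
        rw [norm_sub_rev] at h2
        linarith
      rw [norm_mul, norm_real, Real.norm_eq_abs, abs_neg, abs_of_pos ht,
        show (((-t : ℝ)) : ℂ) - 1 = (((-(t + 1) : ℝ)) : ℂ) by push_cast; ring, norm_cpow_re_pos hv0]
      gcongr ?_ * ?_
      exact Real.rpow_le_rpow_of_nonpos (by positivity) hvy (by linarith)
    · exact ⟨hy, mem_closedBall_self hd0⟩
    · exact ⟨hx, by simp [dist_eq_norm, hd]⟩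

/-- `w ↦ (1 - z w̄)^{-t}` is Hölder continuous; since `|w - u| ≤ |1 - w ū|`, the increment may be
measured by the kernel itself. -/
lemma bker_diff (t δ : ℝ) (ht : 0 < t) (hδ : 0 < δ) (hδ1 : δ ≤ 1) {z w u : ℂ}
    (hz : z ∈ ball (0 : ℂ) 1) (hw : w ∈ ball (0 : ℂ) 1) (hu : u ∈ ball (0 : ℂ) 1) :
    ‖bker t z w - bker t z u‖ ≤ (3 + t * 2 ^ (t + 1)) * (‖1 - w * cj u‖ ^ δ *
      (‖1 - z * cj w‖ ^ (-(t + δ)) + ‖1 - z * cj u‖ ^ (-(t + δ)))) := by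
  refine (cpow_diff t δ ht hδ hδ1 (kn_re_pos hz hw) (kn_re_pos hz hu)).trans ?_
  gcongr
  have h1 : ‖z‖ ≤ 1 := (mem_ball_zero_iff.1 hz).le
  calc ‖1 - z * cj w - (1 - z * cj u)‖ = ‖z‖ * ‖w - u‖ := by
        rw [show 1 - z * cj w - (1 - z * cj u) = z * cj (u - w) by simp; ring, norm_mul,
          RCLike.norm_conj, norm_sub_rev]
    _ ≤ 1 * ‖w - u‖ := by gcongr
    _ ≤ _ := by rw [one_mul]; exact dist_le_kn hw hu

lemma bker_monomial (t c : ℝ) (hc : -1 < c) (k : ℕ) {w : ℂ} (hw : w ∈ ball (0 : ℂ) 1) :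
    ∫ z in ball (0 : ℂ) 1, cj z ^ k * bker t z w *
      (((1 - ‖z‖ ^ 2) ^ c : ℝ) : ℂ) = bc t k * cj w ^ k * mom k c := by
  rw [← kernel_monomial t c hc k (cj w) (by simpa using hw)]
  simp_rw [one_div_kn]

lemma poly_bdd (P : Polynomial ℂ) : ∃ B, 0 ≤ B ∧ ∀ z ∈ ball (0 : ℂ) 1, ‖P.eval z‖ ≤ B := by
  obtain ⟨B, hB⟩ := (isCompact_closedBall (0 : ℂ) 1).exists_bound_of_continuousOn
    (P.continuous.continuousOn)
  exact ⟨B, (norm_nonneg _).trans (hB 0 (by simp)), fun z hz => hB z (ball_subset_closedBall hz)⟩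

/-- The reproducing formula for polynomials. -/
lemma reproducing (s : ℝ) (hs : 1 < s) (P : Polynomial ℂ) {w : ℂ} (hw : w ∈ ball (0 : ℂ) 1) :
    ∫ u in ball (0 : ℂ) 1, P.eval u * bker (s + 1) w u * (((1 - ‖u‖ ^ 2) ^ (s - 1) : ℝ) : ℂ) =
      mom 0 (s - 1) * P.eval w := by
  have hint : ∀ P : Polynomial ℂ, IntegrableOn (fun u => P.eval u * bker (s + 1) w u *
      (((1 - ‖u‖ ^ 2) ^ (s - 1) : ℝ) : ℂ)) (ball (0 : ℂ) 1) := by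
    intro P
    obtain ⟨B, hB0, hB⟩ := poly_bdd P
    refine Integrable.mono' ((weight_integrable (s - 1) (by linarith)).const_mul
      (B * (1 - ‖w‖) ^ (-(s + 1)))) ?_ ?_
    · have := measurable_bker_right (s + 1) w
      have := P.continuous.measurable
      exact Measurable.aestronglyMeasurable (by fun_prop)
    · filter_upwards [ae_restrict_mem measurableSet_ball] with u hu
      have hp := Real.rpow_nonneg (one_sub_sq_pos hu).le (s - 1)
      rw [norm_mul, norm_mul, norm_real, Real.norm_of_nonneg hp, norm_bker hw hu]
      have := kn_rpow_le_fixed hw hu (t := s + 1) (by linarith)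
      have := hB u hu
      gcongr
  induction P using Polynomial.induction_on' with
  | add P Q hP hQ =>
    simp only [Polynomial.eval_add, add_mul]
    rw [integral_add (hint P) (hint Q), hP, hQ]
    ring
  | monomial n x =>
    have h1 := bker_monomial (s + 1) (s - 1) (by linarith) n hw
    have h2 := bc_mul_mom (s + 1) (by linarith) n
    rw [show s + 1 - 2 = s - 1 by ring] at h2
    rw [show bc (s + 1) n * cj w ^ n * (mom n (s - 1) : ℂ) = mom 0 (s - 1) * cj w ^ n by
      linear_combination cj w ^ n * h2] at h1
    have h3 := congrArg (fun y => x * cj y) h1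
    rw [← integral_conj, ← integral_const_mul] at h3
    simp only [Polynomial.eval_monomial]
    calc _ = _ := by
          refine setIntegral_congr_fun measurableSet_ball fun u hu => ?_
          show x * u ^ n * bker (s + 1) w u * _ = x * cj (cj u ^ n * bker (s + 1) u w * _)
          rw [map_mul, map_mul, map_pow, conj_conj, conj_ofReal, conj_bker hu hw]
          ring
      _ = _ := h3
      _ = _ := by
          rw [map_mul, conj_ofReal, map_pow, conj_conj]
          ring

/-! ### The embedding of `L^p_a(ω_a)` into a weighted `L^1` -/

lemma pow_interp {x A p : ℝ} (hx : 0 ≤ x) (hxA : x ≤ A) (hp1 : p ≤ 1) :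
    x ≤ x ^ p * A ^ (1 - p) := by
  rcases hx.eq_or_lt with h0 | h0
  · rw [← h0]
    have : 0 ≤ A := hx.trans hxA
    positivity
  · calc x = x ^ p * x ^ (1 - p) := by rw [← Real.rpow_add h0]; simp
      _ ≤ x ^ p * A ^ (1 - p) := by
        gcongr

lemma poly_integrable (p a : ℝ) (hp0 : 0 < p) (ha : -1 < a) (P : Polynomial ℂ) :
    IntegrableOn (fun u => ‖P.eval u‖ ^ p * (1 - ‖u‖ ^ 2) ^ a) (ball (0 : ℂ) 1) := by
  obtain ⟨B, hB0, hB⟩ := poly_bdd P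
  refine Integrable.mono' ((weight_integrable a ha).const_mul (B ^ p)) ?_ ?_
  · have := P.continuous.measurable
    exact Measurable.aestronglyMeasurable (by fun_prop)
  · filter_upwards [ae_restrict_mem measurableSet_ball] with u hu
    have hp := one_sub_sq_pos hu
    rw [Real.norm_of_nonneg (by positivity)]
    have := hB u hu
    gcongr

/-- `‖P‖` in the weighted `L¹` space is controlled by the `L^p` quasi-norm. With
`M = sup (1 - |z|²)^s |P z|` and `I = ∫ |P|^p (1 - |u|²)^a`, interpolating `|P|` between `|P|^p` and
its pointwise bound shows that the left side is at most `M^{1-p} I`, while the reproducing formula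
bounds `M` by a multiple of the left side; hence `M ≤ C M^{1-p} I`, and `M` can be eliminated. -/
lemma embedding (p a s : ℝ) (hp0 : 0 < p) (hp1 : p ≤ 1) (ha : -1 < a) (hs : 1 < s)
    (hsp : s * p = a + 2) : ∃ C, 0 ≤ C ∧ ∀ P : Polynomial ℂ,
      ∫ u in ball (0 : ℂ) 1, ‖P.eval u‖ * (1 - ‖u‖ ^ 2) ^ (s - 2) ≤
        C * (∫ u in ball (0 : ℂ) 1, ‖P.eval u‖ ^ p * (1 - ‖u‖ ^ 2) ^ a) ^ (1 / p) := by
  have hm := mom_zero_pos (s - 1) (by linarith)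
  set C₁ : ℝ := 2 ^ (s + 1) / mom 0 (s - 1) with hC₁
  have hC₁0 : 0 < C₁ := by positivity
  refine ⟨C₁ ^ ((1 - p) / p), by positivity, fun P => ?_⟩
  set I : ℝ := ∫ u in ball (0 : ℂ) 1, ‖P.eval u‖ ^ p * (1 - ‖u‖ ^ 2) ^ a with hI
  have hI0 : 0 ≤ I := by
    refine setIntegral_nonneg measurableSet_ball fun u hu => ?_
    have := one_sub_sq_pos hu
    positivity
  obtain ⟨B, hB0, hB⟩ := poly_bdd P
  set S : Set ℝ := (fun z : ℂ => (1 - ‖z‖ ^ 2) ^ s * ‖P.eval z‖) '' ball (0 : ℂ) 1 with hS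
  have hSb : BddAbove S := by
    refine ⟨B, ?_⟩
    rintro _ ⟨z, hz, rfl⟩
    have h1 := one_sub_sq_pos hz
    have h2 := Real.rpow_le_one h1.le (one_sub_sq_le_one z) (by linarith : (0 : ℝ) ≤ s)
    have h3 := hB z hz
    calc (1 - ‖z‖ ^ 2) ^ s * ‖P.eval z‖ ≤ 1 * B := by gcongr
      _ = B := one_mul B
  set M : ℝ := sSup S with hM
  have hSM : ∀ z ∈ ball (0 : ℂ) 1, (1 - ‖z‖ ^ 2) ^ s * ‖P.eval z‖ ≤ M := fun z hz =>
    le_csSup hSb ⟨z, hz, rfl⟩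
  have hM0 : 0 ≤ M := le_trans (by simp) (hSM 0 (by simp))
  -- pointwise interpolation between the `p`-th power and the growth bound
  have hpt : ∀ u ∈ ball (0 : ℂ) 1, ‖P.eval u‖ ≤
      ‖P.eval u‖ ^ p * (M ^ (1 - p) * (1 - ‖u‖ ^ 2) ^ (-(s * (1 - p)))) := by
    intro u hu
    have h1 := one_sub_sq_pos hu
    have h2 : ‖P.eval u‖ ≤ M * (1 - ‖u‖ ^ 2) ^ (-s) := by
      rw [Real.rpow_neg h1.le, ← div_eq_mul_inv, le_div_iff₀ (by positivity), mul_comm]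
      exact hSM u hu
    refine (pow_interp (norm_nonneg _) h2 hp1).trans_eq ?_
    rw [Real.mul_rpow hM0 (by positivity), ← Real.rpow_mul h1.le, neg_mul]
  have hint := poly_integrable p a hp0 ha P
  have hMI : M ≤ C₁ * M ^ (1 - p) * I := by
    refine csSup_le ⟨_, 0, by simp, rfl⟩ ?_
    rintro _ ⟨w, hw, rfl⟩
    have hw1 := one_sub_sq_pos hw
    have h1 := reproducing s hs P hw
    have h2 : mom 0 (s - 1) * ‖P.eval w‖ ≤ 2 ^ (s + 1) * M ^ (1 - p) * (1 - ‖w‖ ^ 2) ^ (-s) * I := by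
      calc mom 0 (s - 1) * ‖P.eval w‖ = ‖(mom 0 (s - 1) : ℂ) * P.eval w‖ := by
            rw [norm_mul, norm_real, Real.norm_of_nonneg hm.le]
        _ ≤ ∫ u in ball (0 : ℂ) 1, 2 ^ (s + 1) * M ^ (1 - p) * (1 - ‖w‖ ^ 2) ^ (-s) *
            (‖P.eval u‖ ^ p * (1 - ‖u‖ ^ 2) ^ a) := by
          rw [← h1]
          refine norm_integral_le_of_norm_le (hint.const_mul _) ?_
          filter_upwards [ae_restrict_mem measurableSet_ball] with u hu
          have hu1 := one_sub_sq_pos hu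
          have hk := kn_pos hw hu
          rw [norm_mul, norm_mul, norm_real, Real.norm_of_nonneg (by positivity), norm_bker hw hu]
          have e1 : ‖1 - w * cj u‖ ^ (-(s + 1)) * (1 - ‖u‖ ^ 2) ≤
              2 * (2 ^ s * (1 - ‖w‖ ^ 2) ^ (-s)) := by
            calc ‖1 - w * cj u‖ ^ (-(s + 1)) * (1 - ‖u‖ ^ 2)
                ≤ ‖1 - w * cj u‖ ^ (-(s + 1)) * (2 * ‖1 - w * cj u‖) := by
                  gcongr
                  exact sq_le_kn' hw hu
              _ = 2 * ‖1 - w * cj u‖ ^ (-s) := by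
                  rw [show -s = -(s + 1) + 1 by ring, Real.rpow_add_one hk.ne']; ring
              _ ≤ _ := by
                  gcongr
                  exact kn_rpow_le_sq hw hu (by linarith)
          have e2 : (1 - ‖u‖ ^ 2) ^ (s - 1) = (1 - ‖u‖ ^ 2) * (1 - ‖u‖ ^ 2) ^ a *
              (1 - ‖u‖ ^ 2) ^ (s * (1 - p)) := by
            rw [mul_comm (1 - ‖u‖ ^ 2), ← Real.rpow_add_one hu1.ne', ← Real.rpow_add hu1]
            congr 1
            linear_combination hsp
          have e3 : (1 - ‖u‖ ^ 2) ^ (s * (1 - p)) * (1 - ‖u‖ ^ 2) ^ (-(s * (1 - p))) = 1 := by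
            rw [← Real.rpow_add hu1, add_neg_cancel, Real.rpow_zero]
          calc ‖P.eval u‖ * ‖1 - w * cj u‖ ^ (-(s + 1)) * (1 - ‖u‖ ^ 2) ^ (s - 1)
              ≤ (‖P.eval u‖ ^ p * (M ^ (1 - p) * (1 - ‖u‖ ^ 2) ^ (-(s * (1 - p))))) *
                ‖1 - w * cj u‖ ^ (-(s + 1)) * (1 - ‖u‖ ^ 2) ^ (s - 1) := by
                gcongr
                exact hpt u hu
            _ = (‖1 - w * cj u‖ ^ (-(s + 1)) * (1 - ‖u‖ ^ 2)) *
                (‖P.eval u‖ ^ p * M ^ (1 - p) * (1 - ‖u‖ ^ 2) ^ a) := by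
                rw [e2]
                linear_combination (‖P.eval u‖ ^ p * M ^ (1 - p) * ‖1 - w * cj u‖ ^ (-(s + 1)) *
                  (1 - ‖u‖ ^ 2) * (1 - ‖u‖ ^ 2) ^ a) * e3
            _ ≤ (2 * (2 ^ s * (1 - ‖w‖ ^ 2) ^ (-s))) *
                (‖P.eval u‖ ^ p * M ^ (1 - p) * (1 - ‖u‖ ^ 2) ^ a) := by gcongr
            _ = _ := by rw [Real.rpow_add_one two_ne_zero]; ring
        _ = _ := by rw [integral_const_mul]
    have e4 : (1 - ‖w‖ ^ 2) ^ s * (1 - ‖w‖ ^ 2) ^ (-s) = 1 := by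
      rw [← Real.rpow_add hw1, add_neg_cancel, Real.rpow_zero]
    have h3 : (1 - ‖w‖ ^ 2) ^ s * (mom 0 (s - 1) * ‖P.eval w‖) ≤ 2 ^ (s + 1) * M ^ (1 - p) * I := by
      calc _ ≤ (1 - ‖w‖ ^ 2) ^ s * (2 ^ (s + 1) * M ^ (1 - p) * (1 - ‖w‖ ^ 2) ^ (-s) * I) := by
            gcongr
        _ = _ := by linear_combination (2 ^ (s + 1) * M ^ (1 - p) * I) * e4
    rw [hC₁, div_mul_eq_mul_div, div_mul_eq_mul_div, le_div_iff₀ hm]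
    linarith
  have hMp : M ^ (1 - p) ≤ (C₁ * I) ^ ((1 - p) / p) := by
    have h1 : M ^ p ≤ C₁ * I := by
      rcases hM0.eq_or_lt with h0 | h0
      · rw [← h0, Real.zero_rpow hp0.ne']; positivity
      · have h2 : M ^ p * M ^ (1 - p) = M := by rw [← Real.rpow_add h0]; simp
        have h3 : 0 < M ^ (1 - p) := by positivity
        refine le_of_mul_le_mul_right ?_ h3
        rw [h2]; linarith
    calc M ^ (1 - p) = (M ^ p) ^ ((1 - p) / p) := by
          rw [← Real.rpow_mul hM0]; congr 1; field_simp
      _ ≤ _ := by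
          gcongr
  calc ∫ u in ball (0 : ℂ) 1, ‖P.eval u‖ * (1 - ‖u‖ ^ 2) ^ (s - 2)
      ≤ ∫ u in ball (0 : ℂ) 1, M ^ (1 - p) * (‖P.eval u‖ ^ p * (1 - ‖u‖ ^ 2) ^ a) := by
        refine integral_mono_of_nonneg ?_ (hint.const_mul _) ?_
        · filter_upwards [ae_restrict_mem measurableSet_ball] with u hu
          have := one_sub_sq_pos hu
          simp only [Pi.zero_apply]
          positivity
        · filter_upwards [ae_restrict_mem measurableSet_ball] with u hu
          have hu1 := one_sub_sq_pos hu
          have e5 : (1 - ‖u‖ ^ 2) ^ (-(s * (1 - p))) * (1 - ‖u‖ ^ 2) ^ (s - 2) =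
              (1 - ‖u‖ ^ 2) ^ a := by
            rw [← Real.rpow_add hu1]
            congr 1
            linear_combination hsp
          calc ‖P.eval u‖ * (1 - ‖u‖ ^ 2) ^ (s - 2)
              ≤ (‖P.eval u‖ ^ p * (M ^ (1 - p) * (1 - ‖u‖ ^ 2) ^ (-(s * (1 - p))))) *
                (1 - ‖u‖ ^ 2) ^ (s - 2) := by
                gcongr
                exact hpt u hu
            _ = _ := by rw [← e5]; ring
    _ = M ^ (1 - p) * I := by rw [integral_const_mul]
    _ ≤ (C₁ * I) ^ ((1 - p) / p) * I := by gcongr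
    _ = C₁ ^ ((1 - p) / p) * I ^ (1 / p) := by
        rw [Real.mul_rpow hC₁0.le hI0, mul_assoc]
        congr 1
        rcases hI0.eq_or_lt with h0 | h0
        · rw [← h0, Real.zero_rpow (one_div_ne_zero hp0.ne'), mul_zero]
        · rw [← Real.rpow_add_one h0.ne']
          congr 1
          field_simp
          ring

/-! ### Integration against a Carleson measure -/

/-- The Carleson condition `μ(D(z,r)) ≲ (1 - |z|²)^s` for some radius `r`. -/
def Carl (μ : Measure ℂ) (s : ℝ) : Prop :=
  ∃ r ∈ Set.Ioo (0 : ℝ) 1, ∃ C : ℝ, ∀ z ∈ ball (0 : ℂ) 1,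
    μ (pD z r) ≤ ENNReal.ofReal (C * (1 - ‖z‖ ^ 2) ^ s)

lemma measurableSet_pD (r : ℝ) : MeasurableSet {x : ℂ × ℂ | x.1 ∈ pD x.2 r} := by
  have hm : Measurable (fun z : ℂ => cj z) := continuous_conj.measurable
  have h1 : MeasurableSet {x : ℂ × ℂ | x.1 ∈ ball (0 : ℂ) 1} := measurable_fst measurableSet_ball
  have h2 : MeasurableSet {x : ℂ × ℂ | ‖(x.2 - x.1) / (1 - cj x.2 * x.1)‖ < r} :=
    measurableSet_lt (by fun_prop) measurable_const
  exact h1.inter h2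

/-- On a small disk about `w` all the quantities `1 - |ζ|²` and `|1 - z \bar ζ|` are comparable to
their values at `ζ = w`. -/
lemma near {z w ζ : ℂ} (hz : z ∈ ball (0 : ℂ) 1) (hw : w ∈ ball (0 : ℂ) 1) {ρ : ℝ}
    (hρ : ρ ≤ 1 / 2) (h : ‖ζ - w‖ < ρ * (1 - ‖w‖)) :
    ζ ∈ ball (0 : ℂ) 1 ∧ 1 - ‖ζ‖ ^ 2 ≤ 4 * (1 - ‖w‖ ^ 2) ∧ ‖1 - z * cj ζ‖ ≤ 2 * ‖1 - z * cj w‖ ∧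
      w ∈ pD ζ ρ := by
  have hw' := mem_ball_zero_iff.1 hw
  have hw0 := norm_nonneg w
  have hζ0 := norm_nonneg ζ
  have h1 : ‖ζ‖ - ‖w‖ ≤ ‖ζ - w‖ := norm_sub_norm_le ζ w
  have h2 : ‖w‖ - ‖ζ‖ ≤ ‖ζ - w‖ := by rw [norm_sub_rev]; exact norm_sub_norm_le w ζ
  have h3 : ρ * (1 - ‖w‖) ≤ 1 / 2 * (1 - ‖w‖) := by gcongr
  have hζ : ‖ζ‖ < 1 := by linarith
  have hζb : ζ ∈ ball (0 : ℂ) 1 := mem_ball_zero_iff.2 hζ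
  refine ⟨hζb, by nlinarith, ?_, hw, ?_⟩
  · have h4 : 1 - ‖w‖ ≤ ‖1 - z * cj w‖ := by rw [kn_symm]; exact kn_lower hz
    have h5 : ‖z * cj (w - ζ)‖ ≤ ‖ζ - w‖ := by
      rw [norm_mul, RCLike.norm_conj, norm_sub_rev]
      exact mul_le_of_le_one_left (norm_nonneg _) (mem_ball_zero_iff.1 hz).le
    have h6 : 1 - z * cj ζ = (1 - z * cj w) + z * cj (w - ζ) := by rw [map_sub]; ring
    rw [h6]
    refine (norm_add_le _ _).trans ?_
    linarith
  · have h4 : 1 - ‖w‖ ≤ ‖1 - cj ζ * w‖ := by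
      rw [mul_comm]; exact kn_lower hζb
    have h5 : 0 < ‖1 - cj ζ * w‖ := by linarith
    have hρ0 : 0 < ρ := by
      by_contra hn
      have := norm_nonneg (ζ - w)
      nlinarith
    rw [norm_div, div_lt_iff₀ h5]
    refine h.trans_le ?_
    gcongr

/-- The Carleson measure `dμ(w)` may be replaced by `(1 - |ζ|²)^{s-2}` times area measure. The
integrand at `w` is dominated by its average over a disk of radius comparable to `1 - |w|` about `w`
(see `near`), that disk lies in a pseudohyperbolic disk, and the order of integration is exchanged. -/
lemma carl_avg {μ : Measure ℂ} [IsFiniteMeasure μ] {s : ℝ} (hμ : Carl μ s) (δ q : ℝ) (hδ : 0 ≤ δ)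
    (hq : 0 ≤ q) : ∃ C, 0 ≤ C ∧ ∀ z ∈ ball (0 : ℂ) 1,
      ∫⁻ w in ball (0 : ℂ) 1, ENNReal.ofReal ((1 - ‖w‖ ^ 2) ^ (-δ) * ‖1 - z * cj w‖ ^ (-q)) ∂μ ≤
        ENNReal.ofReal C * ∫⁻ ζ in ball (0 : ℂ) 1,
          ENNReal.ofReal ((1 - ‖ζ‖ ^ 2) ^ (s - 2 - δ) * ‖1 - z * cj ζ‖ ^ (-q)) := by
  obtain ⟨r, ⟨hr0, hr1⟩, C₀, hC₀⟩ := hμ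
  set ρ : ℝ := r / 2 with hρ
  set c : ℝ := Real.pi * ρ ^ 2 / 4 with hc
  have hc0 : 0 < c := by have := Real.pi_pos; positivity
  set C₁ : ℝ := 4 ^ (δ + 2) * 2 ^ q with hC₁
  have hC₁0 : 0 < C₁ := by positivity
  refine ⟨C₁ / c * max C₀ 0, by positivity, fun z hz => ?_⟩
  have hcj : Measurable (fun z : ℂ => cj z) := continuous_conj.measurable
  set K : ℂ → ℝ≥0∞ := fun ζ =>
    ENNReal.ofReal (C₁ / c * ((1 - ‖ζ‖ ^ 2) ^ (-δ - 2) * ‖1 - z * cj ζ‖ ^ (-q))) with hK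
  have hKm : Measurable K := by simp only [hK]; fun_prop
  set F : ℂ → ℂ → ℝ≥0∞ := fun w ζ => (pD ζ r).indicator (fun _ => K ζ) w with hF
  have hFm : Measurable (Function.uncurry F) := by
    have : Function.uncurry F = {x : ℂ × ℂ | x.1 ∈ pD x.2 r}.indicator (fun x => K x.2) := by
      ext ⟨w, ζ⟩
      rfl
    rw [this]
    exact (hKm.comp measurable_snd).indicator (measurableSet_pD r)
  have hpt : ∀ w ∈ ball (0 : ℂ) 1,
      ENNReal.ofReal ((1 - ‖w‖ ^ 2) ^ (-δ) * ‖1 - z * cj w‖ ^ (-q)) ≤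
        ∫⁻ ζ in ball (0 : ℂ) 1, F w ζ := by
    intro w hw
    have hw1 := one_sub_sq_pos hw
    have hw' := mem_ball_zero_iff.1 hw
    have hk := kn_pos hz hw
    have hR : 0 < ρ * (1 - ‖w‖) := mul_pos (by positivity) (by linarith)
    have hnear : ∀ ζ ∈ ball w (ρ * (1 - ‖w‖)), ζ ∈ ball (0 : ℂ) 1 ∧
        1 - ‖ζ‖ ^ 2 ≤ 4 * (1 - ‖w‖ ^ 2) ∧ ‖1 - z * cj ζ‖ ≤ 2 * ‖1 - z * cj w‖ ∧ w ∈ pD ζ ρ :=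
      fun ζ hζ => near hz hw (by linarith) (by rwa [mem_ball, dist_eq_norm] at hζ)
    have hvol : ENNReal.ofReal (c * (1 - ‖w‖ ^ 2) ^ (2 : ℕ)) ≤ volume (ball w (ρ * (1 - ‖w‖))) := by
      rw [Complex.volume_ball, ← ENNReal.ofReal_pow hR.le,
        show (NNReal.pi : ℝ≥0∞) = ENNReal.ofReal Real.pi by
          rw [ENNReal.ofReal, ← NNReal.coe_real_pi, Real.toNNReal_coe],
        ← ENNReal.ofReal_mul (by positivity)]
      apply ENNReal.ofReal_le_ofReal
      have h1 : 1 - ‖w‖ ^ 2 ≤ 2 * (1 - ‖w‖) := by nlinarith [norm_nonneg w]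
      have h2 : (1 - ‖w‖ ^ 2) ^ 2 ≤ (2 * (1 - ‖w‖)) ^ 2 := by gcongr
      calc c * (1 - ‖w‖ ^ 2) ^ 2 ≤ c * (2 * (1 - ‖w‖)) ^ 2 := by gcongr
        _ = _ := by rw [hc]; ring
    set X : ℝ := (1 - ‖w‖ ^ 2) ^ (-δ - 2) * ‖1 - z * cj w‖ ^ (-q) / c with hX
    have hXK : ∀ ζ ∈ ball w (ρ * (1 - ‖w‖)), ENNReal.ofReal X ≤ F w ζ := by
      intro ζ hζ
      obtain ⟨h1, h2, h3, h4⟩ := hnear ζ hζ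
      have hζ1 := one_sub_sq_pos h1
      have hkζ := kn_pos hz h1
      have h5 : w ∈ pD ζ r := ⟨h4.1, h4.2.trans (by linarith)⟩
      simp only [hF]
      rw [indicator_of_mem h5]
      apply ENNReal.ofReal_le_ofReal
      have e1 : (1 - ‖w‖ ^ 2) ^ (-δ - 2) ≤ 4 ^ (δ + 2) * (1 - ‖ζ‖ ^ 2) ^ (-δ - 2) := by
        have : (1 - ‖w‖ ^ 2) ^ (-δ - 2) ≤ ((1 - ‖ζ‖ ^ 2) / 4) ^ (-δ - 2) :=
          Real.rpow_le_rpow_of_nonpos (by positivity) (by linarith) (by linarith)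
        rw [show -δ - 2 = -(δ + 2) by ring] at this ⊢
        rw [Real.div_rpow hζ1.le (by norm_num),
          Real.rpow_neg (by norm_num : (0 : ℝ) ≤ 4), div_inv_eq_mul] at this
        linarith
      have e2 : ‖1 - z * cj w‖ ^ (-q) ≤ 2 ^ q * ‖1 - z * cj ζ‖ ^ (-q) := by
        have : ‖1 - z * cj w‖ ^ (-q) ≤ (‖1 - z * cj ζ‖ / 2) ^ (-q) :=
          Real.rpow_le_rpow_of_nonpos (by positivity) (by linarith) (by linarith)
        rw [Real.div_rpow hkζ.le (by norm_num),
          Real.rpow_neg (by norm_num : (0 : ℝ) ≤ 2), div_inv_eq_mul] at this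
        linarith
      calc X ≤ (4 ^ (δ + 2) * (1 - ‖ζ‖ ^ 2) ^ (-δ - 2)) * (2 ^ q * ‖1 - z * cj ζ‖ ^ (-q)) / c := by
            rw [hX]; gcongr
        _ = _ := by rw [hC₁]; ring
    calc ENNReal.ofReal ((1 - ‖w‖ ^ 2) ^ (-δ) * ‖1 - z * cj w‖ ^ (-q))
        = ENNReal.ofReal X * ENNReal.ofReal (c * (1 - ‖w‖ ^ 2) ^ (2 : ℕ)) := by
          rw [← ENNReal.ofReal_mul (by positivity), hX]
          congr 1
          rw [show -δ = -δ - 2 + (2 : ℕ) by push_cast; ring, Real.rpow_add_natCast hw1.ne']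
          push_cast
          rw [show -δ - 2 + 2 - 2 = -δ - 2 by ring]
          field_simp
      _ ≤ ENNReal.ofReal X * volume (ball w (ρ * (1 - ‖w‖))) := by gcongr
      _ = ∫⁻ _ in ball w (ρ * (1 - ‖w‖)), ENNReal.ofReal X := by rw [setLIntegral_const]
      _ ≤ ∫⁻ ζ in ball w (ρ * (1 - ‖w‖)), F w ζ := setLIntegral_mono' measurableSet_ball hXK
      _ ≤ ∫⁻ ζ in ball (0 : ℂ) 1, F w ζ := lintegral_mono_set fun ζ hζ => (hnear ζ hζ).1
  calc _ ≤ ∫⁻ w in ball (0 : ℂ) 1, ∫⁻ ζ in ball (0 : ℂ) 1, F w ζ ∂volume ∂μ :=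
        setLIntegral_mono' measurableSet_ball hpt
    _ = ∫⁻ ζ in ball (0 : ℂ) 1, ∫⁻ w in ball (0 : ℂ) 1, F w ζ ∂μ :=
        lintegral_lintegral_swap hFm.aemeasurable
    _ ≤ ∫⁻ ζ in ball (0 : ℂ) 1, ENNReal.ofReal (C₁ / c * max C₀ 0) *
          ENNReal.ofReal ((1 - ‖ζ‖ ^ 2) ^ (s - 2 - δ) * ‖1 - z * cj ζ‖ ^ (-q)) := by
        refine setLIntegral_mono' measurableSet_ball fun ζ hζ => ?_
        have hζ1 := one_sub_sq_pos hζ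
        have hpm : MeasurableSet (pD ζ r) := by
          have : Measurable (fun w : ℂ => (w, ζ)) := by fun_prop
          exact this (measurableSet_pD r)
        calc ∫⁻ w in ball (0 : ℂ) 1, F w ζ ∂μ ≤ ∫⁻ w, F w ζ ∂μ := setLIntegral_le_lintegral _ _
          _ = K ζ * μ (pD ζ r) := by
            simp only [hF]
            rw [lintegral_indicator hpm, setLIntegral_const]
          _ ≤ K ζ * ENNReal.ofReal (max C₀ 0 * (1 - ‖ζ‖ ^ 2) ^ s) := by
            gcongr
            refine (hC₀ ζ hζ).trans (ENNReal.ofReal_le_ofReal ?_)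
            gcongr
            exact le_max_left _ _
          _ = _ := by
            simp only [hK]
            rw [← ENNReal.ofReal_mul (by positivity), ← ENNReal.ofReal_mul (by positivity)]
            congr 1
            rw [show s - 2 - δ = (-δ - 2) + s by ring, Real.rpow_add hζ1]
            ring
    _ = _ := by
        rw [lintegral_const_mul]
        fun_prop

/-- The Forelli–Rudin estimate for a Carleson measure. -/
lemma carl_int {μ : Measure ℂ} [IsFiniteMeasure μ] {s : ℝ} (hμ : Carl μ s) (δ ε : ℝ) (hδ : 0 ≤ δ)
    (hδs : δ < s - 1) (hε : 0 < ε) : ∃ C, 0 ≤ C ∧ ∀ z ∈ ball (0 : ℂ) 1,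
      ∫⁻ w in ball (0 : ℂ) 1,
        ENNReal.ofReal ((1 - ‖w‖ ^ 2) ^ (-δ) * ‖1 - z * cj w‖ ^ (-(s - δ + ε))) ∂μ ≤
        ENNReal.ofReal (C * (1 - ‖z‖ ^ 2) ^ (-ε)) := by
  obtain ⟨C, hC, h⟩ := carl_avg hμ δ (s - δ + ε) hδ (by linarith)
  obtain ⟨C', hC', h'⟩ := FR_pos (s - 2 - δ) ε (by linarith) hε
  refine ⟨C * C', by positivity, fun z hz => (h z hz).trans ?_⟩
  rw [mul_assoc, ENNReal.ofReal_mul hC]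
  gcongr
  refine le_trans (le_of_eq ?_) (h' z hz)
  congr 1
  ext ζ
  rw [kn_symm, show 2 + (s - 2 - δ) + ε = s - δ + ε by ring]

/-! ### The derivative of the symbol -/

lemma integrableOn_bdd {μ : Measure ℂ} [IsFiniteMeasure μ] {f : ℂ → ℂ} (hf : Measurable f) (B : ℝ)
    (hB : ∀ w ∈ ball (0 : ℂ) 1, ‖f w‖ ≤ B) : IntegrableOn f (ball (0 : ℂ) 1) μ :=
  Measure.integrableOn_of_bounded (M := B) (measure_ne_top μ _) hf.aestronglyMeasurable (by
    filter_upwards [ae_restrict_mem measurableSet_ball] with w hw using hB w hw)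

lemma norm_bker_le {z w : ℂ} (hz : z ∈ ball (0 : ℂ) 1) (hw : w ∈ ball (0 : ℂ) 1) {t : ℝ}
    (ht : 0 ≤ t) : ‖bker t z w‖ ≤ (1 - ‖z‖) ^ (-t) := by
  rw [norm_bker hz hw]
  exact kn_rpow_le_fixed hz hw ht

lemma bker_integrable (μ : Measure ℂ) [IsFiniteMeasure μ] {z : ℂ} (hz : z ∈ ball (0 : ℂ) 1) {t : ℝ}
    (ht : 0 ≤ t) : IntegrableOn (fun w => bker t z w) (ball (0 : ℂ) 1) μ :=
  integrableOn_bdd (measurable_bker_right t z) _ fun _ hw => norm_bker_le hz hw ht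

lemma conj_bker_integrable (μ : Measure ℂ) [IsFiniteMeasure μ] {z : ℂ} (hz : z ∈ ball (0 : ℂ) 1)
    {t : ℝ} (ht : 0 ≤ t) : IntegrableOn (fun w => cj w * bker t z w) (ball (0 : ℂ) 1) μ := by
  have hcj : Measurable (fun z : ℂ => cj z) := continuous_conj.measurable
  refine integrableOn_bdd (hcj.mul (measurable_bker_right t z)) ((1 - ‖z‖) ^ (-t)) fun w hw => ?_
  rw [norm_mul, RCLike.norm_conj]
  exact (mul_le_of_le_one_left (norm_nonneg _) (mem_ball_zero_iff.1 hw).le).trans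
    (norm_bker_le hz hw ht)

lemma Toep_eq (μ : Measure ℂ) (b : ℝ) (f : ℂ → ℂ) (z : ℂ) :
    Toep μ b f z = ∫ w in ball (0 : ℂ) 1, f w * bker (2 + b) z w ∂μ := by
  unfold Toep
  congr 1
  ext w
  rw [← one_div_kn, mul_one_div]

lemma hasDerivAt_Toep (μ : Measure ℂ) [IsFiniteMeasure μ] {s : ℝ} (hs : 0 < s) {z : ℂ}
    (hz : z ∈ ball (0 : ℂ) 1) : HasDerivAt (Toep μ (s - 2) fun _ => 1)
      (s * ∫ w in ball (0 : ℂ) 1, cj w * bker (s + 1) z w ∂μ) z := by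
  have hz' := mem_ball_zero_iff.1 hz
  have hcj : Measurable (fun z : ℂ => cj z) := continuous_conj.measurable
  have e : (Toep μ (s - 2) fun _ => 1) = fun z => ∫ w in ball (0 : ℂ) 1, bker s z w ∂μ := by
    ext z
    rw [Toep_eq]
    simp
  rw [e, ← integral_const_mul]
  set R : ℝ := (1 - ‖z‖) / 2 with hR
  have hR0 : 0 < R := by rw [hR]; linarith
  have hin : ∀ x ∈ ball z R, x ∈ ball (0 : ℂ) 1 ∧ R ≤ 1 - ‖x‖ := by
    intro x hx
    rw [mem_ball, dist_eq_norm] at hx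
    have := norm_sub_norm_le x z
    have h2 : ‖x‖ < 1 := by linarith
    exact ⟨mem_ball_zero_iff.2 h2, by linarith⟩
  refine (hasDerivAt_integral_of_dominated_loc_of_deriv_le
    (F := fun z w => bker s z w) (F' := fun z w => s * (cj w * bker (s + 1) z w))
    (bound := fun _ => s * R ^ (-(s + 1))) (ball_mem_nhds z hR0) ?_ ?_ ?_ ?_ ?_ ?_).2
  · exact Eventually.of_forall fun x => (measurable_bker_right s x).aestronglyMeasurable
  · exact bker_integrable μ hz hs.le
  · exact Measurable.aestronglyMeasurable
      (measurable_const.mul (hcj.mul (measurable_bker_right (s + 1) z)))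
  · filter_upwards [ae_restrict_mem measurableSet_ball] with w hw x hx
    obtain ⟨hxb, hxR⟩ := hin x hx
    rw [norm_mul, norm_mul, norm_real, Real.norm_of_nonneg hs.le, RCLike.norm_conj]
    gcongr
    refine (mul_le_of_le_one_left (norm_nonneg _) (mem_ball_zero_iff.1 hw).le).trans ?_
    refine (norm_bker_le hxb hw (by linarith)).trans ?_
    exact Real.rpow_le_rpow_of_nonpos hR0 hxR (by linarith)
  · exact integrable_const _
  · filter_upwards [ae_restrict_mem measurableSet_ball] with w hw x hx
    obtain ⟨hxb, -⟩ := hin x hx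
    have h1 : HasDerivAt (fun x : ℂ => 1 - x * cj w) (-cj w) x := by
      simpa using ((hasDerivAt_id' x).mul_const (cj w)).const_sub 1
    refine (h1.cpow_const (c := (((-s : ℝ)) : ℂ)) (Or.inl (kn_re_pos hxb hw))).congr_deriv ?_
    rw [bker, show (((-s : ℝ)) : ℂ) - 1 = (((-(s + 1) : ℝ)) : ℂ) by push_cast; ring]
    push_cast
    ring

lemma log_pos_of_mem {z : ℂ} (hz : z ∈ ball (0 : ℂ) 1) : 0 < Real.log (2 / (1 - ‖z‖ ^ 2)) :=
  (Real.log_pos one_lt_two).trans_le (log_lower hz)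

lemma sqrt_mul_log_le {x : ℝ} (hx : 0 < x) : x ^ (1 / 2 : ℝ) * Real.log (2 / x) ≤ 4 := by
  have h1 := Real.log_le_rpow_div (x := 2 / x) (by positivity) (ε := 1 / 2) (by norm_num)
  have h2 : (2 : ℝ) ^ (1 / 2 : ℝ) ≤ 2 := by
    calc (2 : ℝ) ^ (1 / 2 : ℝ) ≤ 2 ^ (1 : ℝ) := by gcongr <;> norm_num
      _ = 2 := Real.rpow_one 2
  have h3 : 0 < x ^ (1 / 2 : ℝ) := by positivity
  calc x ^ (1 / 2 : ℝ) * Real.log (2 / x) ≤ x ^ (1 / 2 : ℝ) * ((2 / x) ^ (1 / 2 : ℝ) / (1 / 2)) := by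
        gcongr
    _ = 2 * 2 ^ (1 / 2 : ℝ) := by
        rw [Real.div_rpow two_pos.le hx.le]
        field_simp
    _ ≤ 4 := by linarith

/-- Passing from `s - δ + ε` to the smaller exponent `q` only costs a constant. -/
lemma carl_int_of_le {μ : Measure ℂ} [IsFiniteMeasure μ] {s : ℝ} (hμ : Carl μ s) (δ ε q : ℝ)
    (hδ : 0 ≤ δ) (hδs : δ < s - 1) (hε : 0 < ε) (hq : q ≤ s - δ + ε) :
    ∃ C, 0 ≤ C ∧ ∀ z ∈ ball (0 : ℂ) 1,
      ∫⁻ w in ball (0 : ℂ) 1,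
        ENNReal.ofReal ((1 - ‖w‖ ^ 2) ^ (-δ) * ‖1 - z * cj w‖ ^ (-q)) ∂μ ≤
        ENNReal.ofReal (C * (1 - ‖z‖ ^ 2) ^ (-ε)) := by
  obtain ⟨C, hC, h⟩ := carl_int hμ δ ε hδ hδs hε
  refine ⟨2 ^ (s - δ + ε - q) * C, by positivity, fun z hz => ?_⟩
  calc _ ≤ ∫⁻ w in ball (0 : ℂ) 1, ENNReal.ofReal (2 ^ (s - δ + ε - q)) *
        ENNReal.ofReal ((1 - ‖w‖ ^ 2) ^ (-δ) * ‖1 - z * cj w‖ ^ (-(s - δ + ε))) ∂μ := by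
        refine setLIntegral_mono' measurableSet_ball fun w hw => ?_
        have hw1 := one_sub_sq_pos hw
        rw [← ENNReal.ofReal_mul (by positivity)]
        apply ENNReal.ofReal_le_ofReal
        have := kn_rpow_le hz hw hq
        calc _ ≤ (1 - ‖w‖ ^ 2) ^ (-δ) *
              (2 ^ (s - δ + ε - q) * ‖1 - z * cj w‖ ^ (-(s - δ + ε))) := by gcongr
          _ = _ := by ring
    _ = ENNReal.ofReal (2 ^ (s - δ + ε - q)) * ∫⁻ w in ball (0 : ℂ) 1,
        ENNReal.ofReal ((1 - ‖w‖ ^ 2) ^ (-δ) * ‖1 - z * cj w‖ ^ (-(s - δ + ε))) ∂μ := by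
        have hcj : Measurable (fun z : ℂ => cj z) := continuous_conj.measurable
        rw [lintegral_const_mul]
        fun_prop
    _ ≤ ENNReal.ofReal (2 ^ (s - δ + ε - q)) * ENNReal.ofReal (C * (1 - ‖z‖ ^ 2) ^ (-ε)) := by
        gcongr
        exact h z hz
    _ = _ := by rw [← ENNReal.ofReal_mul (by positivity), mul_assoc]

lemma norm_integral_le_of_lintegral {μ : Measure ℂ} {f : ℂ → ℂ} {g : ℂ → ℝ} {C : ℝ} (hC : 0 ≤ C)
    (hfg : ∀ w ∈ ball (0 : ℂ) 1, ‖f w‖ ≤ g w)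
    (h : ∫⁻ w in ball (0 : ℂ) 1, ENNReal.ofReal (g w) ∂μ ≤ ENNReal.ofReal C) :
    ‖∫ w in ball (0 : ℂ) 1, f w ∂μ‖ ≤ C := by
  rw [← ENNReal.ofReal_le_ofReal_iff hC, ofReal_norm]
  refine (enorm_integral_le_lintegral_enorm _).trans (le_trans ?_ h)
  refine setLIntegral_mono' measurableSet_ball fun w hw => ?_
  rw [← ofReal_norm]
  exact ENNReal.ofReal_le_ofReal (hfg w hw)

/-- The logarithmic Bloch condition controls `∫ (1 - z \bar w)^{-(s+1)} dμ(w)`. -/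
lemma log_control {μ : Measure ℂ} [IsFiniteMeasure μ] {s : ℝ} (hs : 1 < s) (hμ : Carl μ s)
    {M : ℝ} (hM : ∀ z ∈ ball (0 : ℂ) 1, (1 - ‖z‖ ^ 2) * Real.log (2 / (1 - ‖z‖ ^ 2)) *
      ‖deriv (Toep μ (s - 2) fun _ => 1) z‖ ≤ M) :
    ∃ C, 0 ≤ C ∧ ∀ z ∈ ball (0 : ℂ) 1, (1 - ‖z‖ ^ 2) * Real.log (2 / (1 - ‖z‖ ^ 2)) *
      ‖∫ w in ball (0 : ℂ) 1, bker (s + 1) w z ∂μ‖ ≤ C := by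
  obtain ⟨C, hC, h⟩ := carl_int_of_le hμ 0 (1 / 2) s le_rfl (by linarith) (by norm_num)
    (by linarith)
  have hM0 : 0 ≤ M := by
    refine le_trans ?_ (hM 0 (by simp))
    have := log_pos_of_mem (z := 0) (by simp)
    simp only [norm_zero] at *
    norm_num at *
    positivity
  refine ⟨M / s + C * 4, by positivity, fun z hz => ?_⟩
  have hz1 := one_sub_sq_pos hz
  have hl := log_pos_of_mem hz
  set J : ℂ := ∫ w in ball (0 : ℂ) 1, cj w * bker (s + 1) z w ∂μ with hJ
  have h1 : ‖∫ w in ball (0 : ℂ) 1, bker (s + 1) w z ∂μ‖ =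
      ‖∫ w in ball (0 : ℂ) 1, bker (s + 1) z w ∂μ‖ := by
    rw [← RCLike.norm_conj, ← integral_conj]
    congr 1
    exact setIntegral_congr_fun measurableSet_ball fun w hw => conj_bker hw hz _
  have h2 : ∫ w in ball (0 : ℂ) 1, bker (s + 1) z w ∂μ =
      z * J + ∫ w in ball (0 : ℂ) 1, bker s z w ∂μ := by
    rw [hJ, ← integral_const_mul, ← integral_add
      ((conj_bker_integrable μ hz (by linarith)).const_mul z) (bker_integrable μ hz (by linarith))]
    refine setIntegral_congr_fun measurableSet_ball fun w hw => ?_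
    show bker (s + 1) z w = z * (cj w * bker (s + 1) z w) + bker s z w
    have h3 : bker s z w = bker (s + 1) z w * (1 - z * cj w) := by
      rw [bker, bker, show (((-s : ℝ)) : ℂ) = (((-(s + 1) : ℝ)) : ℂ) + 1 by push_cast; ring,
        Complex.cpow_add _ _ (kn_ne_zero hz hw), cpow_one]
    rw [h3]
    ring
  have h3 : ‖∫ w in ball (0 : ℂ) 1, bker s z w ∂μ‖ ≤ C * (1 - ‖z‖ ^ 2) ^ (-(1 / 2) : ℝ) := by
    refine norm_integral_le_of_lintegral (by positivity) (fun w hw => ?_) (h z hz)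
    rw [norm_bker hz hw, neg_zero, Real.rpow_zero, one_mul]
  have h4 := hM z hz
  rw [(hasDerivAt_Toep μ (by linarith) hz).deriv, norm_mul, norm_real,
    Real.norm_of_nonneg (by linarith), ← hJ] at h4
  have h5 : (1 - ‖z‖ ^ 2) * Real.log (2 / (1 - ‖z‖ ^ 2)) * ‖J‖ ≤ M / s := by
    rw [le_div_iff₀ (by linarith)]
    linarith
  have h6 : ‖z * J + ∫ w in ball (0 : ℂ) 1, bker s z w ∂μ‖ ≤
      ‖J‖ + C * (1 - ‖z‖ ^ 2) ^ (-(1 / 2) : ℝ) := by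
    refine (norm_add_le _ _).trans (add_le_add ?_ h3)
    rw [norm_mul]
    exact mul_le_of_le_one_left (norm_nonneg _) (mem_ball_zero_iff.1 hz).le
  have h7 : (1 - ‖z‖ ^ 2) * (1 - ‖z‖ ^ 2) ^ (-(1 / 2) : ℝ) = (1 - ‖z‖ ^ 2) ^ (1 / 2 : ℝ) := by
    rw [mul_comm, ← Real.rpow_add_one hz1.ne']
    norm_num
  rw [h1, h2]
  calc _ ≤ (1 - ‖z‖ ^ 2) * Real.log (2 / (1 - ‖z‖ ^ 2)) *
        (‖J‖ + C * (1 - ‖z‖ ^ 2) ^ (-(1 / 2) : ℝ)) := by gcongr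
    _ = (1 - ‖z‖ ^ 2) * Real.log (2 / (1 - ‖z‖ ^ 2)) * ‖J‖ +
        C * ((1 - ‖z‖ ^ 2) ^ (1 / 2 : ℝ) * Real.log (2 / (1 - ‖z‖ ^ 2))) := by
        rw [← h7]; ring
    _ ≤ M / s + C * 4 := by
        gcongr
        exact sqrt_mul_log_le hz1

/-! ### Sufficiency -/

lemma measurable_conj : Measurable (fun z : ℂ => cj z) := continuous_conj.measurable

lemma fubini {μ ν : Measure ℂ} [SFinite μ] [SFinite ν] {f : ℂ → ℂ → ℂ}
    (hf : Measurable (Function.uncurry f)) (h : ∫⁻ u, ∫⁻ w, ‖f w u‖ₑ ∂μ ∂ν ≠ ⊤) :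
    ∫ w, ∫ u, f w u ∂ν ∂μ = ∫ u, ∫ w, f w u ∂μ ∂ν := by
  refine integral_integral_swap ⟨hf.aestronglyMeasurable, ?_⟩
  rw [hasFiniteIntegral_def, lintegral_prod_symm _ hf.enorm.aemeasurable]
  exact h.lt_top

lemma FR_two (b δ : ℝ) (hb : -1 < b) (hδ : 0 < δ) : ∃ C, 0 ≤ C ∧
    ∀ w ∈ ball (0 : ℂ) 1, ∀ u ∈ ball (0 : ℂ) 1, ∫⁻ z in ball (0 : ℂ) 1,
      ENNReal.ofReal ((1 - ‖z‖ ^ 2) ^ b *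
        (‖1 - z * cj w‖ ^ (-(2 + b + δ)) + ‖1 - z * cj u‖ ^ (-(2 + b + δ)))) ≤
      ENNReal.ofReal (C * ((1 - ‖w‖ ^ 2) ^ (-δ) + (1 - ‖u‖ ^ 2) ^ (-δ))) := by
  obtain ⟨C, hC, h⟩ := FR_pos b δ hb hδ
  have hcj := measurable_conj
  refine ⟨C, hC, fun w hw u hu => ?_⟩
  have hw1 := one_sub_sq_pos hw
  have hu1 := one_sub_sq_pos hu
  rw [mul_add, ENNReal.ofReal_add (by positivity) (by positivity)]
  refine le_trans (le_of_eq ?_) (add_le_add (h w hw) (h u hu))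
  rw [← lintegral_add_left (by fun_prop)]
  refine setLIntegral_congr_fun measurableSet_ball fun z hz => ?_
  have hz1 := one_sub_sq_pos hz
  rw [mul_add, ENNReal.ofReal_add (by positivity) (by positivity)]

/-- Estimate for the error made when `(1 - z w̄)^{-(2+b)}` is replaced by `(1 - z ū)^{-(2+b)}`, in the
form provided by `bker_diff`. -/
lemma diff_int {μ : Measure ℂ} [IsFiniteMeasure μ] {s : ℝ} (hμ : Carl μ s) (b δ : ℝ) (hb : -1 < b)
    (hδ : 0 < δ) (hδ1 : δ < 1) (hδs : δ < s - 1) : ∃ C, 0 ≤ C ∧ ∀ u ∈ ball (0 : ℂ) 1,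
      ∫⁻ z in ball (0 : ℂ) 1, ∫⁻ w in ball (0 : ℂ) 1, ENNReal.ofReal (‖1 - w * cj u‖ ^ (-(s + 1 - δ)) *
        ((1 - ‖z‖ ^ 2) ^ b *
          (‖1 - z * cj w‖ ^ (-(2 + b + δ)) + ‖1 - z * cj u‖ ^ (-(2 + b + δ))))) ∂μ ≤
      ENNReal.ofReal (C * (1 - ‖u‖ ^ 2) ^ (-1 : ℝ)) := by
  obtain ⟨C₁, hC₁, h₁⟩ := FR_two b δ hb hδ
  obtain ⟨C₂, hC₂, h₂⟩ := carl_int hμ δ 1 hδ.le hδs one_pos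
  obtain ⟨C₃, hC₃, h₃⟩ := carl_int hμ 0 (1 - δ) le_rfl (by linarith) (by linarith)
  have hcj := measurable_conj
  refine ⟨C₁ * (C₂ + C₃), by positivity, fun u hu => ?_⟩
  have hu1 := one_sub_sq_pos hu
  rw [lintegral_lintegral_swap (Measurable.aemeasurable (by
    unfold Function.uncurry
    fun_prop))]
  calc _ ≤ ∫⁻ w in ball (0 : ℂ) 1, ENNReal.ofReal C₁ * (ENNReal.ofReal ((1 - ‖w‖ ^ 2) ^ (-δ) *
        ‖1 - u * cj w‖ ^ (-(s - δ + 1))) + ENNReal.ofReal ((1 - ‖u‖ ^ 2) ^ (-δ)) *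
          ENNReal.ofReal ((1 - ‖w‖ ^ 2) ^ (-0 : ℝ) * ‖1 - u * cj w‖ ^ (-(s - 0 + (1 - δ))))) ∂μ := by
        refine setLIntegral_mono' measurableSet_ball fun w hw => ?_
        have hw1 := one_sub_sq_pos hw
        have hk := kn_pos hw hu
        calc _ = ENNReal.ofReal (‖1 - w * cj u‖ ^ (-(s + 1 - δ))) * ∫⁻ z in ball (0 : ℂ) 1,
              ENNReal.ofReal ((1 - ‖z‖ ^ 2) ^ b *
              (‖1 - z * cj w‖ ^ (-(2 + b + δ)) + ‖1 - z * cj u‖ ^ (-(2 + b + δ)))) := by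
              rw [← lintegral_const_mul _ (by fun_prop)]
              congr 1
              ext z
              rw [ENNReal.ofReal_mul (by positivity)]
          _ ≤ ENNReal.ofReal (‖1 - w * cj u‖ ^ (-(s + 1 - δ))) *
              ENNReal.ofReal (C₁ * ((1 - ‖w‖ ^ 2) ^ (-δ) + (1 - ‖u‖ ^ 2) ^ (-δ))) := by
              gcongr
              exact h₁ w hw u hu
          _ = _ := by
              rw [← ENNReal.ofReal_mul (by positivity), ← ENNReal.ofReal_mul (by positivity),
                ← ENNReal.ofReal_add (by positivity) (by positivity),
                ← ENNReal.ofReal_mul (by positivity)]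
              congr 1
              rw [kn_symm u w, neg_zero, Real.rpow_zero, show s - δ + 1 = s + 1 - δ by ring,
                show s - 0 + (1 - δ) = s + 1 - δ by ring]
              ring
    _ = ENNReal.ofReal C₁ * (∫⁻ w in ball (0 : ℂ) 1, ENNReal.ofReal ((1 - ‖w‖ ^ 2) ^ (-δ) *
        ‖1 - u * cj w‖ ^ (-(s - δ + 1))) ∂μ + ENNReal.ofReal ((1 - ‖u‖ ^ 2) ^ (-δ)) *
        ∫⁻ w in ball (0 : ℂ) 1,
          ENNReal.ofReal ((1 - ‖w‖ ^ 2) ^ (-0 : ℝ) * ‖1 - u * cj w‖ ^ (-(s - 0 + (1 - δ)))) ∂μ) := by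
        rw [lintegral_const_mul _ (by fun_prop), lintegral_add_left (by fun_prop),
          lintegral_const_mul _ (by fun_prop)]
    _ ≤ ENNReal.ofReal C₁ * (ENNReal.ofReal (C₂ * (1 - ‖u‖ ^ 2) ^ (-1 : ℝ)) +
        ENNReal.ofReal ((1 - ‖u‖ ^ 2) ^ (-δ)) *
          ENNReal.ofReal (C₃ * (1 - ‖u‖ ^ 2) ^ (-(1 - δ)))) := by
        gcongr
        · exact h₂ u hu
        · exact h₃ u hu
    _ = _ := by
        rw [← ENNReal.ofReal_mul (by positivity),
          ← ENNReal.ofReal_add (by positivity) (by positivity), ← ENNReal.ofReal_mul (by positivity)]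
        congr 1
        have : (1 - ‖u‖ ^ 2) ^ (-1 : ℝ) = (1 - ‖u‖ ^ 2) ^ (-δ) * (1 - ‖u‖ ^ 2) ^ (-(1 - δ)) := by
          rw [← Real.rpow_add hu1]; congr 1; ring
        rw [this]
        ring

/-- Pointwise bound for the kernel of `T_{μ,b}` relative to the reproducing formula. -/
lemma psi_bound {μ : Measure ℂ} [IsFiniteMeasure μ] {s b δ : ℝ} (hs : 1 < s) (hb : -1 < b)
    (hδ : 0 < δ) (hδ1 : δ < 1) {z u : ℂ} (hz : z ∈ ball (0 : ℂ) 1) (hu : u ∈ ball (0 : ℂ) 1) :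
    ‖∫ w in ball (0 : ℂ) 1, bker (s + 1) w u * bker (2 + b) z w ∂μ‖ₑ ≤
      ENNReal.ofReal (‖1 - z * cj u‖ ^ (-(2 + b)) *
        ‖∫ w in ball (0 : ℂ) 1, bker (s + 1) w u ∂μ‖) +
      ENNReal.ofReal (3 + (2 + b) * 2 ^ (2 + b + 1)) *
        ∫⁻ w in ball (0 : ℂ) 1, ENNReal.ofReal (‖1 - w * cj u‖ ^ (-(s + 1 - δ)) *
          (‖1 - z * cj w‖ ^ (-(2 + b + δ)) + ‖1 - z * cj u‖ ^ (-(2 + b + δ)))) ∂μ := by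
  have hcj := measurable_conj
  have hi : IntegrableOn (fun w => bker (s + 1) w u) (ball (0 : ℂ) 1) μ := by
    refine integrableOn_bdd (measurable_bker_left _ _) ((1 - ‖u‖) ^ (-(s + 1))) fun w hw => ?_
    rw [norm_bker hw hu, kn_symm]
    exact kn_rpow_le_fixed hu hw (by linarith)
  have hi2 : IntegrableOn (fun w => bker (s + 1) w u * bker (2 + b) z w) (ball (0 : ℂ) 1) μ := by
    refine integrableOn_bdd ((measurable_bker_left _ _).mul (measurable_bker_right _ _))
      ((1 - ‖u‖) ^ (-(s + 1)) * (1 - ‖z‖) ^ (-(2 + b))) fun w hw => ?_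
    rw [norm_mul, norm_bker hw hu, kn_symm]
    have h1 := kn_rpow_le_fixed hu hw (t := s + 1) (by linarith)
    have h2 := norm_bker_le hz hw (t := 2 + b) (by linarith)
    have := mem_ball_zero_iff.1 hu
    have h3 : 0 ≤ (1 - ‖u‖) ^ (-(s + 1)) := Real.rpow_nonneg (by linarith) _
    gcongr
  have h1 : ∫ w in ball (0 : ℂ) 1, bker (s + 1) w u * bker (2 + b) z w ∂μ =
      bker (2 + b) z u * (∫ w in ball (0 : ℂ) 1, bker (s + 1) w u ∂μ) +
      ∫ w in ball (0 : ℂ) 1, bker (s + 1) w u * (bker (2 + b) z w - bker (2 + b) z u) ∂μ := by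
    have hsub := integral_sub hi2 (hi.mul_const (bker (2 + b) z u))
    rw [integral_mul_const] at hsub
    simp_rw [mul_sub]
    rw [hsub]
    ring
  rw [h1]
  refine (enorm_add_le _ _).trans (add_le_add (le_of_eq ?_) ?_)
  · rw [← ofReal_norm, norm_mul, norm_bker hz hu]
  · refine (enorm_integral_le_lintegral_enorm _).trans ?_
    rw [← lintegral_const_mul _ (by fun_prop)]
    refine setLIntegral_mono' measurableSet_ball fun w hw => ?_
    have hk := kn_pos hw hu
    rw [← ofReal_norm, ← ENNReal.ofReal_mul (by
      have : 0 < 2 + b := by linarith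
      positivity)]
    apply ENNReal.ofReal_le_ofReal
    rw [norm_mul, norm_bker hw hu]
    have h2 := bker_diff (2 + b) δ (by linarith) hδ hδ1.le hz hw hu
    calc _ ≤ ‖1 - w * cj u‖ ^ (-(s + 1)) * ((3 + (2 + b) * 2 ^ (2 + b + 1)) *
          (‖1 - w * cj u‖ ^ δ *
          (‖1 - z * cj w‖ ^ (-(2 + b + δ)) + ‖1 - z * cj u‖ ^ (-(2 + b + δ))))) := by gcongr
      _ = _ := by
        rw [show -(s + 1 - δ) = -(s + 1) + δ by ring, Real.rpow_add hk]
        ring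

/-- The kernel `∫ (1 - w ū)^{-(s+1)} (1 - z w̄)^{-(2+b)} dμ(w)` of `T_{μ,b}` has weighted `L¹` norm in `z`
of order `(1 - |u|²)^{-1}`. The logarithm produced by `FR_log` is absorbed by `log_control`. -/
lemma psi_int {μ : Measure ℂ} [IsFiniteMeasure μ] {s b : ℝ} (hs : 1 < s) (hb : -1 < b)
    (hμ : Carl μ s) {M : ℝ} (hM : ∀ z ∈ ball (0 : ℂ) 1,
      (1 - ‖z‖ ^ 2) * Real.log (2 / (1 - ‖z‖ ^ 2)) *
      ‖deriv (Toep μ (s - 2) fun _ => 1) z‖ ≤ M) :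
    ∃ C, 0 ≤ C ∧ ∀ u ∈ ball (0 : ℂ) 1, ∫⁻ z in ball (0 : ℂ) 1, ENNReal.ofReal ((1 - ‖z‖ ^ 2) ^ b) *
      ‖∫ w in ball (0 : ℂ) 1, bker (s + 1) w u * bker (2 + b) z w ∂μ‖ₑ ≤
        ENNReal.ofReal (C * (1 - ‖u‖ ^ 2) ^ (-1 : ℝ)) := by
  have hcj := measurable_conj
  obtain ⟨δ, hδ, hδ1, hδs⟩ : ∃ δ : ℝ, 0 < δ ∧ δ < 1 ∧ δ < s - 1 :=
    ⟨min (1 / 2) ((s - 1) / 2), lt_min (by norm_num) (by linarith),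
      (min_le_left _ _).trans_lt (by norm_num), (min_le_right _ _).trans_lt (by linarith)⟩
  obtain ⟨C₁, hC₁, h₁⟩ := log_control hs hμ hM
  obtain ⟨C₂, hC₂, h₂⟩ := FR_log b hb
  obtain ⟨C₃, hC₃, h₃⟩ := diff_int hμ b δ hb hδ hδ1 hδs
  set κ : ℝ := 3 + (2 + b) * 2 ^ (2 + b + 1) with hκ
  have hκ0 : 0 ≤ κ := by
    have : 0 < 2 + b := by linarith
    positivity
  refine ⟨C₂ * C₁ + κ * C₃, by positivity, fun u hu => ?_⟩
  have hu1 := one_sub_sq_pos hu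
  set A : ℝ := ‖∫ w in ball (0 : ℂ) 1, bker (s + 1) w u ∂μ‖ with hA
  have hA0 : 0 ≤ A := norm_nonneg _
  calc _ ≤ ∫⁻ z in ball (0 : ℂ) 1, (ENNReal.ofReal A *
        ENNReal.ofReal ((1 - ‖z‖ ^ 2) ^ b * ‖1 - z * cj u‖ ^ (-(2 + b))) +
        ENNReal.ofReal κ * ∫⁻ w in ball (0 : ℂ) 1, ENNReal.ofReal (‖1 - w * cj u‖ ^ (-(s + 1 - δ)) *
        ((1 - ‖z‖ ^ 2) ^ b *
          (‖1 - z * cj w‖ ^ (-(2 + b + δ)) + ‖1 - z * cj u‖ ^ (-(2 + b + δ))))) ∂μ) := by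
        refine setLIntegral_mono' measurableSet_ball fun z hz => ?_
        have hz1 := one_sub_sq_pos hz
        refine (mul_le_mul_right (psi_bound hs hb hδ hδ1 hz hu) _).trans (le_of_eq ?_)
        rw [mul_add, mul_left_comm (ENNReal.ofReal ((1 - ‖z‖ ^ 2) ^ b)) (ENNReal.ofReal κ),
          ← lintegral_const_mul _ (by fun_prop)]
        congr 1
        · rw [← ENNReal.ofReal_mul (by positivity), ← ENNReal.ofReal_mul (by positivity)]
          congr 1
          ring
        · congr 1
          congr 1
          ext w
          rw [← ENNReal.ofReal_mul (by positivity)]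
          congr 1
          ring
    _ = (ENNReal.ofReal A * ∫⁻ z in ball (0 : ℂ) 1,
          ENNReal.ofReal ((1 - ‖z‖ ^ 2) ^ b * ‖1 - z * cj u‖ ^ (-(2 + b)))) +
        ENNReal.ofReal κ * ∫⁻ z in ball (0 : ℂ) 1, ∫⁻ w in ball (0 : ℂ) 1,
          ENNReal.ofReal (‖1 - w * cj u‖ ^ (-(s + 1 - δ)) * ((1 - ‖z‖ ^ 2) ^ b *
          (‖1 - z * cj w‖ ^ (-(2 + b + δ)) + ‖1 - z * cj u‖ ^ (-(2 + b + δ))))) ∂μ := by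
        rw [lintegral_add_left (by fun_prop), lintegral_const_mul _ (by fun_prop),
          lintegral_const_mul]
        exact Measurable.lintegral_prod_right' (ν := μ.restrict (ball (0 : ℂ) 1)) (f := fun x : ℂ × ℂ =>
          ENNReal.ofReal (‖1 - x.2 * cj u‖ ^ (-(s + 1 - δ)) * ((1 - ‖x.1‖ ^ 2) ^ b *
          (‖1 - x.1 * cj x.2‖ ^ (-(2 + b + δ)) + ‖1 - x.1 * cj u‖ ^ (-(2 + b + δ))))))
          (by fun_prop)
    _ ≤ ENNReal.ofReal A * ENNReal.ofReal (C₂ * Real.log (2 / (1 - ‖u‖ ^ 2))) +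
        ENNReal.ofReal κ * ENNReal.ofReal (C₃ * (1 - ‖u‖ ^ 2) ^ (-1 : ℝ)) := by
        exact add_le_add (mul_le_mul_right (h₂ u hu) _) (mul_le_mul_right (h₃ u hu) _)
    _ ≤ _ := by
        have hl := log_pos_of_mem hu
        rw [← ENNReal.ofReal_mul hA0, ← ENNReal.ofReal_mul hκ0,
          ← ENNReal.ofReal_add (by positivity) (by positivity)]
        apply ENNReal.ofReal_le_ofReal
        have h4 := h₁ u hu
        rw [← hA] at h4
        have h5 : A * (C₂ * Real.log (2 / (1 - ‖u‖ ^ 2))) ≤ C₂ * C₁ * (1 - ‖u‖ ^ 2)⁻¹ := by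
          rw [← div_eq_mul_inv, le_div_iff₀ hu1]
          calc A * (C₂ * Real.log (2 / (1 - ‖u‖ ^ 2))) * (1 - ‖u‖ ^ 2) =
              C₂ * ((1 - ‖u‖ ^ 2) * Real.log (2 / (1 - ‖u‖ ^ 2)) * A) := by ring
            _ ≤ C₂ * C₁ := by gcongr
        clear_value κ
        rw [Real.rpow_neg_one]
        linarith

lemma measurable_psi (μ : Measure ℂ) [IsFiniteMeasure μ] (s t : ℝ) :
    Measurable (fun x : ℂ × ℂ => ∫ w in ball (0 : ℂ) 1, bker s w x.2 * bker t x.1 w ∂μ) := by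
  have hcj := measurable_conj
  refine StronglyMeasurable.measurable ?_
  refine StronglyMeasurable.integral_prod_right' (ν := μ.restrict (ball (0 : ℂ) 1))
    (f := fun y : (ℂ × ℂ) × ℂ => bker s y.2 y.1.2 * bker t y.1.1 y.2) ?_
  refine Measurable.stronglyMeasurable (Measurable.mul ?_ ?_)
  · exact (measurable_bker s).comp (measurable_snd.prodMk (measurable_snd.comp measurable_fst))
  · exact (measurable_bker t).comp ((measurable_fst.comp measurable_fst).prodMk measurable_snd)

lemma measurable_psi_left (μ : Measure ℂ) [IsFiniteMeasure μ] (s t : ℝ) (u : ℂ) :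
    Measurable (fun z : ℂ => ∫ w in ball (0 : ℂ) 1, bker s w u * bker t z w ∂μ) :=
  Measurable.comp (g := fun x : ℂ × ℂ => ∫ w in ball (0 : ℂ) 1, bker s w x.2 * bker t x.1 w ∂μ)
    (f := fun z => (z, u)) (measurable_psi μ s t) (by fun_prop)

/-- Representation of `T_{μ,b} P` obtained by inserting the reproducing formula for `P`. -/
lemma toep_repr {μ : Measure ℂ} [IsFiniteMeasure μ] {s b : ℝ} (hs : 1 < s) (hb : -1 < b)
    (hμ : Carl μ s) (P : Polynomial ℂ) {z : ℂ} (hz : z ∈ ball (0 : ℂ) 1) :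
    (mom 0 (s - 1) : ℂ) * Toep μ b (fun z => P.eval z) z =
      ∫ u in ball (0 : ℂ) 1, P.eval u * (((1 - ‖u‖ ^ 2) ^ (s - 1) : ℝ) : ℂ) *
        ∫ w in ball (0 : ℂ) 1, bker (s + 1) w u * bker (2 + b) z w ∂μ := by
  obtain ⟨B, hB, hPB⟩ := poly_bdd P
  obtain ⟨C, hC, h⟩ := carl_int hμ 0 1 le_rfl (by linarith) one_pos
  have hPm := P.continuous.measurable
  have hcj := measurable_conj
  rw [Toep_eq, ← integral_const_mul]
  calc _ = ∫ w in ball (0 : ℂ) 1, (∫ u in ball (0 : ℂ) 1, P.eval u * bker (s + 1) w u *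
        (((1 - ‖u‖ ^ 2) ^ (s - 1) : ℝ) : ℂ) * bker (2 + b) z w) ∂μ := by
        refine setIntegral_congr_fun measurableSet_ball fun w hw => ?_
        rw [integral_mul_const, reproducing s hs P hw, mul_assoc]
    _ = ∫ u in ball (0 : ℂ) 1, (∫ w in ball (0 : ℂ) 1, P.eval u * bker (s + 1) w u *
        (((1 - ‖u‖ ^ 2) ^ (s - 1) : ℝ) : ℂ) * bker (2 + b) z w ∂μ) := by
        refine fubini ?_ (ne_top_of_le_ne_top (ENNReal.mul_ne_top (ENNReal.ofReal_ne_top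
          (r := (1 - ‖z‖) ^ (-(2 + b)) * B * C)) (weight_integral_lt_top (s - 2) (by linarith)).ne) ?_)
        · have h1 : Measurable fun x : ℂ × ℂ => bker (2 + b) z x.1 :=
            (measurable_bker_right (2 + b) z).comp measurable_fst
          have h2 := measurable_bker (s + 1)
          unfold Function.uncurry
          refine Measurable.mul ?_ h1
          fun_prop
        · rw [← lintegral_const_mul _ (by fun_prop)]
          refine setLIntegral_mono' measurableSet_ball fun u hu => ?_
          have hu1 := one_sub_sq_pos hu
          have hz1 : 0 ≤ (1 - ‖z‖) ^ (-(2 + b)) :=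
            Real.rpow_nonneg (by linarith [mem_ball_zero_iff.1 hz]) _
          calc _ ≤ ∫⁻ w in ball (0 : ℂ) 1, ENNReal.ofReal ((1 - ‖z‖) ^ (-(2 + b)) * B *
                (1 - ‖u‖ ^ 2) ^ (s - 1)) *
                ENNReal.ofReal ((1 - ‖w‖ ^ 2) ^ (-0 : ℝ) * ‖1 - u * cj w‖ ^ (-(s - 0 + 1))) ∂μ := by
                refine setLIntegral_mono' measurableSet_ball fun w hw => ?_
                rw [← ofReal_norm, ← ENNReal.ofReal_mul (by positivity)]
                apply ENNReal.ofReal_le_ofReal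
                rw [norm_mul, norm_mul, norm_mul, norm_bker hw hu, norm_real, Real.norm_eq_abs,
                  abs_of_nonneg (by positivity), kn_symm w u, neg_zero, Real.rpow_zero, sub_zero]
                have h1 := norm_bker_le hz hw (t := 2 + b) (by linarith)
                calc _ ≤ B * ‖1 - u * cj w‖ ^ (-(s + 1)) * (1 - ‖u‖ ^ 2) ^ (s - 1) *
                      (1 - ‖z‖) ^ (-(2 + b)) := by
                      gcongr
                      exact hPB u hu
                  _ = _ := by ring
            _ = ENNReal.ofReal ((1 - ‖z‖) ^ (-(2 + b)) * B * (1 - ‖u‖ ^ 2) ^ (s - 1)) *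
                ∫⁻ w in ball (0 : ℂ) 1, ENNReal.ofReal ((1 - ‖w‖ ^ 2) ^ (-0 : ℝ) *
                  ‖1 - u * cj w‖ ^ (-(s - 0 + 1))) ∂μ := lintegral_const_mul _ (by fun_prop)
            _ ≤ ENNReal.ofReal ((1 - ‖z‖) ^ (-(2 + b)) * B * (1 - ‖u‖ ^ 2) ^ (s - 1)) *
                ENNReal.ofReal (C * (1 - ‖u‖ ^ 2) ^ (-1 : ℝ)) := by
                gcongr
                exact h u hu
            _ = _ := by
                rw [← ENNReal.ofReal_mul (by positivity), ← ENNReal.ofReal_mul (by positivity),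
                  show s - 2 = (s - 1) + (-1) by ring, Real.rpow_add hu1]
                congr 1
                ring
    _ = _ := by
        congr 1
        ext u
        rw [← integral_const_mul]
        congr 1
        ext w
        ring

/-- Boundedness of `T_{μ,b}` from the space `L¹((1 - |u|²)^{s-2})` to `L¹((1 - |z|²)^b)`: by `toep_repr`
and Tonelli this reduces to the kernel bound `psi_int`. -/
lemma suff_core {μ : Measure ℂ} [IsFiniteMeasure μ] {s b : ℝ} (hs : 1 < s) (hb : -1 < b)
    (hμ : Carl μ s) {M : ℝ} (hM : ∀ z ∈ ball (0 : ℂ) 1,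
      (1 - ‖z‖ ^ 2) * Real.log (2 / (1 - ‖z‖ ^ 2)) *
      ‖deriv (Toep μ (s - 2) fun _ => 1) z‖ ≤ M) :
    ∃ C, 0 ≤ C ∧ ∀ P : Polynomial ℂ, ∫⁻ z in ball (0 : ℂ) 1,
        ENNReal.ofReal (‖Toep μ b (fun z => P.eval z) z‖ * (1 - ‖z‖ ^ 2) ^ b) ≤
      ENNReal.ofReal (C * ∫ u in ball (0 : ℂ) 1, ‖P.eval u‖ * (1 - ‖u‖ ^ 2) ^ (s - 2)) := by
  obtain ⟨C, hC, h⟩ := psi_int hs hb hμ hM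
  obtain ⟨m, hm, hrep⟩ : ∃ m : ℝ, 0 < m ∧ ∀ P : Polynomial ℂ, ∀ z ∈ ball (0 : ℂ) 1,
      (m : ℂ) * Toep μ b (fun z => P.eval z) z =
      ∫ u in ball (0 : ℂ) 1, P.eval u * (((1 - ‖u‖ ^ 2) ^ (s - 1) : ℝ) : ℂ) *
        ∫ w in ball (0 : ℂ) 1, bker (s + 1) w u * bker (2 + b) z w ∂μ :=
    ⟨_, mom_zero_pos (s - 1) (by linarith), fun P z hz => toep_repr hs hb hμ P hz⟩
  refine ⟨m⁻¹ * C, by positivity, fun P => ?_⟩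
  have hPm := P.continuous.measurable
  have hpsi := measurable_psi μ (s + 1) (2 + b)
  have hpsi' := measurable_psi_left μ (s + 1) (2 + b)
  calc _ ≤ ∫⁻ z in ball (0 : ℂ) 1, ENNReal.ofReal m⁻¹ * ∫⁻ u in ball (0 : ℂ) 1,
        ENNReal.ofReal (‖P.eval u‖ * (1 - ‖u‖ ^ 2) ^ (s - 1)) *
        (ENNReal.ofReal ((1 - ‖z‖ ^ 2) ^ b) *
          ‖∫ w in ball (0 : ℂ) 1, bker (s + 1) w u * bker (2 + b) z w ∂μ‖ₑ) := by
        refine setLIntegral_mono' measurableSet_ball fun z hz => ?_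
        have hz1 := one_sub_sq_pos hz
        have h1 := hrep P z hz
        have h2 : ‖Toep μ b (fun z => P.eval z) z‖ = m⁻¹ * ‖∫ u in ball (0 : ℂ) 1,
            P.eval u * (((1 - ‖u‖ ^ 2) ^ (s - 1) : ℝ) : ℂ) *
            ∫ w in ball (0 : ℂ) 1, bker (s + 1) w u * bker (2 + b) z w ∂μ‖ := by
          rw [← h1, norm_mul, norm_real, Real.norm_of_nonneg hm.le, inv_mul_cancel_left₀ hm.ne']
        rw [h2, mul_assoc, ENNReal.ofReal_mul (by positivity)]
        gcongr
        rw [mul_comm, ENNReal.ofReal_mul (by positivity), ofReal_norm]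
        refine (mul_le_mul_right (enorm_integral_le_lintegral_enorm _) _).trans ?_
        rw [← lintegral_const_mul' _ _ ENNReal.ofReal_ne_top]
        refine setLIntegral_mono' measurableSet_ball fun u hu => le_of_eq ?_
        have hu1 := one_sub_sq_pos hu
        rw [enorm_mul, enorm_mul, ENNReal.ofReal_mul (by positivity), ofReal_norm,
          ← ofReal_norm (((1 - ‖u‖ ^ 2) ^ (s - 1) : ℝ) : ℂ), norm_real,
          Real.norm_of_nonneg (by positivity)]
        ring
    _ = ENNReal.ofReal m⁻¹ * ∫⁻ u in ball (0 : ℂ) 1,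
        ENNReal.ofReal (‖P.eval u‖ * (1 - ‖u‖ ^ 2) ^ (s - 1)) *
        ∫⁻ z in ball (0 : ℂ) 1, ENNReal.ofReal ((1 - ‖z‖ ^ 2) ^ b) *
          ‖∫ w in ball (0 : ℂ) 1, bker (s + 1) w u * bker (2 + b) z w ∂μ‖ₑ := by
        rw [lintegral_const_mul' _ _ ENNReal.ofReal_ne_top, lintegral_lintegral_swap]
        · congr 1
          congr 1
          ext u
          rw [lintegral_const_mul' _ _ ENNReal.ofReal_ne_top]
        · refine Measurable.aemeasurable ?_
          unfold Function.uncurry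
          fun_prop
    _ ≤ ENNReal.ofReal m⁻¹ * ∫⁻ u in ball (0 : ℂ) 1,
        ENNReal.ofReal (C * (‖P.eval u‖ * (1 - ‖u‖ ^ 2) ^ (s - 2))) := by
        gcongr 1
        refine setLIntegral_mono' measurableSet_ball fun u hu => ?_
        have hu1 := one_sub_sq_pos hu
        refine (mul_le_mul_right (h u hu) _).trans (le_of_eq ?_)
        rw [← ENNReal.ofReal_mul (by positivity), show s - 2 = (s - 1) + (-1) by ring,
          Real.rpow_add hu1]
        congr 1
        ring
    _ = _ := by
        have hi := poly_integrable 1 (s - 2) one_pos (by linarith) P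
        simp only [Real.rpow_one] at hi
        rw [← ofReal_integral_eq_lintegral_ofReal (hi.const_mul C),
          ← ENNReal.ofReal_mul (by positivity), integral_const_mul, mul_assoc]
        filter_upwards [ae_restrict_mem measurableSet_ball] with u hu
        have hu1 := one_sub_sq_pos hu
        simp only [Pi.zero_apply]
        positivity

lemma wnorm_eq (p a : ℝ) (ha : -1 < a) (f : ℂ → ℂ) : wnorm p a f =
    (ENNReal.ofReal ((1 + a) / Real.pi) *
      ∫⁻ z in ball (0 : ℂ) 1, ENNReal.ofReal (‖f z‖ ^ p * (1 - ‖z‖ ^ 2) ^ a)) ^ (1 / p) := by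
  unfold wnorm dA stdW
  have ha1 : 0 ≤ 1 + a := by linarith
  rw [Measure.restrict_smul, lintegral_smul_measure, smul_eq_mul, div_eq_mul_inv (1 + a) Real.pi, mul_comm (1 + a),
    ENNReal.ofReal_mul (by positivity), ENNReal.ofReal_inv_of_pos Real.pi_pos, mul_assoc,
    ← lintegral_const_mul' _ _ ENNReal.ofReal_ne_top]
  congr 3
  ext z
  rw [← ENNReal.ofReal_mul ha1]
  congr 1
  ring

lemma wnorm_poly (p a : ℝ) (hp : 0 < p) (ha : -1 < a) (P : Polynomial ℂ) :
    wnorm p a (fun z => P.eval z) = ENNReal.ofReal (((1 + a) / Real.pi *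
      ∫ z in ball (0 : ℂ) 1, ‖P.eval z‖ ^ p * (1 - ‖z‖ ^ 2) ^ a) ^ (1 / p)) := by
  have ha1 : 0 ≤ 1 + a := by linarith
  have h0 : ∀ᵐ z ∂(volume.restrict (ball (0 : ℂ) 1)),
      0 ≤ ‖P.eval z‖ ^ p * (1 - ‖z‖ ^ 2) ^ a := by
    filter_upwards [ae_restrict_mem measurableSet_ball] with z hz
    have := one_sub_sq_pos hz
    positivity
  rw [wnorm_eq p a ha, ← ofReal_integral_eq_lintegral_ofReal (poly_integrable p a hp ha P) h0,
    ← ENNReal.ofReal_mul (by positivity), ENNReal.ofReal_rpow_of_nonneg _ (by positivity)]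
  have := integral_nonneg_of_ae h0
  positivity

/-- Combination of `suff_core` with `embedding`. -/
lemma sufficiency (p a b : ℝ) (hp0 : 0 < p) (hp1 : p ≤ 1) (ha : -1 < a) (hb : -1 < b)
    {μ : Measure ℂ} [IsFiniteMeasure μ] {s : ℝ} (hs : 1 < s) (hsp : s * p = a + 2)
    (hμ : Carl μ s) {M : ℝ} (hM : ∀ z ∈ ball (0 : ℂ) 1,
      (1 - ‖z‖ ^ 2) * Real.log (2 / (1 - ‖z‖ ^ 2)) *
      ‖deriv (Toep μ (s - 2) fun _ => 1) z‖ ≤ M) :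
    ∃ C : ℝ≥0, ∀ P : Polynomial ℂ,
        wnorm 1 b (Toep μ b fun z => P.eval z) ≤ C * wnorm p a fun z => P.eval z := by
  obtain ⟨C₁, hC₁, h₁⟩ := suff_core hs hb hμ hM
  obtain ⟨C₂, hC₂, h₂⟩ := embedding p a s hp0 hp1 ha hs hsp
  have ha1 : 0 < 1 + a := by linarith
  have hb1 : 0 < 1 + b := by linarith
  have hκ : 0 < (1 + a) / Real.pi := by positivity
  set κ := (1 + a) / Real.pi
  have hC : 0 ≤ (1 + b) / Real.pi * (C₁ * (C₂ * (κ ^ (1 / p))⁻¹)) := by positivity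
  refine ⟨Real.toNNReal ((1 + b) / Real.pi * (C₁ * (C₂ * (κ ^ (1 / p))⁻¹))), fun P => ?_⟩
  have hI : 0 ≤ ∫ z in ball (0 : ℂ) 1, ‖P.eval z‖ ^ p * (1 - ‖z‖ ^ 2) ^ a := by
    refine setIntegral_nonneg measurableSet_ball fun z hz => ?_
    have := one_sub_sq_pos hz
    positivity
  rw [wnorm_poly p a hp0 ha, wnorm_eq 1 b hb]
  simp only [Real.rpow_one, div_one, ENNReal.rpow_one]
  refine (mul_le_mul_right (h₁ P) _).trans ?_
  rw [← ENNReal.ofReal,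
    ← ENNReal.ofReal_mul (by positivity), ← ENNReal.ofReal_mul hC]
  apply ENNReal.ofReal_le_ofReal
  rw [Real.mul_rpow hκ.le hI]
  have hk := Real.rpow_pos_of_pos hκ (1 / p)
  calc _ ≤ (1 + b) / Real.pi * (C₁ * (C₂ *
        (∫ u in ball (0 : ℂ) 1, ‖P.eval u‖ ^ p * (1 - ‖u‖ ^ 2) ^ a) ^ (1 / p))) := by
        gcongr
        exact h₂ P
    _ = _ := by field_simp

/-! ### Duality -/

/-- The operator `g ↦ z g' + t g` on polynomials. -/
noncomputable def bd (t : ℝ) (g : Polynomial ℂ) : Polynomial ℂ :=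
  Polynomial.X * Polynomial.derivative g + Polynomial.C (t : ℂ) * g

lemma bd_eval (t : ℝ) (g : Polynomial ℂ) (z : ℂ) :
    (bd t g).eval z = z * g.derivative.eval z + t * g.eval z := by
  simp [bd]

/-- Integrating the kernel of exponent `t` against the conjugate of `z g' + t g` with weight exponent
`t - 1` reproduces `g`; on the Taylor coefficients this is `bc_mul_mom'`. -/
lemma dual_inner (t : ℝ) (ht : 1 < t) (g : Polynomial ℂ) {w : ℂ} (hw : w ∈ ball (0 : ℂ) 1) :
    ∫ z in ball (0 : ℂ) 1, cj ((bd t g).eval z) * bker t z w * (((1 - ‖z‖ ^ 2) ^ (t - 1) : ℝ) : ℂ) =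
      (t - 1) * mom 0 (t - 2) * cj (g.eval w) := by
  have hint : ∀ P : Polynomial ℂ, IntegrableOn (fun z => cj (P.eval z) * bker t z w *
      (((1 - ‖z‖ ^ 2) ^ (t - 1) : ℝ) : ℂ)) (ball (0 : ℂ) 1) := by
    intro P
    obtain ⟨B, hB0, hB⟩ := poly_bdd P
    refine Integrable.mono' ((weight_integrable (t - 1) (by linarith)).const_mul
      (B * (1 - ‖w‖) ^ (-t))) ?_ ?_
    · have := measurable_bker_left t w
      have := measurable_conj.comp P.continuous.measurable
      exact Measurable.aestronglyMeasurable (by fun_prop)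
    · filter_upwards [ae_restrict_mem measurableSet_ball] with u hu
      have hp := Real.rpow_nonneg (one_sub_sq_pos hu).le (t - 1)
      rw [norm_mul, norm_mul, norm_real, Real.norm_of_nonneg hp, norm_bker hu hw, RCLike.norm_conj,
        kn_symm]
      have := kn_rpow_le_fixed hw hu (t := t) (by linarith)
      have := hB u hu
      gcongr
  induction g using Polynomial.induction_on' with
  | add P Q hP hQ =>
    have h : bd t (P + Q) = bd t P + bd t Q := by
      simp only [bd, Polynomial.derivative_add]; ring
    simp only [h, Polynomial.eval_add, add_mul, map_add]
    rw [integral_add (hint (bd t P)) (hint (bd t Q)), hP, hQ]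
    ring
  | monomial n x =>
    have h1 := bker_monomial t (t - 1) (by linarith) n hw
    have h2 := bc_mul_mom' t ht n
    have h3 : ∀ z, cj ((bd t (Polynomial.monomial n x)).eval z) = cj x * ((n : ℂ) + t) * cj z ^ n := by
      intro z
      have h4 : (bd t (Polynomial.monomial n x)).eval z = x * ((n : ℂ) + t) * z ^ n := by
        rw [bd_eval, Polynomial.derivative_monomial, Polynomial.eval_monomial,
          Polynomial.eval_monomial]
        rcases n with _ | n
        · simp
          ring
        · simp only [Nat.add_sub_cancel]
          ring
      rw [h4]
      simp
    simp only [h3, Polynomial.eval_monomial]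
    calc _ = cj x * ((n : ℂ) + t) * ∫ z in ball (0 : ℂ) 1, cj z ^ n * bker t z w *
          (((1 - ‖z‖ ^ 2) ^ (t - 1) : ℝ) : ℂ) := by
          rw [← integral_const_mul]
          congr 1
          ext z
          ring
      _ = _ := by
          rw [h1, map_mul, map_pow]
          linear_combination cj x * cj w ^ n * h2

/-- Duality: the pairing of `P` and `g` in `L²(μ)` is a weighted area pairing of `T_{μ,b} P` with
`z g' + (2 + b) g`. -/
lemma duality (μ : Measure ℂ) [IsFiniteMeasure μ] (b : ℝ) (hb : -1 < b) (P g : Polynomial ℂ) :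
    ((2 + b : ℝ) - 1) * mom 0 (2 + b - 2) * ∫ w in ball (0 : ℂ) 1, P.eval w * cj (g.eval w) ∂μ =
      ∫ z in ball (0 : ℂ) 1, Toep μ b (fun z => P.eval z) z * cj ((bd (2 + b) g).eval z) *
        (((1 - ‖z‖ ^ 2) ^ (2 + b - 1) : ℝ) : ℂ) := by
  obtain ⟨t, rfl⟩ : ∃ t, b = t - 2 := ⟨b + 2, by ring⟩
  rw [show 2 + (t - 2) = t by ring]
  have ht : 1 < t := by linarith
  obtain ⟨B, hB, hPB⟩ := poly_bdd P
  obtain ⟨B', hB', hGB⟩ := poly_bdd (bd t g)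
  obtain ⟨C, hC, h⟩ := FR_neg t ht
  have hPm := P.continuous.measurable
  have hcj := measurable_conj
  have hGm := (bd t g).continuous.measurable
  have hbm := measurable_bker t
  rw [← integral_const_mul]
  calc _ = ∫ w in ball (0 : ℂ) 1, (∫ z in ball (0 : ℂ) 1, P.eval w * (cj ((bd t g).eval z) *
        bker t z w * (((1 - ‖z‖ ^ 2) ^ (t - 1) : ℝ) : ℂ))) ∂μ := by
        refine setIntegral_congr_fun measurableSet_ball fun w hw => ?_
        rw [integral_const_mul, dual_inner t ht g hw]
        ring
    _ = ∫ z in ball (0 : ℂ) 1, (∫ w in ball (0 : ℂ) 1, P.eval w * (cj ((bd t g).eval z) *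
        bker t z w * (((1 - ‖z‖ ^ 2) ^ (t - 1) : ℝ) : ℂ)) ∂μ) := by
        symm
        refine fubini ?_ (ne_top_of_le_ne_top (ENNReal.mul_ne_top (ENNReal.ofReal_ne_top
          (r := B * B' * C)) (measure_ne_top μ (ball (0 : ℂ) 1))) ?_)
        · unfold Function.uncurry
          fun_prop
        · rw [← setLIntegral_const]
          refine setLIntegral_mono' measurableSet_ball fun w hw => ?_
          calc _ ≤ ∫⁻ z in ball (0 : ℂ) 1, ENNReal.ofReal (B * B') *
                ENNReal.ofReal ((1 - ‖z‖ ^ 2) ^ (t - 1) * ‖1 - z * cj w‖ ^ (-t)) := by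
                refine setLIntegral_mono' measurableSet_ball fun z hz => ?_
                have hz1 := one_sub_sq_pos hz
                rw [← ofReal_norm, ← ENNReal.ofReal_mul (by positivity)]
                apply ENNReal.ofReal_le_ofReal
                rw [norm_mul, norm_mul, norm_mul, norm_bker hz hw, norm_real, RCLike.norm_conj,
                  Real.norm_of_nonneg (by positivity)]
                calc _ ≤ B * (B' * ‖1 - z * cj w‖ ^ (-t) * (1 - ‖z‖ ^ 2) ^ (t - 1)) := by
                      gcongr
                      · exact hPB w hw
                      · exact hGB z hz
                  _ = _ := by ring
            _ ≤ _ := by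
                rw [lintegral_const_mul _ (by fun_prop)]
                refine (mul_le_mul_right (h w hw) _).trans (le_of_eq ?_)
                rw [← ENNReal.ofReal_mul (by positivity)]
    _ = _ := by
        congr 1
        ext z
        rw [Toep_eq, ← integral_mul_const, ← integral_mul_const, show 2 + (t - 2) = t by ring]
        congr 1
        ext w
        ring

/-- The hypothesis of boundedness, read on real integrals. -/
lemma bounded_real {p a b : ℝ} (hp0 : 0 < p) (ha : -1 < a) (hb : -1 < b) {μ : Measure ℂ}
    {C : ℝ≥0} (h : ∀ P : Polynomial ℂ,
        wnorm 1 b (Toep μ b fun z => P.eval z) ≤ C * wnorm p a fun z => P.eval z) :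
    ∃ K, 0 ≤ K ∧ ∀ P : Polynomial ℂ, ∫⁻ z in ball (0 : ℂ) 1,
        ENNReal.ofReal (‖Toep μ b (fun z => P.eval z) z‖ * (1 - ‖z‖ ^ 2) ^ b) ≤
      ENNReal.ofReal (K * (∫ u in ball (0 : ℂ) 1, ‖P.eval u‖ ^ p * (1 - ‖u‖ ^ 2) ^ a) ^ (1 / p)) := by
  have ha1 : 0 < 1 + a := by linarith
  have hb1 : 0 < 1 + b := by linarith
  have hκ : 0 < (1 + a) / Real.pi := by positivity
  have hκ' : 0 < (1 + b) / Real.pi := by positivity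
  set κ := (1 + a) / Real.pi
  set κ' := (1 + b) / Real.pi with hk'
  refine ⟨κ'⁻¹ * C * κ ^ (1 / p), by positivity, fun P => ?_⟩
  have hI : 0 ≤ ∫ z in ball (0 : ℂ) 1, ‖P.eval z‖ ^ p * (1 - ‖z‖ ^ 2) ^ a := by
    refine setIntegral_nonneg measurableSet_ball fun z hz => ?_
    have := one_sub_sq_pos hz
    positivity
  have h1 := h P
  rw [wnorm_poly p a hp0 ha, wnorm_eq 1 b hb] at h1
  simp only [Real.rpow_one, div_one, ENNReal.rpow_one] at h1
  rw [Real.mul_rpow hκ.le hI, ← hk', ← ENNReal.ofReal_coe_nnreal,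
    ← ENNReal.ofReal_mul (NNReal.coe_nonneg C)] at h1
  have h2 := mul_le_mul_right h1 (ENNReal.ofReal κ'⁻¹)
  rw [← mul_assoc, ← ENNReal.ofReal_mul (by positivity), inv_mul_cancel₀ hκ'.ne', ENNReal.ofReal_one,
    one_mul, ← ENNReal.ofReal_mul (by positivity)] at h2
  refine h2.trans (le_of_eq ?_)
  congr 1
  ring

/-- The estimate obtained from `duality`, for polynomials. -/
lemma dual_poly {p a b : ℝ} (hp0 : 0 < p) (ha : -1 < a) (hb : -1 < b) {μ : Measure ℂ}
    [IsFiniteMeasure μ] {C : ℝ≥0} (h : ∀ P : Polynomial ℂ,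
        wnorm 1 b (Toep μ b fun z => P.eval z) ≤ C * wnorm p a fun z => P.eval z) :
    ∃ K, 0 ≤ K ∧ ∀ P g : Polynomial ℂ, ∀ S, 0 ≤ S → (∀ z ∈ ball (0 : ℂ) 1,
      (1 - ‖z‖ ^ 2) * ‖(bd (2 + b) g).eval z‖ ≤ S) →
      ‖∫ w in ball (0 : ℂ) 1, P.eval w * cj (g.eval w) ∂μ‖ ≤ K * S *
        (∫ u in ball (0 : ℂ) 1, ‖P.eval u‖ ^ p * (1 - ‖u‖ ^ 2) ^ a) ^ (1 / p) := by
  obtain ⟨K, hK, hK'⟩ := bounded_real hp0 ha hb h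
  have hm := mom_zero_pos (2 + b - 2) (by linarith)
  have hb1 : 0 < 2 + b - 1 := by linarith
  refine ⟨((2 + b - 1) * mom 0 (2 + b - 2))⁻¹ * K, by positivity, fun P g S hS hg => ?_⟩
  have hI : 0 ≤ ∫ z in ball (0 : ℂ) 1, ‖P.eval z‖ ^ p * (1 - ‖z‖ ^ 2) ^ a := by
    refine setIntegral_nonneg measurableSet_ball fun z hz => ?_
    have := one_sub_sq_pos hz
    positivity
  have h1 := congrArg norm (duality μ b hb P g)
  have h2 : ‖∫ z in ball (0 : ℂ) 1, Toep μ b (fun z => P.eval z) z * cj ((bd (2 + b) g).eval z) *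
        (((1 - ‖z‖ ^ 2) ^ (2 + b - 1) : ℝ) : ℂ)‖ ≤ S * (K *
        (∫ u in ball (0 : ℂ) 1, ‖P.eval u‖ ^ p * (1 - ‖u‖ ^ 2) ^ a) ^ (1 / p)) := by
    refine norm_integral_le_of_lintegral (g := fun z => S *
      (‖Toep μ b (fun z => P.eval z) z‖ * (1 - ‖z‖ ^ 2) ^ b)) (by positivity) (fun z hz => ?_) ?_
    · have hz1 := one_sub_sq_pos hz
      have h3 := hg z hz
      rw [norm_mul, norm_mul, norm_real, RCLike.norm_conj, Real.norm_of_nonneg (by positivity),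
        show 2 + b - 1 = 1 + b by ring, Real.rpow_add hz1, Real.rpow_one]
      calc _ = (1 - ‖z‖ ^ 2) * ‖(bd (2 + b) g).eval z‖ *
            (‖Toep μ b (fun z => P.eval z) z‖ * (1 - ‖z‖ ^ 2) ^ b) := by ring
        _ ≤ _ := by gcongr
    · simp_rw [ENNReal.ofReal_mul hS]
      rw [lintegral_const_mul' _ _ ENNReal.ofReal_ne_top]
      gcongr
      exact hK' P
  rw [norm_mul, norm_mul, norm_real, Real.norm_of_nonneg hm.le, show (((2 + b : ℝ) : ℂ) - 1) =
    ((2 + b - 1 : ℝ) : ℂ) by push_cast; ring, norm_real, Real.norm_of_nonneg hb1.le] at h1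
  rw [← h1] at h2
  have hmm : 0 < (2 + b - 1) * mom 0 (2 + b - 2) := by positivity
  set mm := (2 + b - 1) * mom 0 (2 + b - 2)
  calc _ = mm⁻¹ * (mm * ‖∫ w in ball (0 : ℂ) 1, P.eval w * cj (g.eval w) ∂μ‖) := by
        rw [inv_mul_cancel_left₀ hmm.ne']
    _ ≤ mm⁻¹ * (S * (K * (∫ u in ball (0 : ℂ) 1, ‖P.eval u‖ ^ p * (1 - ‖u‖ ^ 2) ^ a) ^ (1 / p))) := by
        gcongr
    _ = _ := by ring

/-- Taylor polynomials converge, together with their derivatives, uniformly on the closed disk. -/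
lemma taylor_approx {f : ℂ → ℂ} {R : ℝ} (hR : 1 < R) (hf : DifferentiableOn ℂ f (ball 0 R)) :
    ∃ P : ℕ → Polynomial ℂ,
      TendstoUniformlyOn (fun n z => (P n).eval z) f atTop (closedBall 0 1) ∧
      TendstoUniformlyOn (fun n z => (P n).derivative.eval z) (deriv f) atTop (closedBall 0 1) := by
  obtain ⟨r, hr1, hrR⟩ := exists_between hR
  obtain ⟨r', hr1', hrr'⟩ := exists_between hr1
  lift r to ℝ≥0 using by linarith
  lift r' to ℝ≥0 using by linarith
  have hps := (hf.mono (closedBall_subset_ball hrR)).hasFPowerSeriesOnBall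
    (by exact_mod_cast zero_lt_one.trans hr1)
  have h1 := hps.tendstoUniformlyOn (r' := r') (by exact_mod_cast hrr')
  simp only [zero_add] at h1
  set q := cauchyPowerSeries f 0 r
  have h2 : ∀ n z, q.partialSum n z =
      (∑ k ∈ Finset.range n, Polynomial.monomial k (q.coeff k)).eval z := by
    intro n z
    rw [Polynomial.eval_finsetSum, FormalMultilinearSeries.partialSum]
    refine Finset.sum_congr rfl fun k _ => ?_
    rw [FormalMultilinearSeries.apply_eq_pow_smul_coeff, Polynomial.eval_monomial, smul_eq_mul,
      mul_comm]
  simp only [h2] at h1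
  have hsub : closedBall (0 : ℂ) 1 ⊆ ball (0 : ℂ) r' := closedBall_subset_ball hr1'
  refine ⟨fun n => ∑ k ∈ Finset.range n, Polynomial.monomial k (q.coeff k), h1.mono hsub, ?_⟩
  have h3 := h1.tendstoLocallyUniformlyOn.deriv
    (Eventually.of_forall fun n => (Polynomial.differentiable _).differentiableOn) isOpen_ball
  have h4 := (tendstoLocallyUniformlyOn_iff_tendstoUniformlyOn_of_compact
    (isCompact_closedBall (0 : ℂ) 1)).1 (h3.mono hsub)
  refine h4.congr (Eventually.of_forall fun n z _ => ?_)
  simp only [Function.comp_apply]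
  exact Polynomial.deriv _

/-- The estimate obtained from `duality`, for functions analytic across the unit circle. -/
lemma dual_analytic {p a b : ℝ} (hp0 : 0 < p) (ha : -1 < a) (hb : -1 < b) {μ : Measure ℂ}
    [IsFiniteMeasure μ] {C : ℝ≥0} (h : ∀ P : Polynomial ℂ,
        wnorm 1 b (Toep μ b fun z => P.eval z) ≤ C * wnorm p a fun z => P.eval z) :
    ∃ K, 0 ≤ K ∧ ∀ f g : ℂ → ℂ, ∀ R > 1, DifferentiableOn ℂ f (ball 0 R) →
      DifferentiableOn ℂ g (ball 0 R) → ∀ S, 0 ≤ S → (∀ z ∈ ball (0 : ℂ) 1,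
      (1 - ‖z‖ ^ 2) * ‖z * deriv g z + (2 + b : ℝ) * g z‖ ≤ S) →
      ‖∫ w in ball (0 : ℂ) 1, f w * cj (g w) ∂μ‖ ≤ K * S *
        (∫ u in ball (0 : ℂ) 1, ‖f u‖ ^ p * (1 - ‖u‖ ^ 2) ^ a) ^ (1 / p) := by
  obtain ⟨K, hK, hK'⟩ := dual_poly hp0 ha hb h
  refine ⟨K, hK, fun f g R hR hf hg S hS hgS => ?_⟩
  obtain ⟨P, hP, -⟩ := taylor_approx hR hf
  obtain ⟨Q, hQ, hQ'⟩ := taylor_approx hR hg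
  have hsub := ball_subset_closedBall (x := (0 : ℂ)) (ε := 1)
  have hcl : closedBall (0 : ℂ) 1 ⊆ ball (0 : ℂ) R := closedBall_subset_ball hR
  obtain ⟨Bf, hBf⟩ := (isCompact_closedBall (0 : ℂ) 1).exists_bound_of_continuousOn
    (hf.continuousOn.mono hcl)
  obtain ⟨Bg, hBg⟩ := (isCompact_closedBall (0 : ℂ) 1).exists_bound_of_continuousOn
    (hg.continuousOn.mono hcl)
  have hbd : ∀ {F : ℕ → Polynomial ℂ} {φ : ℂ → ℂ} {B : ℝ},
      TendstoUniformlyOn (fun n z => (F n).eval z) φ atTop (closedBall 0 1) →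
      (∀ z ∈ closedBall (0 : ℂ) 1, ‖φ z‖ ≤ B) →
      ∀ᶠ n in atTop, ∀ z ∈ ball (0 : ℂ) 1, ‖(F n).eval z‖ ≤ B + 1 := by
    intro F φ B hF hφ
    filter_upwards [Metric.tendstoUniformlyOn_iff.1 hF 1 one_pos] with n hn z hz
    have h1 := hn z (hsub hz)
    rw [dist_eq_norm] at h1
    have h2 := norm_sub_norm_le ((F n).eval z) (φ z)
    rw [norm_sub_rev] at h2
    linarith [hφ z (hsub hz)]
  have hPb := hbd hP hBf
  have hQb := hbd hQ hBg
  have l1 : Tendsto (fun n => ‖∫ w in ball (0 : ℂ) 1, (P n).eval w * cj ((Q n).eval w) ∂μ‖) atTop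
      (𝓝 ‖∫ w in ball (0 : ℂ) 1, f w * cj (g w) ∂μ‖) := by
    refine Tendsto.norm (tendsto_integral_filter_of_dominated_convergence
      (fun _ => (Bf + 1) * (Bg + 1)) (Eventually.of_forall fun n => ?_) ?_ (integrable_const _) ?_)
    · have h1 := (P n).continuous.measurable
      have h2 := measurable_conj.comp (Q n).continuous.measurable
      exact Measurable.aestronglyMeasurable (by fun_prop)
    · filter_upwards [hPb, hQb] with n h1 h2
      filter_upwards [ae_restrict_mem measurableSet_ball] with w hw
      rw [norm_mul, RCLike.norm_conj]
      have h3 := h1 w hw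
      have h4 := (norm_nonneg _).trans h3
      gcongr
      exact h2 w hw
    · filter_upwards [ae_restrict_mem measurableSet_ball] with w hw
      exact (hP.tendsto_at (hsub hw)).mul
        ((continuous_conj.tendsto _).comp (hQ.tendsto_at (hsub hw)))
  have l2 : Tendsto (fun n => ∫ u in ball (0 : ℂ) 1, ‖(P n).eval u‖ ^ p * (1 - ‖u‖ ^ 2) ^ a) atTop
      (𝓝 (∫ u in ball (0 : ℂ) 1, ‖f u‖ ^ p * (1 - ‖u‖ ^ 2) ^ a)) := by
    refine tendsto_integral_filter_of_dominated_convergence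
      (fun u => (Bf + 1) ^ p * (1 - ‖u‖ ^ 2) ^ a) (Eventually.of_forall fun n => ?_) ?_
      ((weight_integrable a ha).const_mul _) ?_
    · have h1 := (P n).continuous.measurable
      exact Measurable.aestronglyMeasurable (by fun_prop)
    · filter_upwards [hPb] with n h1
      filter_upwards [ae_restrict_mem measurableSet_ball] with w hw
      have hw1 := one_sub_sq_pos hw
      rw [Real.norm_of_nonneg (by positivity)]
      gcongr
      exact h1 w hw
    · filter_upwards [ae_restrict_mem measurableSet_ball] with w hw
      exact ((hP.tendsto_at (hsub hw)).norm.rpow_const (Or.inr hp0.le)).mul_const _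
  have key : ∀ ε > 0, ‖∫ w in ball (0 : ℂ) 1, f w * cj (g w) ∂μ‖ ≤ K * (S + ε) *
        (∫ u in ball (0 : ℂ) 1, ‖f u‖ ^ p * (1 - ‖u‖ ^ 2) ^ a) ^ (1 / p) := by
    intro ε hε
    refine le_of_tendsto_of_tendsto l1 ((l2.rpow_const (Or.inr (by positivity))).const_mul _) ?_
    have hb2 : 0 < 1 + (2 + b) := by linarith
    have hε' : 0 < ε / (1 + (2 + b)) := by positivity
    filter_upwards [Metric.tendstoUniformlyOn_iff.1 hQ _ hε',
      Metric.tendstoUniformlyOn_iff.1 hQ' _ hε'] with n h1 h2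
    refine hK' _ _ _ (by positivity) fun z hz => ?_
    have h3 := h1 z (hsub hz)
    have h4 := h2 z (hsub hz)
    have hz1 := one_sub_sq_pos hz
    have hz2 := one_sub_sq_le_one z
    have hz3 : ‖z‖ ≤ 1 := (mem_ball_zero_iff.1 hz).le
    rw [dist_comm, dist_eq_norm] at h3 h4
    have h5 : (bd (2 + b) (Q n)).eval z = (z * deriv g z + (2 + b : ℝ) * g z) +
        (z * ((Q n).derivative.eval z - deriv g z) + (2 + b : ℝ) * ((Q n).eval z - g z)) := by
      rw [bd_eval]; ring
    have h6 : ‖z * ((Q n).derivative.eval z - deriv g z) + (2 + b : ℝ) * ((Q n).eval z - g z)‖ ≤ ε := by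
      refine (norm_add_le _ _).trans ?_
      rw [norm_mul, norm_mul, norm_real, Real.norm_of_nonneg (by linarith)]
      calc _ ≤ 1 * (ε / (1 + (2 + b))) + (2 + b) * (ε / (1 + (2 + b))) := by
            have : 0 < 2 + b := by linarith
            gcongr
        _ = ε := by field_simp
    rw [h5]
    calc _ ≤ (1 - ‖z‖ ^ 2) * (‖z * deriv g z + (2 + b : ℝ) * g z‖ + ε) := by
          gcongr
          exact (norm_add_le _ _).trans (by gcongr)
      _ ≤ S + 1 * ε := by
          rw [mul_add]
          gcongr
          exact hgS z hz
      _ = S + ε := by ring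
  have l3 : Tendsto (fun ε => K * (S + ε) *
        (∫ u in ball (0 : ℂ) 1, ‖f u‖ ^ p * (1 - ‖u‖ ^ 2) ^ a) ^ (1 / p)) (𝓝[>] 0) (𝓝 (K * (S + 0) *
        (∫ u in ball (0 : ℂ) 1, ‖f u‖ ^ p * (1 - ‖u‖ ^ 2) ^ a) ^ (1 / p))) := by
    refine Tendsto.mono_left (Continuous.tendsto (by fun_prop) 0) nhdsWithin_le_nhds
  rw [add_zero] at l3
  exact ge_of_tendsto l3 (by filter_upwards [self_mem_nhdsWithin] with ε hε using key ε hε)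

/-! ### Necessity of the Carleson condition -/

lemma FR_real (c ε : ℝ) (hc : -1 < c) (hε : 0 < ε) : ∃ C, 0 ≤ C ∧ ∀ w ∈ ball (0 : ℂ) 1,
    ∫ z in ball (0 : ℂ) 1, ‖1 - z * cj w‖ ^ (-(2 + c + ε)) * (1 - ‖z‖ ^ 2) ^ c ≤
      C * (1 - ‖w‖ ^ 2) ^ (-ε) := by
  obtain ⟨C, hC, h⟩ := FR_pos c ε hc hε
  have hcj := measurable_conj
  refine ⟨C, hC, fun w hw => ?_⟩
  have hw1 := one_sub_sq_pos hw
  rw [integral_eq_lintegral_of_nonneg_ae]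
  · refine ENNReal.toReal_le_of_le_ofReal (by positivity) ?_
    simpa only [mul_comm] using h w hw
  · filter_upwards [ae_restrict_mem measurableSet_ball] with z hz
    have := one_sub_sq_pos hz
    simp only [Pi.zero_apply]
    positivity
  · exact Measurable.aestronglyMeasurable (by fun_prop)

lemma exists_larger_disk {z : ℂ} (hz : z ∈ ball (0 : ℂ) 1) :
    ∃ R > 1, ∀ w ∈ ball (0 : ℂ) R, 0 < (1 - w * cj z).re := by
  have hz1 := mem_ball_zero_iff.1 hz
  have hz0 := norm_nonneg z
  refine ⟨2 / (1 + ‖z‖), by rw [gt_iff_lt, lt_div_iff₀ (by linarith)]; linarith, fun w hw => ?_⟩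
  have hw1 := mem_ball_zero_iff.1 hw
  rw [lt_div_iff₀ (by linarith)] at hw1
  have h1 : ‖w * cj z‖ < 1 := by
    rw [norm_mul, RCLike.norm_conj]
    nlinarith [norm_nonneg w]
  have h2 := (re_le_norm (w * cj z)).trans_lt h1
  rw [sub_re, one_re]
  linarith

lemma kn_le_of_mem_pD {z w : ℂ} (hz : z ∈ ball (0 : ℂ) 1) (hw : w ∈ pD z (1 / 2)) :
    ‖1 - w * cj z‖ ≤ 2 * (1 - ‖z‖ ^ 2) := by
  obtain ⟨hw1, hw2⟩ := hw
  have hk := kn_pos hw1 hz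
  have hz1 := one_sub_sq_pos hz
  rw [norm_div, mul_comm (cj z), div_lt_iff₀ hk] at hw2
  have h1 : 1 - w * cj z = ((1 - ‖z‖ ^ 2 : ℝ) : ℂ) + cj z * (z - w) := by
    have h2 := Complex.conj_mul' z
    push_cast
    rw [← h2]
    ring
  have h3 : ‖1 - w * cj z‖ ≤ (1 - ‖z‖ ^ 2) + 1 * ‖z - w‖ := by
    calc _ = ‖((1 - ‖z‖ ^ 2 : ℝ) : ℂ) + cj z * (z - w)‖ := by rw [h1]
      _ ≤ _ := by
        refine (norm_add_le _ _).trans ?_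
        rw [norm_real, Real.norm_of_nonneg hz1.le, norm_mul, RCLike.norm_conj]
        have := (mem_ball_zero_iff.1 hz).le
        gcongr
  linarith

/-- Testing `dual_analytic` on `f = g = (1 - z̄ w)^{-N}`. -/
lemma necessity_carleson {p a b : ℝ} (hp0 : 0 < p) (ha : -1 < a) (hb : -1 < b) {μ : Measure ℂ}
    [IsFiniteMeasure μ] {C : ℝ≥0} (h : ∀ P : Polynomial ℂ,
        wnorm 1 b (Toep μ b fun z => P.eval z) ≤ C * wnorm p a fun z => P.eval z)
    {s : ℝ} (hs : 1 < s) (hsp : s * p = a + 2) : Carl μ s := by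
  obtain ⟨K, hK, hK'⟩ := dual_analytic hp0 ha hb h
  obtain ⟨N, hN⟩ := exists_nat_gt s
  obtain ⟨C₁, hC₁, h₁⟩ := FR_real a ((N - s) * p) ha (mul_pos (by linarith) hp0)
  have ht : 0 < 2 + b := by linarith
  set A : ℝ := K * ((2 * N + (2 + b)) * 2 ^ N) * C₁ ^ (1 / p) with hA
  have hA0 : 0 ≤ A := by positivity
  refine ⟨1 / 2, by norm_num, 2 ^ (2 * N) * A, fun z hz => ?_⟩
  have hd := one_sub_sq_pos hz
  set d := 1 - ‖z‖ ^ 2 with hd'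
  obtain ⟨R, hR, hre⟩ := exists_larger_disk hz
  set f : ℂ → ℂ := fun w => ((1 - w * cj z) ^ N)⁻¹ with hf
  have hne : ∀ w ∈ ball (0 : ℂ) R, 1 - w * cj z ≠ 0 := fun w hw h0 => by
    have := hre w hw
    rw [h0] at this
    simp at this
  have hder : ∀ w ∈ ball (0 : ℂ) R,
      HasDerivAt f (N * cj z * ((1 - w * cj z) ^ (N + 1))⁻¹) w := by
    intro w hw
    have h1 := (((hasDerivAt_id w).mul_const (cj z)).const_sub 1).pow N
    have h2 := h1.inv (pow_ne_zero N (hne w hw))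
    refine h2.congr_deriv ?_
    have h3 := hne w hw
    obtain ⟨n, rfl⟩ : ∃ n, N = n + 1 := ⟨N - 1, by
      have : 0 < N := by
        have : (0 : ℝ) < N := by linarith
        exact_mod_cast this
      omega⟩
    simp only [id_eq, Pi.pow_apply, Nat.add_sub_cancel, one_mul]
    field_simp
    ring
  have hfd : DifferentiableOn ℂ f (ball 0 R) := fun w hw =>
    (hder w hw).differentiableAt.differentiableWithinAt
  have hsub : ball (0 : ℂ) 1 ⊆ ball (0 : ℂ) R := ball_subset_ball hR.lt.le
  have hlow : ∀ w ∈ ball (0 : ℂ) 1, d / 2 ≤ ‖1 - w * cj z‖ := fun w hw => by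
    have := sq_le_kn' hw hz
    linarith
  have h2 := hK' f f R hR hfd hfd ((2 * N + (2 + b)) * 2 ^ N * (d ^ N)⁻¹) (by positivity) (by
    intro w hw
    rw [(hder w (hsub hw)).deriv]
    have hk := kn_pos hw hz
    have hw1 := one_sub_sq_pos hw
    have hk1 := sq_le_kn hw hz
    have hw2 := one_sub_sq_le_one w
    have hw3 := (mem_ball_zero_iff.1 hw).le
    have hz3 := (mem_ball_zero_iff.1 hz).le
    have h3 : ‖w * (N * cj z * ((1 - w * cj z) ^ (N + 1))⁻¹) + (2 + b : ℝ) * f w‖ ≤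
        N * (‖1 - w * cj z‖ ^ (N + 1))⁻¹ + (2 + b) * (‖1 - w * cj z‖ ^ N)⁻¹ := by
      refine (norm_add_le _ _).trans ?_
      rw [norm_mul, norm_mul, norm_mul, norm_mul, norm_real, Real.norm_of_nonneg ht.le, norm_inv,
        norm_inv, norm_pow, norm_pow, RCLike.norm_conj, RCLike.norm_natCast]
      refine add_le_add ?_ le_rfl
      calc _ ≤ 1 * (N * 1 * (‖1 - w * cj z‖ ^ (N + 1))⁻¹) := by gcongr
        _ = _ := by ring
    calc _ ≤ (1 - ‖w‖ ^ 2) * (N * (‖1 - w * cj z‖ ^ (N + 1))⁻¹ + (2 + b) * (‖1 - w * cj z‖ ^ N)⁻¹) := by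
          gcongr
      _ = (1 - ‖w‖ ^ 2) * (N * (‖1 - w * cj z‖ ^ (N + 1))⁻¹) +
          (1 - ‖w‖ ^ 2) * ((2 + b) * (‖1 - w * cj z‖ ^ N)⁻¹) := by ring
      _ ≤ 2 * ‖1 - w * cj z‖ * (N * (‖1 - w * cj z‖ ^ (N + 1))⁻¹) +
          1 * ((2 + b) * (‖1 - w * cj z‖ ^ N)⁻¹) := by gcongr
      _ = (2 * N + (2 + b)) * (‖1 - w * cj z‖ ^ N)⁻¹ := by
          rw [pow_succ]
          field_simp
      _ ≤ (2 * N + (2 + b)) * ((d / 2) ^ N)⁻¹ := by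
          have := hlow w hw
          gcongr
      _ = _ := by
          rw [div_pow]
          field_simp)
  have h3 : ∫ u in ball (0 : ℂ) 1, ‖f u‖ ^ p * (1 - ‖u‖ ^ 2) ^ a ≤ C₁ * d ^ (-((N - s) * p)) := by
    refine le_trans (le_of_eq ?_) (h₁ z hz)
    refine setIntegral_congr_fun measurableSet_ball fun u hu => ?_
    have hk := kn_pos hu hz
    simp only [hf]
    rw [norm_inv, norm_pow, ← Real.rpow_natCast, ← Real.rpow_neg hk.le, ← Real.rpow_mul hk.le]
    congr 2
    linarith
  have h4 : (∫ u in ball (0 : ℂ) 1, ‖f u‖ ^ p * (1 - ‖u‖ ^ 2) ^ a) ^ (1 / p) ≤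
      C₁ ^ (1 / p) * (d ^ N)⁻¹ * d ^ s := by
    have hI : 0 ≤ ∫ u in ball (0 : ℂ) 1, ‖f u‖ ^ p * (1 - ‖u‖ ^ 2) ^ a := by
      refine setIntegral_nonneg measurableSet_ball fun z hz => ?_
      have := one_sub_sq_pos hz
      positivity
    refine (Real.rpow_le_rpow hI h3 (by positivity)).trans (le_of_eq ?_)
    rw [Real.mul_rpow hC₁ (by positivity), ← Real.rpow_mul hd.le, mul_assoc, ← Real.rpow_natCast,
      ← Real.rpow_neg hd.le, ← Real.rpow_add hd]
    congr 2
    field_simp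
    ring
  have h5 : ∫ w in ball (0 : ℂ) 1, f w * cj (f w) ∂μ =
      ((∫ w in ball (0 : ℂ) 1, (‖1 - w * cj z‖ ^ (2 * N))⁻¹ ∂μ : ℝ) : ℂ) := by
    rw [← integral_complex_ofReal]
    congr 1
    ext w
    rw [Complex.mul_conj', hf]
    simp only [norm_inv, norm_pow]
    push_cast
    rw [inv_pow, ← pow_mul, mul_comm N]
  have hcj := measurable_conj
  have h0 : ∀ w, 0 ≤ (‖1 - w * cj z‖ ^ (2 * N))⁻¹ := fun w => by positivity
  have h6 : ∫ w in ball (0 : ℂ) 1, (‖1 - w * cj z‖ ^ (2 * N))⁻¹ ∂μ ≤ A * ((d ^ (2 * N))⁻¹ * d ^ s) := by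
    rw [h5, norm_real, Real.norm_of_nonneg (integral_nonneg h0)] at h2
    refine h2.trans ?_
    calc _ ≤ K * ((2 * N + (2 + b)) * 2 ^ N * (d ^ N)⁻¹) * (C₁ ^ (1 / p) * (d ^ N)⁻¹ * d ^ s) := by
          gcongr
      _ = _ := by
          rw [hA, two_mul N, pow_add, mul_inv]
          ring
  have hint : IntegrableOn (fun w => (‖1 - w * cj z‖ ^ (2 * N))⁻¹) (ball (0 : ℂ) 1) μ := by
    refine Integrable.mono' (integrable_const ((d / 2) ^ (2 * N))⁻¹)
      (Measurable.aestronglyMeasurable (by fun_prop)) ?_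
    filter_upwards [ae_restrict_mem measurableSet_ball] with w hw
    rw [Real.norm_of_nonneg (h0 w)]
    have := hlow w hw
    gcongr
  have h7 : μ (pD z (1 / 2)) * ENNReal.ofReal ((2 * d) ^ (2 * N))⁻¹ ≤
      ENNReal.ofReal (A * ((d ^ (2 * N))⁻¹ * d ^ s)) := by
    calc _ = ∫⁻ w in pD z (1 / 2), ENNReal.ofReal ((2 * d) ^ (2 * N))⁻¹ ∂μ := by
          rw [setLIntegral_const, mul_comm]
      _ ≤ ∫⁻ w in pD z (1 / 2), ENNReal.ofReal (‖1 - w * cj z‖ ^ (2 * N))⁻¹ ∂μ := by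
          refine setLIntegral_mono' ((measurable_id.prodMk measurable_const)
            (measurableSet_pD (1 / 2))) fun w hw => ?_
          have hk := kn_pos hw.1 hz
          have := kn_le_of_mem_pD hz hw
          gcongr
      _ ≤ ∫⁻ w in ball (0 : ℂ) 1, ENNReal.ofReal (‖1 - w * cj z‖ ^ (2 * N))⁻¹ ∂μ :=
          lintegral_mono_set fun w hw => hw.1
      _ = ENNReal.ofReal (∫ w in ball (0 : ℂ) 1, (‖1 - w * cj z‖ ^ (2 * N))⁻¹ ∂μ) :=
          (ofReal_integral_eq_lintegral_ofReal hint (Eventually.of_forall h0)).symm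
      _ ≤ _ := ENNReal.ofReal_le_ofReal h6
  calc μ (pD z (1 / 2)) = μ (pD z (1 / 2)) * ENNReal.ofReal ((2 * d) ^ (2 * N))⁻¹ *
        ENNReal.ofReal ((2 * d) ^ (2 * N)) := by
        rw [mul_assoc, ← ENNReal.ofReal_mul (by positivity), inv_mul_cancel₀ (by positivity),
          ENNReal.ofReal_one, mul_one]
    _ ≤ ENNReal.ofReal (A * ((d ^ (2 * N))⁻¹ * d ^ s)) * ENNReal.ofReal ((2 * d) ^ (2 * N)) := by
        gcongr
    _ = _ := by
        rw [← ENNReal.ofReal_mul (by positivity), mul_pow]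
        congr 1
        field_simp

/-! ### Necessity of the logarithmic condition -/

lemma norm_log_sub_le (k : ℂ) (c : ℝ) :
    ‖(c : ℂ) - Complex.log k‖ ≤ |c - Real.log ‖k‖| + 4 := by
  refine (norm_le_abs_re_add_abs_im _).trans ?_
  rw [sub_re, ofReal_re, log_re, sub_im, ofReal_im, log_im, zero_sub, abs_neg]
  have h1 := abs_arg_le_pi k
  have h2 := Real.pi_le_four
  linarith

/-- For `k = 1 - w z̄` and `d = 1 - |z|²`: the function `log (2 / (1 - w̄ z))`, antiholomorphic in `w`,
differs from the constant `log (2 / d)` by at most a small power of `‖k‖ / d`. -/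
lemma log_kernel_close {k : ℂ} {d : ℝ} (hd : 0 < d) (h : d ≤ 2 * ‖k‖) :
    ‖((Real.log (2 / d) : ℝ) : ℂ) - cj ((Real.log 2 : ℝ) - Complex.log k)‖ ≤
      8 * (‖k‖ / d) ^ (1 / 2 : ℝ) := by
  have hk : 0 < ‖k‖ := by linarith
  set x := ‖k‖ / d with hx
  have hx2 : 1 / 2 ≤ x := by
    rw [hx, le_div_iff₀ hd]
    linarith
  have hx0 : 0 < x := by linarith
  have hs : 0.7 ≤ x ^ (1 / 2 : ℝ) := by
    rw [← Real.sqrt_eq_rpow]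
    exact Real.le_sqrt_of_sq_le (by norm_num; linarith)
  have h1 : ((Real.log (2 / d) : ℝ) : ℂ) - cj ((Real.log 2 : ℝ) - Complex.log k) =
      - cj (((Real.log d : ℝ) : ℂ) - Complex.log k) := by
    rw [Real.log_div two_ne_zero hd.ne', map_sub, map_sub, conj_ofReal, conj_ofReal]
    push_cast
    ring
  rw [h1, norm_neg, RCLike.norm_conj]
  refine (norm_log_sub_le k _).trans ?_
  have h2 : |Real.log d - Real.log ‖k‖| ≤ 2 * x ^ (1 / 2 : ℝ) := by
    rw [abs_sub_comm, ← Real.log_div hk.ne' hd.ne', ← hx, abs_le]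
    constructor
    · have h3 := Real.log_le_log (by norm_num) hx2
      have h4 := Real.log_two_lt_d9
      rw [one_div, Real.log_inv] at h3
      linarith
    · have h3 := Real.log_le_rpow_div hx0.le (ε := 1 / 2) (by norm_num)
      linarith
  linarith

lemma sq_mul_log_kernel_le {x : ℝ} {k : ℂ} (hx : 0 < x) (hx1 : x ≤ 1) (hk : x ≤ 2 * ‖k‖)
    (hk2 : ‖k‖ ≤ 2) : x * ‖((Real.log 2 : ℝ) : ℂ) - Complex.log k‖ ≤ 9 := by
  have hk0 : 0 < ‖k‖ := by linarith
  have h1 := norm_log_sub_le k (Real.log 2)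
  have h2 : Real.log ‖k‖ ≤ Real.log 2 := Real.log_le_log hk0 hk2
  rw [abs_of_nonneg (by linarith)] at h1
  have h3 := Real.log_le_log hx hk
  rw [Real.log_mul two_ne_zero hk0.ne'] at h3
  have h4 := Real.log_two_lt_d9
  have h5 : x * Real.log (2 / x) ≤ 4 := by
    have h0 : 0 ≤ Real.log (2 / x) := Real.log_nonneg (by
      rw [le_div_iff₀ hx]
      linarith)
    refine le_trans ?_ (sqrt_mul_log_le hx)
    gcongr
    exact Real.self_le_rpow_of_le_one hx.le hx1 (by norm_num)
  rw [Real.log_div two_ne_zero hx.ne'] at h5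
  calc _ ≤ x * ((Real.log 2 - Real.log x) + 5) := by
        gcongr
        linarith
    _ ≤ 9 := by
        rw [mul_add]
        linarith

/-- Testing `dual_analytic` on `f w = d w (1 - z̄ w)^{-(s+1)}` and `g w = log (2 / (1 - z̄ w))`, where
`d = 1 - ‖z‖²`. -/
lemma necessity_log {p a b : ℝ} (hp0 : 0 < p) (ha : -1 < a) (hb : -1 < b) {μ : Measure ℂ}
    [IsFiniteMeasure μ] {C : ℝ≥0} (h : ∀ P : Polynomial ℂ,
        wnorm 1 b (Toep μ b fun z => P.eval z) ≤ C * wnorm p a fun z => P.eval z)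
    {s : ℝ} (hs : 1 < s) (hsp : s * p = a + 2) :
    ∃ M : ℝ, ∀ z ∈ ball (0 : ℂ) 1, (1 - ‖z‖ ^ 2) * Real.log (2 / (1 - ‖z‖ ^ 2)) *
      ‖deriv (Toep μ (s - 2) fun _ => 1) z‖ ≤ M := by
  have hμ := necessity_carleson hp0 ha hb h hs hsp
  obtain ⟨K, hK, hK'⟩ := dual_analytic hp0 ha hb h
  obtain ⟨C₁, hC₁, h₁⟩ := FR_real a p ha hp0
  obtain ⟨C₂, hC₂, h₂⟩ := carl_int hμ 0 (1 / 2) le_rfl (by linarith) (by norm_num)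
  have ht : 0 < 2 + b := by linarith
  have hcj := measurable_conj
  refine ⟨s * (K * (2 + 9 * (2 + b)) * C₁ ^ (1 / p) + 8 * C₂), fun z hz => ?_⟩
  have hd := one_sub_sq_pos hz
  have hL := log_pos_of_mem hz
  set d := 1 - ‖z‖ ^ 2 with hd'
  set ℓ := Real.log (2 / d) with hℓ
  obtain ⟨R, hR, hre⟩ := exists_larger_disk hz
  have hsl : ∀ w ∈ ball (0 : ℂ) R, 1 - w * cj z ∈ slitPlane := fun w hw => Or.inl (hre w hw)
  have hsub : ball (0 : ℂ) 1 ⊆ ball (0 : ℂ) R := ball_subset_ball hR.lt.le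
  set f : ℂ → ℂ := fun w => d * (w * bker (s + 1) w z) with hf
  set g : ℂ → ℂ := fun w => (Real.log 2 : ℝ) - Complex.log (1 - w * cj z) with hg
  have hlin : ∀ w, HasDerivAt (fun w : ℂ => 1 - w * cj z) (-(cj z)) w := fun w => by
    simpa using ((hasDerivAt_id w).mul_const (cj z)).const_sub 1
  have hfd : DifferentiableOn ℂ f (ball 0 R) := fun w hw => by
    refine DifferentiableAt.differentiableWithinAt ?_
    refine (differentiableAt_id.mul ?_).const_mul _
    exact (hlin w).differentiableAt.cpow (differentiableAt_const _) (hsl w hw)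
  have hgd : ∀ w ∈ ball (0 : ℂ) R, HasDerivAt g (cj z / (1 - w * cj z)) w := fun w hw => by
    refine (((hlin w).clog (hsl w hw)).const_sub _).congr_deriv ?_
    rw [neg_div, neg_neg]
  have hfn : ∀ w ∈ ball (0 : ℂ) 1, ‖f w‖ ≤ d * ‖1 - w * cj z‖ ^ (-(s + 1)) := fun w hw => by
    simp only [hf]
    rw [norm_mul, norm_real, Real.norm_of_nonneg hd.le, norm_mul, norm_bker hw hz]
    have := (mem_ball_zero_iff.1 hw).le
    have hk := kn_pos hw hz
    gcongr
    exact mul_le_of_le_one_left (by positivity) this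
  have h3 := hK' f g R hR hfd (fun w hw => (hgd w hw).differentiableAt.differentiableWithinAt)
    (2 + 9 * (2 + b)) (by positivity) (by
    intro w hw
    rw [(hgd w (hsub hw)).deriv]
    have hk := kn_pos hw hz
    have hw1 := one_sub_sq_pos hw
    have hk1 := sq_le_kn hw hz
    have hw3 := (mem_ball_zero_iff.1 hw).le
    have hz3 := (mem_ball_zero_iff.1 hz).le
    have h4 := sq_mul_log_kernel_le hw1 (one_sub_sq_le_one w) hk1 (kn_le_two hw hz)
    have h5 : ‖w * (cj z / (1 - w * cj z)) + (2 + b : ℝ) * g w‖ ≤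
        1 / ‖1 - w * cj z‖ + (2 + b) * ‖g w‖ := by
      refine (norm_add_le _ _).trans ?_
      rw [norm_mul, norm_mul, norm_div, norm_real, Real.norm_of_nonneg ht.le, RCLike.norm_conj]
      refine add_le_add ?_ le_rfl
      calc _ ≤ 1 * (1 / ‖1 - w * cj z‖) := by gcongr
        _ = _ := one_mul _
    calc _ ≤ (1 - ‖w‖ ^ 2) * (1 / ‖1 - w * cj z‖ + (2 + b) * ‖g w‖) := by gcongr
      _ = (1 - ‖w‖ ^ 2) / ‖1 - w * cj z‖ + (2 + b) * ((1 - ‖w‖ ^ 2) * ‖g w‖) := by ring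
      _ ≤ 2 + (2 + b) * 9 := by
          gcongr
          rw [div_le_iff₀ hk]
          exact hk1
      _ = _ := by ring)
  have h4 : ∫ u in ball (0 : ℂ) 1, ‖f u‖ ^ p * (1 - ‖u‖ ^ 2) ^ a ≤ C₁ := by
    have hI : IntegrableOn (fun u : ℂ => d ^ p * (‖1 - u * cj z‖ ^ (-(2 + a + p)) *
        (1 - ‖u‖ ^ 2) ^ a)) (ball (0 : ℂ) 1) := by
      refine Integrable.const_mul ?_ _
      refine Integrable.mono' ((weight_integrable a ha).const_mul ((1 - ‖z‖) ^ (-(2 + a + p))))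
        (Measurable.aestronglyMeasurable (by fun_prop)) ?_
      filter_upwards [ae_restrict_mem measurableSet_ball] with u hu
      have hu1 := one_sub_sq_pos hu
      rw [Real.norm_of_nonneg (by positivity)]
      have := kn_rpow_le_fixed hz hu (t := 2 + a + p) (by linarith)
      rw [kn_symm] at this
      gcongr
    calc _ ≤ ∫ u in ball (0 : ℂ) 1, d ^ p * (‖1 - u * cj z‖ ^ (-(2 + a + p)) *
          (1 - ‖u‖ ^ 2) ^ a) := by
          refine integral_mono_of_nonneg ?_ hI ?_
          · filter_upwards [ae_restrict_mem measurableSet_ball] with u hu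
            have hu1 := one_sub_sq_pos hu
            simp only [Pi.zero_apply]
            positivity
          · filter_upwards [ae_restrict_mem measurableSet_ball] with u hu
            have hu1 := one_sub_sq_pos hu
            have hk := kn_pos hu hz
            rw [← mul_assoc]
            gcongr
            refine (Real.rpow_le_rpow (norm_nonneg _) (hfn u hu) hp0.le).trans (le_of_eq ?_)
            rw [Real.mul_rpow hd.le (by positivity), ← Real.rpow_mul hk.le]
            congr 2
            linarith
      _ ≤ d ^ p * (C₁ * d ^ (-p)) := by
          rw [integral_const_mul]
          have := h₁ z hz
          gcongr
      _ = C₁ := by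
          rw [mul_left_comm, ← Real.rpow_add hd, add_neg_cancel, Real.rpow_zero, mul_one]
  have h5 : (∫ u in ball (0 : ℂ) 1, ‖f u‖ ^ p * (1 - ‖u‖ ^ 2) ^ a) ^ (1 / p) ≤ C₁ ^ (1 / p) := by
    have hI : 0 ≤ ∫ u in ball (0 : ℂ) 1, ‖f u‖ ^ p * (1 - ‖u‖ ^ 2) ^ a := by
      refine setIntegral_nonneg measurableSet_ball fun z hz => ?_
      have := one_sub_sq_pos hz
      positivity
    exact Real.rpow_le_rpow hI h4 (by positivity)
  have hfm : Measurable f := (measurable_id.mul (measurable_bker_left _ _)).const_mul _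
  have hgm : Measurable g := by fun_prop
  have hfb : ∀ w ∈ ball (0 : ℂ) 1, ‖f w‖ ≤ d * (1 - ‖z‖) ^ (-(s + 1)) := fun w hw => by
    refine (hfn w hw).trans ?_
    have := kn_rpow_le_fixed hz hw (t := s + 1) (by linarith)
    rw [kn_symm] at this
    gcongr
  -- the error made by replacing the constant `ℓ` by `g`
  have hclose : ∀ w ∈ ball (0 : ℂ) 1, ‖(ℓ : ℂ) - cj (g w)‖ ≤ 8 * (‖1 - w * cj z‖ / d) ^ (1 / 2 : ℝ) :=
    fun w hw => log_kernel_close hd (sq_le_kn' hw hz)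
  have hdiff : ∀ w ∈ ball (0 : ℂ) 1, ‖f w * ((ℓ : ℂ) - cj (g w))‖ ≤
      8 * d ^ (1 / 2 : ℝ) * ((1 - ‖w‖ ^ 2) ^ (-0 : ℝ) * ‖1 - z * cj w‖ ^ (-(s - 0 + 1 / 2))) := by
    intro w hw
    have hk := kn_pos hw hz
    rw [norm_mul, kn_symm z w]
    calc _ ≤ (d * ‖1 - w * cj z‖ ^ (-(s + 1))) * (8 * (‖1 - w * cj z‖ / d) ^ (1 / 2 : ℝ)) := by
          have h6 := hfn w hw
          have h7 := hclose w hw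
          gcongr
      _ = 8 * (d / d ^ (1 / 2 : ℝ)) *
          (‖1 - w * cj z‖ ^ (-(s + 1)) * ‖1 - w * cj z‖ ^ (1 / 2 : ℝ)) := by
          rw [Real.div_rpow hk.le hd.le]
          ring
      _ = _ := by
          rw [← Real.rpow_add hk]
          nth_rewrite 1 [← Real.rpow_one d]
          rw [← Real.rpow_sub hd, neg_zero, Real.rpow_zero, one_mul]
          congr 2 <;> ring_nf
  have h6 : ‖∫ w in ball (0 : ℂ) 1, f w * ((ℓ : ℂ) - cj (g w)) ∂μ‖ ≤ 8 * C₂ := by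
    refine norm_integral_le_of_lintegral (by positivity) hdiff ?_
    have h8 : ∀ w : ℂ, ENNReal.ofReal (8 * d ^ (1 / 2 : ℝ) *
        ((1 - ‖w‖ ^ 2) ^ (-0 : ℝ) * ‖1 - z * cj w‖ ^ (-(s - 0 + 1 / 2)))) =
        ENNReal.ofReal (8 * d ^ (1 / 2 : ℝ)) * ENNReal.ofReal
          ((1 - ‖w‖ ^ 2) ^ (-0 : ℝ) * ‖1 - z * cj w‖ ^ (-(s - 0 + 1 / 2))) := fun w =>
      ENNReal.ofReal_mul (by positivity)
    simp only [h8]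
    rw [lintegral_const_mul _ (by fun_prop)]
    calc _ ≤ ENNReal.ofReal (8 * d ^ (1 / 2 : ℝ)) * ENNReal.ofReal (C₂ * d ^ (-(1 / 2 : ℝ))) := by
          gcongr
          exact h₂ z hz
      _ = _ := by
          rw [← ENNReal.ofReal_mul (by positivity)]
          congr 1
          rw [show 8 * d ^ (1 / 2 : ℝ) * (C₂ * d ^ (-(1 / 2 : ℝ))) =
            8 * C₂ * (d ^ (1 / 2 : ℝ) * d ^ (-(1 / 2 : ℝ))) by ring, ← Real.rpow_add hd,
            add_neg_cancel, Real.rpow_zero, mul_one]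
  have hfi : IntegrableOn f (ball (0 : ℂ) 1) μ := integrableOn_bdd hfm _ hfb
  have hdi : IntegrableOn (fun w => f w * ((ℓ : ℂ) - cj (g w))) (ball (0 : ℂ) 1) μ := by
    refine integrableOn_bdd (by fun_prop)
      (d * (1 - ‖z‖) ^ (-(s + 1)) * (8 * (2 / d) ^ (1 / 2 : ℝ))) fun w hw => ?_
    rw [norm_mul]
    have h7 := hfb w hw
    have h8 : ‖(ℓ : ℂ) - cj (g w)‖ ≤ 8 * (2 / d) ^ (1 / 2 : ℝ) := by
      refine (hclose w hw).trans ?_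
      have := kn_le_two hw hz
      gcongr
    exact mul_le_mul h7 h8 (norm_nonneg _) ((norm_nonneg _).trans h7)
  have h7 : (ℓ : ℂ) * ∫ w in ball (0 : ℂ) 1, f w ∂μ =
      (∫ w in ball (0 : ℂ) 1, f w * ((ℓ : ℂ) - cj (g w)) ∂μ) +
        ∫ w in ball (0 : ℂ) 1, f w * cj (g w) ∂μ := by
    have e : ∀ w, f w * cj (g w) = ℓ * f w - f w * ((ℓ : ℂ) - cj (g w)) := fun w => by ring
    simp_rw [e]
    rw [integral_sub (hfi.const_mul _) hdi, integral_const_mul (ℓ : ℂ) f]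
    ring
  have h8 : ∫ w in ball (0 : ℂ) 1, f w ∂μ =
      d * cj (∫ w in ball (0 : ℂ) 1, cj w * bker (s + 1) z w ∂μ) := by
    rw [← integral_conj, ← integral_const_mul]
    refine setIntegral_congr_fun measurableSet_ball fun w hw => ?_
    simp only [hf]
    rw [map_mul, conj_conj, conj_bker hz hw]
  have h9 : ℓ * (d * ‖∫ w in ball (0 : ℂ) 1, cj w * bker (s + 1) z w ∂μ‖) ≤
      K * (2 + 9 * (2 + b)) * C₁ ^ (1 / p) + 8 * C₂ := by
    have e : ℓ * (d * ‖∫ w in ball (0 : ℂ) 1, cj w * bker (s + 1) z w ∂μ‖) =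
        ‖(ℓ : ℂ) * ∫ w in ball (0 : ℂ) 1, f w ∂μ‖ := by
      rw [h8, norm_mul, norm_mul, norm_real, norm_real, RCLike.norm_conj,
        Real.norm_of_nonneg hL.le, Real.norm_of_nonneg hd.le]
    rw [e, h7, add_comm]
    refine (norm_add_le _ _).trans (add_le_add ?_ h6)
    exact h3.trans (by gcongr)
  rw [(hasDerivAt_Toep μ (by linarith) hz).deriv, norm_mul, norm_real,
    Real.norm_of_nonneg (by linarith)]
  calc _ = s * (ℓ * (d * ‖∫ w in ball (0 : ℂ) 1, cj w * bker (s + 1) z w ∂μ‖)) := by ring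
    _ ≤ _ := by gcongr

theorem stmt5 (p a b : ℝ) (hp0 : 0 < p) (hp1 : p ≤ 1) (ha : -1 < a) (hb : -1 < b)
    (μ : Measure ℂ) [IsFiniteMeasure μ] :
    (∃ C : ℝ≥0, ∀ P : Polynomial ℂ,
        wnorm 1 b (Toep μ b fun z => P.eval z) ≤ C * wnorm p a fun z => P.eval z) ↔
      ((∃ r ∈ Set.Ioo (0 : ℝ) 1, ∃ C : ℝ, ∀ z ∈ ball (0 : ℂ) 1,
          μ (pD z r) ≤ ENNReal.ofReal (C * (1 - ‖z‖ ^ 2) ^ ((a + 2) / p))) ∧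
        ∃ M : ℝ, ∀ z ∈ ball (0 : ℂ) 1,
          (1 - ‖z‖ ^ 2) * Real.log (2 / (1 - ‖z‖ ^ 2)) *
            ‖deriv (Toep μ ((2 + a) / p - 2) fun _ => 1) z‖ ≤ M) := by
  rw [add_comm 2 a]
  have hsp : (a + 2) / p * p = a + 2 := div_mul_cancel₀ _ hp0.ne'
  have hs : 1 < (a + 2) / p := by
    rw [lt_div_iff₀ hp0]
    linarith
  constructor
  · rintro ⟨C, h⟩
    exact ⟨necessity_carleson hp0 ha hb h hs hsp, necessity_log hp0 ha hb h hs hsp⟩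
  · rintro ⟨hμ, M, hM⟩
    exact sufficiency p a b hp0 hp1 ha hb hs hsp hμ hM
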